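/- Under Conditions (A)–(D) with b_j ≠ 0 for all j ≥ 1, let u₀ be any H-valued random variable, independent of {η_k}, whose law is supported by 𝒜, and let ζ_k = k⁻¹ Σ_{n=0}^{k−1} δ_{u_n} be the occupation measures of the trajectory u_k = S(u_{k−1}) + η_k. Then the family {ζ_k, k ≥ 1} of random probability measures on 𝒜 satisfies the large deviation principle with the good rate function I(σ) = sup_{V ∈ C(𝒜)} (⟨V,σ⟩ − Q(V)), σ ∈ 𝒫(𝒜), where Q(V) := lim_{k→∞} k⁻¹ log 𝔼 exp(Σ_{n=1}^k V(u_n)) exists, does not depend on u₀, and is a 1-Lipschitz convex function on C(𝒜) satisfying Q(C) = C for every constant C ∈ ℝ. -/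

import Mathlib

open MeasureTheory ProbabilityTheory Filter Topology BoundedContinuousFunction
open scoped ENNReal NNReal Pointwise

noncomputable section

/-- The sets `𝒜_k(B)`: `𝒜_0(B) = B`, `𝒜_k(B) = S(𝒜_{k-1}(B)) + 𝒦`. -/
def attain {H : Type*} [AddCommGroup H] (S : H → H) (K : Set H) (B : Set H) : ℕ → Set H
  | 0 => B
  | n + 1 => S '' attain S K B n + K

/-- The domain of attainability `𝒜(B)` from `B`: the closure of `⋃_k 𝒜_k(B)`. -/
def attainDom {H : Type*} [AddCommGroup H] [TopologicalSpace H]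
    (S : H → H) (K : Set H) (B : Set H) : Set H :=
  closure (⋃ n, attain S K B n)

variable {H : Type} [NormedAddCommGroup H] [InnerProductSpace ℝ H] [CompleteSpace H]

/-- The orthogonal projection `𝖯_N` onto the span of the first `N` vectors of an orthonormal
basis. -/
def projB (e : HilbertBasis ℕ ℝ H) (N : ℕ) (u : H) : H :=
  ∑ j ∈ Finset.range N, e.repr u j • (e j : H)

/-- Condition (A): regularity and stability. -/
def CondA (S : H → H) : Prop :=
  ContDiff ℝ 1 S ∧
  ∀ R r : ℝ, 0 < r → r < R →
    ∃ C : ℝ, 0 < C ∧ ∃ a : ℝ, 0 < a ∧ a < 1 ∧ ∃ n₀ : ℕ, 1 ≤ n₀ ∧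
      (∀ u₁ ∈ Metric.closedBall (0 : H) R, ∀ u₂ ∈ Metric.closedBall (0 : H) R,
          ‖S u₁ - S u₂‖ ≤ C * ‖u₁ - u₂‖) ∧
      ∀ u ∈ Metric.closedBall (0 : H) R, ∀ n : ℕ, n₀ ≤ n →
          ‖S^[n] u‖ ≤ max (a * ‖u‖) r

/-- Condition (B): dissipativity. -/
def CondB (S : H → H) (K : Set H) : Prop :=
  ∃ ρ : ℝ, 0 < ρ ∧ ∃ k₀ : ℝ → ℕ, Monotone k₀ ∧
    ∀ R : ℝ, 0 ≤ R → ∀ k : ℕ, k₀ R ≤ k →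
      attain S K (Metric.closedBall 0 R) k ⊆ Metric.closedBall (0 : H) ρ

/-- Condition (C): squeezing. -/
def CondC (S : H → H) (e : HilbertBasis ℕ ℝ H) : Prop :=
  ∀ R : ℝ, 0 < R → ∃ γ : ℕ → ℝ, (∀ N, 0 < γ N) ∧ Antitone γ ∧
    Tendsto γ atTop (𝓝 0) ∧
    ∀ N : ℕ, ∀ u₁ ∈ Metric.closedBall (0 : H) R, ∀ u₂ ∈ Metric.closedBall (0 : H) R,
      ‖(S u₁ - S u₂) - projB e N (S u₁ - S u₂)‖ ≤ γ N * ‖u₁ - u₂‖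

/-- Condition (D): structure of the noise, `η_k = ∑_j b_j ξ_{jk} e_j` with `∑ b_j² < ∞`,
independent scalar `ξ_{jk}` whose laws have Lipschitz densities `p_j` with `p_j(0) > 0` and
support in `[-1,1]`. -/
def CondD [MeasurableSpace H] {Ω : Type*} [MeasurableSpace Ω] (P : Measure Ω)
    (e : HilbertBasis ℕ ℝ H) (η : ℕ → Ω → H)
    (b : ℕ → ℝ) (ξ : ℕ → ℕ → Ω → ℝ) (p : ℕ → ℝ → ℝ) : Prop :=
  (∀ j, 0 ≤ b j) ∧ Summable (fun j => (b j) ^ 2) ∧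
  (∀ k ω, HasSum (fun j => (b j * ξ j k ω) • (e j : H)) (η k ω)) ∧
  (∀ j k, Measurable (ξ j k)) ∧
  iIndepFun (fun jk : ℕ × ℕ => ξ jk.1 jk.2) P ∧
  (∀ j k, Measure.map (ξ j k) P
      = (volume : Measure ℝ).withDensity fun x => ENNReal.ofReal (p j x)) ∧
  (∀ j, ∃ L : ℝ≥0, LipschitzWith L (p j)) ∧
  (∀ j, 0 < p j 0) ∧
  (∀ j, Function.support (p j) ⊆ Set.Icc (-1 : ℝ) 1)

/-- The trajectory `u_k = S(u_{k-1}) + η_k` of the random dynamical system issued from `u₀`. -/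
def traj {Ω : Type*} (S : H → H) (η : ℕ → Ω → H) (u₀ : Ω → H) : ℕ → Ω → H
  | 0 => u₀
  | k + 1 => fun ω => S (traj S η u₀ k ω) + η (k + 1) ω

/-- The (topological) support of a measure. -/
def msupp {X : Type*} [TopologicalSpace X] [MeasurableSpace X] (μ : Measure X) : Set X :=
  {x | ∀ U ∈ 𝓝 x, 0 < μ U}

/-- The occupation measures `ζ_k = k⁻¹ ∑_{n=0}^{k-1} δ_{x_n}` of a sequence. -/
def occ {X : Type*} [MeasurableSpace X] (x : ℕ → X) (k : ℕ) : ProbabilityMeasure X :=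
  if hk : k = 0 then ⟨Measure.dirac (x 0), Measure.dirac.isProbabilityMeasure⟩
  else
    ⟨(k : ℝ≥0∞)⁻¹ • ∑ n ∈ Finset.range k, Measure.dirac (x n), by
      refine ⟨?_⟩
      simp only [Measure.smul_apply, Measure.finset_sum_apply, measure_univ,
        Finset.sum_const, Finset.card_range, nsmul_eq_mul, mul_one, smul_eq_mul]
      exact ENNReal.inv_mul_cancel (Nat.cast_ne_zero.mpr hk) (ENNReal.natCast_ne_top k)⟩

/-- Large deviation principle for the sequence of events `prob k` (the laws of random
probability measures in `Z`), with rate function `I`. -/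
def LDPof {Z : Type*} [TopologicalSpace Z] (prob : ℕ → Set Z → ℝ≥0∞) (I : Z → ℝ≥0∞) : Prop :=
  (∀ F : Set Z, IsClosed F →
    Filter.limsup (fun k : ℕ => (((k : ℝ)⁻¹ : ℝ) : EReal) * ENNReal.log (prob k F)) atTop
      ≤ -(⨅ σ ∈ F, (I σ : EReal))) ∧
  (∀ G : Set Z, IsOpen G →
    -(⨅ σ ∈ G, (I σ : EReal))
      ≤ Filter.liminf (fun k : ℕ => (((k : ℝ)⁻¹ : ℝ) : EReal) * ENNReal.log (prob k G)) atTop)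

/-- A good rate function: lower semicontinuous with compact level sets. -/
def GoodRate {Z : Type*} [TopologicalSpace Z] (I : Z → ℝ≥0∞) : Prop :=
  LowerSemicontinuous I ∧ ∀ c : ℝ≥0∞, c ≠ ⊤ → IsCompact {σ : Z | I σ ≤ c}

/-!
For a concave Lipschitz function `F` on a finite-dimensional space `E` and a bounded observable
`V : H → E` with sums `S_k = V(u_1) + ⋯ + V(u_k)`, the limit
`Λ(F) = lim k⁻¹ log 𝔼_u exp (k F(S_k / k))` exists uniformly in `u ∈ 𝒜`: concavity makes the
sequence superadditive under concatenation of orbits, up to the dependence on the starting point,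
and that dependence is controlled by a Harnack inequality with constant `e^{εk}`. The Harnack
inequality comes from a coupling: shifting the noise in finitely many modes costs `O(‖u - v‖)` in
total variation, squeezing contracts the remaining modes, and irreducibility brings any two
starting points close together with positive probability.

Linear `F` give the pressure `Q`, and Chebyshev's inequality with compactness gives the upper bound.
The penalties `F = -t ‖· - x‖` measure the local rates of `S_k / k`; their hypograph is
midpoint-convex, so a Hahn–Banach separation identifies it with the Legendre transform of `Q`. This
yields the lower bound without differentiability of `Q`.
-/

section ExponentialScale

/-- The exponential `ℝ → ℝ≥0∞`, in which all exponential growth estimates are written. -/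
def ennexp (x : ℝ) : ℝ≥0∞ := ENNReal.ofReal (Real.exp x)

lemma ennexp_add (x y : ℝ) : ennexp (x + y) = ennexp x * ennexp y := by
  rw [ennexp, Real.exp_add, ENNReal.ofReal_mul (Real.exp_nonneg _), ennexp, ennexp]

@[simp] lemma ennexp_zero : ennexp 0 = 1 := by simp [ennexp]

lemma ennexp_ne_top (x : ℝ) : ennexp x ≠ ⊤ := ENNReal.ofReal_ne_top

lemma ennexp_pos (x : ℝ) : 0 < ennexp x := ENNReal.ofReal_pos.2 (Real.exp_pos x)

lemma ennexp_le_ennexp {x y : ℝ} : ennexp x ≤ ennexp y ↔ x ≤ y := by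
  rw [ennexp, ennexp, ENNReal.ofReal_le_ofReal_iff (Real.exp_nonneg _), Real.exp_le_exp]

@[gcongr] lemma ennexp_mono {x y : ℝ} (h : x ≤ y) : ennexp x ≤ ennexp y := ennexp_le_ennexp.2 h

lemma one_le_ennexp {x : ℝ} (h : 0 ≤ x) : 1 ≤ ennexp x := ennexp_zero ▸ ennexp_mono h

@[fun_prop] lemma measurable_ennexp : Measurable ennexp :=
  ENNReal.measurable_ofReal.comp Real.measurable_exp

lemma ennexp_mul_le_iff {x : ℝ} {a b : ℝ≥0∞} : ennexp x * a ≤ b ↔ a ≤ ennexp (-x) * b := by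
  have inv_mul : ennexp (-x) * ennexp x = 1 := by rw [← ennexp_add, neg_add_cancel, ennexp_zero]
  constructor <;> intro h
  · calc a = ennexp (-x) * (ennexp x * a) := by rw [← mul_assoc, inv_mul, one_mul]
      _ ≤ ennexp (-x) * b := by gcongr
  · calc ennexp x * a ≤ ennexp x * (ennexp (-x) * b) := by gcongr
      _ = b := by rw [← mul_assoc, mul_comm (ennexp x), inv_mul, one_mul]

lemma ennexp_log_toReal {a : ℝ≥0∞} (h₀ : a ≠ 0) (h₁ : a ≠ ⊤) :
    ennexp (Real.log a.toReal) = a := by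
  rw [ennexp, Real.exp_log (ENNReal.toReal_pos h₀ h₁), ENNReal.ofReal_toReal h₁]

/-- `G` is log-Lipschitz with constant `L`, in multiplicative form so that zeros are allowed. -/
def LogLipschitz {E : Type*} [NormedAddCommGroup E] (L : ℝ≥0) (G : E → ℝ≥0∞) : Prop :=
  ∀ s s', G s ≤ ennexp (L * ‖s - s'‖) * G s'

lemma LogLipschitz.apply_add_le {E : Type*} [NormedAddCommGroup E] {L : ℝ≥0} {G : E → ℝ≥0∞}
    (hG : LogLipschitz L G) {v : E} {R : ℝ} (hv : ‖v‖ ≤ R) (s : E) :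
    G (s + v) ≤ ennexp (L * R) * G s :=
  (hG _ s).trans (by rw [add_sub_cancel_left]; gcongr)

lemma LogLipschitz.le_apply_add {E : Type*} [NormedAddCommGroup E] {L : ℝ≥0} {G : E → ℝ≥0∞}
    (hG : LogLipschitz L G) {v : E} {R : ℝ} (hv : ‖v‖ ≤ R) (s : E) :
    G s ≤ ennexp (L * R) * G (s + v) :=
  (hG s (s + v)).trans (by rw [sub_add_cancel_left, norm_neg]; gcongr)

end ExponentialScale

section SkewOperator

variable {X : Type*} [MeasurableSpace X] {E : Type*}

/-- The transfer operator of the pair `(u_k, s + V(u_1) + ⋯ + V(u_k))`, where `u` is a Markov chain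
with transition kernel `κ`: its `k`-th iterate at `u`, `s` is the expectation of
`g (u_k) (s + V(u_1) + ⋯ + V(u_k))` for the chain issued from `u`. -/
def skewOp [Add E] (κ : Kernel X X) (V : X → E) (g : X → E → ℝ≥0∞) (u : X) (s : E) : ℝ≥0∞ :=
  ∫⁻ x, g x (s + V x) ∂κ u

variable {κ : Kernel X X} {V : X → E}

lemma skewOp_iterate_translate [AddCommSemigroup E] (k : ℕ) (g : X → E → ℝ≥0∞) (s₀ : E) (u : X)
    (s : E) :
    (skewOp κ V)^[k] (fun x s => g x (s + s₀)) u s = (skewOp κ V)^[k] g u (s + s₀) := by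
  induction k generalizing u s with
  | zero => rfl
  | succ k ih => simp only [Function.iterate_succ_apply', skewOp, ih, add_right_comm]

section Measurability

variable [Add E] [MeasurableSpace E] [MeasurableAdd₂ E] [IsSFiniteKernel κ]

lemma measurable_skewOp (hV : Measurable V) {g : X → E → ℝ≥0∞}
    (hg : Measurable (Function.uncurry g)) :
    Measurable (Function.uncurry (skewOp κ V g)) := by
  have : Measurable fun q : (X × E) × X => g q.2 (q.1.2 + V q.2) :=
    hg.comp (measurable_snd.prodMk (by fun_prop))
  exact this.lintegral_kernel_prod_right' (κ := κ.comap Prod.fst measurable_fst)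

lemma measurable_skewOp_iterate (hV : Measurable V) {g : X → E → ℝ≥0∞}
    (hg : Measurable (Function.uncurry g)) (k : ℕ) :
    Measurable (Function.uncurry ((skewOp κ V)^[k] g)) := by
  induction k with
  | zero => exact hg
  | succ k ih => rw [Function.iterate_succ_apply']; exact measurable_skewOp hV ih

end Measurability

lemma logLipschitz_skewOp_iterate [NormedAddCommGroup E] {L : ℝ≥0} {g : X → E → ℝ≥0∞}
    (hg : ∀ u, LogLipschitz L (g u)) (k : ℕ) (u : X) :
    LogLipschitz L ((skewOp κ V)^[k] g u) := by
  induction k generalizing u with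
  | zero => exact hg u
  | succ k ih =>
    intro s s'
    simp only [Function.iterate_succ_apply', skewOp]
    rw [← lintegral_const_mul' _ _ (ennexp_ne_top _)]
    refine lintegral_mono fun x => ?_
    simpa only [add_sub_add_right_eq_sub] using ih x (s + V x) (s' + V x)

end SkewOperator

section Harnack

variable {X : Type*} [MeasurableSpace X] {E : Type*} [NormedAddCommGroup E]

/-- `A` is absorbing for `κ`: the chain issued from a point of `A` stays in `A`. -/
def IsAbsorbing (κ : Kernel X X) (A : Set X) : Prop := ∀ u ∈ A, ∀ᵐ x ∂κ u, x ∈ A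

variable {κ : Kernel X X} {A : Set X}

lemma IsAbsorbing.skewOp_iterate_mono {V : X → E} (hA : IsAbsorbing κ A) {c : ℝ≥0∞} (hc : c ≠ ⊤)
    {g g' : X → E → ℝ≥0∞} (h : ∀ u ∈ A, ∀ s, g u s ≤ c * g' u s) (k : ℕ) {u : X} (hu : u ∈ A)
    (s : E) : (skewOp κ V)^[k] g u s ≤ c * (skewOp κ V)^[k] g' u s := by
  induction k generalizing u s with
  | zero => exact h u hu s
  | succ k ih =>
    simp only [Function.iterate_succ_apply', skewOp]
    rw [← lintegral_const_mul' _ _ hc]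
    exact lintegral_mono_ae <| (hA u hu).mono fun x hx => ih hx _

lemma skewOp_iterate_mono {V : X → E} {c : ℝ≥0∞} (hc : c ≠ ⊤) {g g' : X → E → ℝ≥0∞}
    (h : ∀ u s, g u s ≤ c * g' u s) (k : ℕ) (u : X) (s : E) :
    (skewOp κ V)^[k] g u s ≤ c * (skewOp κ V)^[k] g' u s :=
  IsAbsorbing.skewOp_iterate_mono (A := Set.univ) (fun _ _ => .of_forall fun _ => trivial) hc
    (fun u _ => h u) k trivial s

lemma IsAbsorbing.mul_pow_apply_le_skewOp_iterate [TopologicalSpace X] (hA : IsAbsorbing κ A)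
    (V : X →ᵇ E) {L : ℝ≥0} {D : Set X} (hD : MeasurableSet D) {a : ℝ≥0∞} {g : X → E → ℝ≥0∞}
    (hg : ∀ u, LogLipschitz L (g u)) (h : ∀ x ∈ A ∩ D, a ≤ g x 0) (m : ℕ) {u : X} (hu : u ∈ A) :
    a * (κ ^ m) u D ≤ ennexp (m * (L * ‖V‖)) * (skewOp κ V)^[m] g u 0 := by
  induction m generalizing u with
  | zero =>
    have pow_zero_apply : (κ ^ 0) u D = D.indicator 1 u := Measure.dirac_apply' u hD
    rw [pow_zero_apply]
    by_cases hx : u ∈ D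
    · simpa [hx] using h u ⟨hu, hx⟩
    · simp [hx]
  | succ m ih =>
    rw [add_comm m 1, Kernel.pow_add_apply_eq_lintegral κ 1 m u hD, pow_one, add_comm 1 m,
      Function.iterate_succ_apply', skewOp, ← lintegral_const_mul' _ _ (ennexp_ne_top _),
      ← lintegral_const_mul _ (Kernel.measurable_coe _ hD)]
    refine lintegral_mono_ae <| (hA u hu).mono fun x hx => (ih hx).trans ?_
    calc ennexp (m * (L * ‖V‖)) * (skewOp κ V)^[m] g x 0
        ≤ ennexp (m * (L * ‖V‖)) * (ennexp (L * ‖V‖) * (skewOp κ V)^[m] g x (0 + V x)) := by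
          gcongr
          exact (logLipschitz_skewOp_iterate hg m x).le_apply_add (V.norm_coe_le_norm x) 0
      _ = ennexp ((m + 1 : ℕ) * (L * ‖V‖)) * (skewOp κ V)^[m] g x (0 + V x) := by
          rw [← mul_assoc, ← ennexp_add]; push_cast; ring_nf

section LastStep

variable [TopologicalSpace X] [IsMarkovKernel κ] (V : X →ᵇ E) {L : ℝ≥0} {G : E → ℝ≥0∞}

lemma skewOp_iterate_add_le (hG : LogLipschitz L G) (k m : ℕ) (u : X) (s : E) :
    (skewOp κ V)^[k + m] (fun _ => G) u s
      ≤ ennexp (m * (L * ‖V‖)) * (skewOp κ V)^[k] (fun _ => G) u s := by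
  induction m with
  | zero => simp
  | succ m ih =>
    have last_step (u : X) (s : E) : skewOp κ V (fun _ => G) u s ≤ ennexp (L * ‖V‖) * G s :=
      calc skewOp κ V (fun _ => G) u s ≤ ∫⁻ _, ennexp (L * ‖V‖) * G s ∂κ u :=
            lintegral_mono fun x => hG.apply_add_le (V.norm_coe_le_norm x) s
        _ = ennexp (L * ‖V‖) * G s := by simp
    calc (skewOp κ V)^[k + (m + 1)] (fun _ => G) u s
        = (skewOp κ V)^[k + m] (skewOp κ V fun _ => G) u s := by
          rw [← add_assoc, Function.iterate_succ_apply]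
      _ ≤ ennexp (L * ‖V‖) * (skewOp κ V)^[k + m] (fun _ => G) u s :=
          skewOp_iterate_mono (ennexp_ne_top _) last_step _ u s
      _ ≤ ennexp (L * ‖V‖) * (ennexp (m * (L * ‖V‖)) * (skewOp κ V)^[k] (fun _ => G) u s) := by
          gcongr
      _ = ennexp ((m + 1 : ℕ) * (L * ‖V‖)) * (skewOp κ V)^[k] (fun _ => G) u s := by
          rw [← mul_assoc, ← ennexp_add]; push_cast; ring_nf

lemma le_skewOp_iterate_add (hG : LogLipschitz L G) (k m : ℕ) (u : X) (s : E) :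
    (skewOp κ V)^[k] (fun _ => G) u s
      ≤ ennexp (m * (L * ‖V‖)) * (skewOp κ V)^[k + m] (fun _ => G) u s := by
  induction m with
  | zero => simp
  | succ m ih =>
    have last_step (u : X) (s : E) : G s ≤ ennexp (L * ‖V‖) * skewOp κ V (fun _ => G) u s := by
      rw [skewOp, ← lintegral_const_mul' _ _ (ennexp_ne_top _)]
      calc G s = ∫⁻ _, G s ∂κ u := by simp
        _ ≤ ∫⁻ x, ennexp (L * ‖V‖) * G (s + V x) ∂κ u :=
            lintegral_mono fun x => hG.le_apply_add (V.norm_coe_le_norm x) s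
    calc (skewOp κ V)^[k] (fun _ => G) u s
        ≤ ennexp (m * (L * ‖V‖)) * (skewOp κ V)^[k + m] (fun _ => G) u s := ih
      _ ≤ ennexp (m * (L * ‖V‖)) *
          (ennexp (L * ‖V‖) * (skewOp κ V)^[k + m] (skewOp κ V fun _ => G) u s) := by
          gcongr; exact skewOp_iterate_mono (ennexp_ne_top _) last_step _ u s
      _ = ennexp ((m + 1 : ℕ) * (L * ‖V‖)) * (skewOp κ V)^[k + (m + 1)] (fun _ => G) u s := by
          rw [← mul_assoc, ← ennexp_add, ← add_assoc, Function.iterate_succ_apply]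
          push_cast; ring_nf

lemma iSup_skewOp_iterate_le_succ (hG : LogLipschitz L G) (k : ℕ) (s : E) :
    ⨆ x ∈ A, (skewOp κ V)^[k] (fun _ => G) x s
      ≤ ennexp (L * ‖V‖) * ⨆ x ∈ A, (skewOp κ V)^[k + 1] (fun _ => G) x s :=
  iSup₂_le fun x hx => (le_skewOp_iterate_add V hG k 1 x s).trans <| by
    rw [Nat.cast_one, one_mul]
    gcongr
    exact le_iSup₂ (f := fun x _ => (skewOp κ V)^[k + 1] (fun _ => G) x s) x hx

lemma IsAbsorbing.le_ennexp_mul_skewOp_iterate (hA : IsAbsorbing κ A) (hG : LogLipschitz L G)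
    {D : Set X} (hD : MeasurableSet D) {a : ℝ≥0∞} {c : ℝ} {k m : ℕ} {u : X} (hu : u ∈ A)
    (hc : ennexp (-c) ≤ (κ ^ m) u D)
    (h : ∀ x ∈ A ∩ D, a ≤ (skewOp κ V)^[k] (fun _ => G) x 0) :
    a ≤ ennexp (c + 2 * (m * (L * ‖V‖))) * (skewOp κ V)^[k] (fun _ => G) u 0 := by
  set q := m * (L * ‖V‖)
  have : ennexp (-c) * a ≤ ennexp (2 * q) * (skewOp κ V)^[k] (fun _ => G) u 0 :=
    calc ennexp (-c) * a ≤ a * (κ ^ m) u D := by rw [mul_comm]; gcongr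
      _ ≤ ennexp q * (skewOp κ V)^[m] ((skewOp κ V)^[k] fun _ => G) u 0 :=
          hA.mul_pow_apply_le_skewOp_iterate V hD
            (logLipschitz_skewOp_iterate (fun _ => hG) k) h m hu
      _ = ennexp q * (skewOp κ V)^[k + m] (fun _ => G) u 0 := by
          rw [← Function.iterate_add_apply, add_comm]
      _ ≤ ennexp q * (ennexp q * (skewOp κ V)^[k] (fun _ => G) u 0) := by
          gcongr; exact skewOp_iterate_add_le V hG k m u 0
      _ = ennexp (2 * q) * (skewOp κ V)^[k] (fun _ => G) u 0 := by
          rw [← mul_assoc, ← ennexp_add, ← two_mul]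
  rwa [ennexp_mul_le_iff, neg_neg, ← mul_assoc, ← ennexp_add] at this

end LastStep

/-- The mixing properties of the kernel `κ` on the compact set `A` that drive the whole argument. By
duality, `coupling` says that `κ u` and `κ v` admit a coupling `(x, y)` with
`dist x y ≤ γ * dist u v` outside an event of probability at most `C * dist u v`. -/
structure IsMixingOn [PseudoMetricSpace X] (κ : Kernel X X) (A : Set X) : Prop where
  isCompact : IsCompact A
  nonempty : A.Nonempty
  isAbsorbing : IsAbsorbing κ A
  coupling : ∀ γ : ℝ, 0 < γ → ∃ C : ℝ, 0 ≤ C ∧ ∀ u ∈ A, ∀ v ∈ A, ∀ f g : X → ℝ≥0∞,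
    Measurable f → Measurable g → ∀ m : ℝ≥0∞, (∀ x ∈ A, f x ≤ m) →
    (∀ x ∈ A, ∀ y ∈ A, dist x y ≤ γ * dist u v → f x ≤ g y) →
    ∫⁻ x, f x ∂κ u ≤ ∫⁻ y, g y ∂κ v + ENNReal.ofReal (C * dist u v) * m
  irreducible : ∀ δ : ℝ, 0 < δ → ∀ v ∈ A, ∃ m : ℕ, ∃ p : ℝ≥0∞, 0 < p ∧ ∀ u ∈ A,
    p ≤ (κ ^ m) u (Metric.ball v δ)

namespace IsMixingOn

variable [PseudoMetricSpace X]

lemma exists_uniform_irreducible (hκ : IsMixingOn κ A) {δ : ℝ} (hδ : 0 < δ) :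
    ∃ m₀ : ℕ, ∃ c : ℝ, ∀ v ∈ A, ∃ m ≤ m₀, ∀ u ∈ A,
      ennexp (-c) ≤ (κ ^ m) u (Metric.ball v δ) := by
  choose! m p hp₀ hp using fun v (hv : v ∈ A) => hκ.irreducible (δ / 2) (half_pos hδ) v hv
  obtain ⟨t, htA, hcover⟩ := hκ.isCompact.elim_nhds_subcover (fun v => Metric.ball v (δ / 2))
    fun v _ => Metric.ball_mem_nhds v (half_pos hδ)
  have hq₀ : min 1 (t.inf p) ≠ 0 :=
    (lt_min one_pos <| (Finset.lt_inf_iff ENNReal.zero_lt_top).2 fun v hv => hp₀ v (htA v hv)).ne'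
  have hq₁ : min 1 (t.inf p) ≠ ⊤ := ne_top_of_le_ne_top ENNReal.one_ne_top (min_le_left _ _)
  refine ⟨t.sup m, -Real.log (min 1 (t.inf p)).toReal, fun v hv => ?_⟩
  rw [neg_neg, ennexp_log_toReal hq₀ hq₁]
  obtain ⟨w, hw, hvw⟩ := Set.mem_iUnion₂.1 (hcover hv)
  have ball_subset : Metric.ball w (δ / 2) ⊆ Metric.ball v δ :=
    Metric.ball_subset_ball' (by rw [Metric.mem_ball, dist_comm] at hvw; linarith)
  exact ⟨m w, Finset.le_sup hw, fun u hu => (min_le_right _ _).trans <|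
    (Finset.inf_le hw).trans <| (hp w (htA w hw) u hu).trans <| measure_mono ball_subset⟩

end IsMixingOn

section CouplingBound

variable [PseudoMetricSpace X] {V : X →ᵇ E} {L ε Λ : ℝ≥0} {G : E → ℝ≥0∞} {B : ℝ}

/-- The equicontinuity estimate which the coupling propagates along the iterates of the transfer
operator: a multiplicative error `α` per unit of distance and `β` per unit of time, and an additive
error `B` per unit of distance relative to the supremum over `A`. -/
def CouplingBound (κ : Kernel X X) (V : X → E) (A : Set X) (G : E → ℝ≥0∞) (α β B : ℝ) (k : ℕ) :
    Prop :=
  ∀ u ∈ A, ∀ v ∈ A, ∀ s : E, (skewOp κ V)^[k] (fun _ => G) u s ≤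
    ennexp (α * dist u v + β * k) * (skewOp κ V)^[k] (fun _ => G) v s
      + ENNReal.ofReal (B * dist u v) * ⨆ x ∈ A, (skewOp κ V)^[k] (fun _ => G) x s

lemma couplingBound_zero {α β : ℝ} (hα : 0 ≤ α) : CouplingBound κ V A G α β B 0 :=
  fun _ _ _ _ _ => le_add_right <| le_mul_of_one_le_left zero_le <|
    one_le_ennexp (by simpa using mul_nonneg hα dist_nonneg)

lemma CouplingBound.apply_add_le {k : ℕ} (h : CouplingBound κ V A G (L * Λ) (L * ε) B k)
    (hV : ∀ u ∈ A, ∀ v ∈ A, ‖V u - V v‖ ≤ ε + Λ * dist u v) (hG : LogLipschitz L G) (hB : 0 ≤ B)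
    {r : ℝ} {x y : X} (hx : x ∈ A) (hy : y ∈ A) (hxy : dist x y ≤ r) (s : E) :
    (skewOp κ V)^[k] (fun _ => G) x (s + V x) ≤
      ennexp (L * Λ * (2 * r) + L * ε * (k + 1)) * (skewOp κ V)^[k] (fun _ => G) y (s + V y)
        + ENNReal.ofReal (B * r) *
          (ennexp (L * ‖V‖) * ⨆ x ∈ A, (skewOp κ V)^[k] (fun _ => G) x s) := by
  have hT (u : X) : LogLipschitz L ((skewOp κ V)^[k] (fun _ => G) u) :=
    logLipschitz_skewOp_iterate (fun _ => hG) k u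
  refine (h x hx y hy (s + V x)).trans ?_
  gcongr ?_ + ENNReal.ofReal (B * ?_) * ?_
  · calc ennexp (L * Λ * dist x y + L * ε * k) * (skewOp κ V)^[k] (fun _ => G) y (s + V x)
        ≤ ennexp (L * Λ * r + L * ε * k) *
          (ennexp (L * (ε + Λ * r)) * (skewOp κ V)^[k] (fun _ => G) y (s + V y)) := by
          gcongr
          refine (hT y _ (s + V y)).trans ?_
          rw [add_sub_add_left_eq_sub]
          gcongr
          exact (hV x hx y hy).trans (by gcongr)
      _ = ennexp (L * Λ * (2 * r) + L * ε * (k + 1)) *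
          (skewOp κ V)^[k] (fun _ => G) y (s + V y) := by
          rw [← mul_assoc, ← ennexp_add]; ring_nf
  · exact iSup₂_le fun z hz => ((hT z).apply_add_le (V.norm_coe_le_norm x) s).trans <| by
      gcongr
      exact le_iSup₂ (f := fun x _ => (skewOp κ V)^[k] (fun _ => G) x s) z hz

variable [OpensMeasurableSpace X] [MeasurableSpace E] [BorelSpace E] [SecondCountableTopology E]
  [IsMarkovKernel κ]

lemma CouplingBound.skewOp_iterate_succ_le {k : ℕ} (hGm : Measurable G) (hG : LogLipschitz L G)
    (h : CouplingBound κ V A G (L * Λ) (L * ε) B k)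
    (hV : ∀ u ∈ A, ∀ v ∈ A, ‖V u - V v‖ ≤ ε + Λ * dist u v) (hB : 0 ≤ B) {C γ : ℝ} (hC₀ : 0 ≤ C)
    (hγ : 0 ≤ γ) {u v : X}
    (hC : ∀ f g : X → ℝ≥0∞, Measurable f → Measurable g → ∀ m : ℝ≥0∞, (∀ x ∈ A, f x ≤ m) →
      (∀ x ∈ A, ∀ y ∈ A, dist x y ≤ γ * dist u v → f x ≤ g y) →
      ∫⁻ x, f x ∂κ u ≤ ∫⁻ y, g y ∂κ v + ENNReal.ofReal (C * dist u v) * m) (s : E) :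
    (skewOp κ V)^[k + 1] (fun _ => G) u s ≤
      ennexp (L * Λ * (2 * (γ * dist u v)) + L * ε * (k + 1)) *
          (skewOp κ V)^[k + 1] (fun _ => G) v s
        + ENNReal.ofReal ((B * γ + C) * dist u v) *
          (ennexp (L * ‖V‖) * ⨆ x ∈ A, (skewOp κ V)^[k] (fun _ => G) x s) := by
  set g := (skewOp κ V)^[k] (fun _ => G)
  have hgm : Measurable fun x => g x (s + V x) :=
    (measurable_skewOp_iterate (g := fun _ => G) V.continuous.measurable
      (hGm.comp measurable_snd) k).comp
      (measurable_id.prodMk (V.continuous.measurable.const_add s))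
  have bound : ∀ x ∈ A, g x (s + V x) ≤ ennexp (L * ‖V‖) * ⨆ x ∈ A, g x s := fun x hx =>
    ((logLipschitz_skewOp_iterate (fun _ => hG) k x).apply_add_le
      (V.norm_coe_le_norm x) s).trans <| by
        gcongr; exact le_iSup₂ (f := fun x _ => g x s) x hx
  have step := hC _ _ hgm ((hgm.const_mul _).add_const _) _ bound fun x hx y hy hxy =>
    h.apply_add_le hV hG hB hx hy hxy s
  rw [lintegral_add_right _ measurable_const, lintegral_const_mul' _ _ (ennexp_ne_top _),
    lintegral_const, measure_univ, mul_one, add_assoc, ← add_mul,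
    ← ENNReal.ofReal_add (by positivity) (by positivity), ← mul_assoc B, ← add_mul] at step
  rw [Function.iterate_succ_apply']
  exact step

-- The contraction rate `γ` is so small that the additive error transported from time `k` is halved,
-- so that it makes room, in the same constant `B`, for the error created at time `k + 1`.
lemma IsMixingOn.exists_couplingBound (hκ : IsMixingOn κ A) (L : ℝ≥0)
    (hV : ∀ u ∈ A, ∀ v ∈ A, ‖V u - V v‖ ≤ ε + Λ * dist u v) :
    ∃ B : ℝ, 0 ≤ B ∧ ∀ G : E → ℝ≥0∞, Measurable G → LogLipschitz L G →
      ∀ k : ℕ, CouplingBound κ V A G (L * Λ) (L * ε) B k := by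
  set q : ℝ := L * ‖V‖ with hq
  set γ := Real.exp (-(2 * q)) / 2 with hγ_def
  have hγ : γ ≤ 1 / 2 := by
    rw [hγ_def]; gcongr; exact Real.exp_le_one_iff.2 (by rw [hq, neg_nonpos]; positivity)
  obtain ⟨C, hC₀, hC⟩ := hκ.coupling γ (by positivity)
  set B := 2 * C * Real.exp (2 * q) with hB
  have hBγ : (B * γ + C) * Real.exp (2 * q) = B := by
    rw [hB, hγ_def, Real.exp_neg]; field_simp; ring
  refine ⟨B, by positivity, fun G hGm hG k => ?_⟩
  induction k with
  | zero => exact couplingBound_zero (by positivity)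
  | succ k ih =>
    intro u hu v hv s
    refine (ih.skewOp_iterate_succ_le hGm hG hV (by positivity) hC₀ (by positivity)
      (hC u hu v hv) s).trans ?_
    gcongr ennexp ?_ * _ + ?_
    · push_cast
      gcongr
      nlinarith [dist_nonneg (x := u) (y := v)]
    · calc ENNReal.ofReal ((B * γ + C) * dist u v) *
            (ennexp q * ⨆ x ∈ A, (skewOp κ V)^[k] (fun _ => G) x s)
          ≤ ENNReal.ofReal ((B * γ + C) * dist u v) * (ennexp q *
            (ennexp q * ⨆ x ∈ A, (skewOp κ V)^[k + 1] (fun _ => G) x s)) := by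
            gcongr; exact iSup_skewOp_iterate_le_succ V hG k s
        _ = ENNReal.ofReal ((B * γ + C) * Real.exp (2 * q) * dist u v) *
            ⨆ x ∈ A, (skewOp κ V)^[k + 1] (fun _ => G) x s := by
            rw [← mul_assoc (ennexp q), ← mul_assoc, ← ennexp_add, ennexp,
              ← ENNReal.ofReal_mul (by positivity)]
            ring_nf
        _ = ENNReal.ofReal (B * dist u v) *
            ⨆ x ∈ A, (skewOp κ V)^[k + 1] (fun _ => G) x s := by rw [hBγ]

end CouplingBound

lemma exists_norm_sub_le_add_mul_dist {X : Type*} [PseudoMetricSpace X] {A : Set X}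
    (hA : IsCompact A) (V : X →ᵇ E) {ε : ℝ} (hε : 0 < ε) :
    ∃ Λ : ℝ≥0, ∀ u ∈ A, ∀ v ∈ A, ‖V u - V v‖ ≤ ε + Λ * dist u v := by
  obtain ⟨δ, hδ, hVδ⟩ := Metric.uniformContinuousOn_iff.1
    (hA.uniformContinuousOn_of_continuous V.continuous.continuousOn) ε hε
  refine ⟨Real.toNNReal (2 * ‖V‖ / δ), fun u hu v hv => ?_⟩
  rw [Real.coe_toNNReal _ (by positivity)]
  by_cases hd : dist u v < δ
  · have := hVδ u hu v hv hd
    rw [dist_eq_norm] at this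
    have : 0 ≤ 2 * ‖V‖ / δ * dist u v := by positivity
    linarith
  · calc ‖V u - V v‖ ≤ 2 * ‖V‖ := by rw [← dist_eq_norm]; exact V.dist_le_two_norm u v
      _ = 2 * ‖V‖ / δ * δ := by field_simp
      _ ≤ ε + 2 * ‖V‖ / δ * dist u v := by
          have : 2 * ‖V‖ / δ * δ ≤ 2 * ‖V‖ / δ * dist u v := by gcongr; exact not_lt.1 hd
          linarith

lemma le_four_mul_of_half_le_add_quarter {M a : ℝ≥0∞} (hM : M ≠ ⊤) (h : M / 2 ≤ a + M / 4) :
    M ≤ 4 * a := by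
  rcases eq_or_ne a ⊤ with rfl | ha
  · simp
  lift M to ℝ≥0 using hM
  lift a to ℝ≥0 using ha
  have h' : M / 2 ≤ a + M / 4 := by exact_mod_cast h
  have : M ≤ 4 * a := by
    rw [← NNReal.coe_le_coe] at h' ⊢
    push_cast at h' ⊢
    linarith
  exact_mod_cast this

lemma CouplingBound.exists_ball_iSup_le [PseudoMetricSpace X] {V : X → E} {G : E → ℝ≥0∞}
    {α β B δ : ℝ} {k : ℕ} (h : CouplingBound κ V A G α β B k) (hA : A.Nonempty) (hα : 0 ≤ α)
    (hB : 0 ≤ B) (hδ : B * δ ≤ 1 / 4) (s : E)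
    (hM : ⨆ x ∈ A, (skewOp κ V)^[k] (fun _ => G) x s ≠ ⊤) :
    ∃ v ∈ A, ∀ x ∈ A ∩ Metric.ball v δ, ⨆ x ∈ A, (skewOp κ V)^[k] (fun _ => G) x s ≤
      4 * (ennexp (α * δ + β * k) * (skewOp κ V)^[k] (fun _ => G) x s) := by
  set M := ⨆ x ∈ A, (skewOp κ V)^[k] (fun _ => G) x s with hM_def
  obtain ⟨v, hv, hMv⟩ : ∃ v ∈ A, M / 2 ≤ (skewOp κ V)^[k] (fun _ => G) v s := by
    rcases eq_or_ne M 0 with hM₀ | hM₀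
    · obtain ⟨v, hv⟩ := hA
      exact ⟨v, hv, by simp [hM₀]⟩
    · obtain ⟨v, hv, hlt⟩ := lt_biSup_iff.1 (hM_def ▸ ENNReal.half_lt_self hM₀ hM)
      exact ⟨v, hv, hlt.le⟩
  refine ⟨v, hv, fun x hx => le_four_mul_of_half_le_add_quarter hM ?_⟩
  have hd : dist v x ≤ δ := by rw [dist_comm]; exact (Metric.mem_ball.1 hx.2).le
  refine hMv.trans <| (h v hv x hx.1 s).trans ?_
  gcongr ennexp (α * ?_ + _) * _ + ?_
  rw [ENNReal.div_eq_inv_mul]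
  gcongr
  calc ENNReal.ofReal (B * dist v x) ≤ ENNReal.ofReal (1 / 4) :=
        ENNReal.ofReal_le_ofReal ((mul_le_mul_of_nonneg_left hd hB).trans hδ)
    _ = 4⁻¹ := by rw [one_div, ENNReal.ofReal_inv_of_pos (by norm_num)]; norm_num

theorem IsMixingOn.exists_harnack [PseudoMetricSpace X] [OpensMeasurableSpace X] [IsMarkovKernel κ]
    [MeasurableSpace E] [BorelSpace E] [SecondCountableTopology E]
    (hκ : IsMixingOn κ A) (V : X →ᵇ E) (L : ℝ≥0) {ε : ℝ} (hε : 0 < ε) :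
    ∃ c : ℝ, ∀ G : E → ℝ≥0∞, Measurable G → LogLipschitz L G → G 0 ≠ ⊤ →
      ∀ k : ℕ, ∀ u ∈ A, ∀ v ∈ A, (skewOp κ V)^[k] (fun _ => G) v 0 ≤
        ennexp (c + ε * k) * (skewOp κ V)^[k] (fun _ => G) u 0 := by
  set ε' : ℝ≥0 := (ε / (L + 1)).toNNReal
  have hε'_coe : (ε' : ℝ) = ε / (L + 1) := Real.coe_toNNReal _ (by positivity)
  have hLε : L * ε' ≤ ε := by
    rw [hε'_coe, ← mul_div_assoc, div_le_iff₀ (by positivity)]; linarith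
  obtain ⟨Λ, hΛ⟩ := exists_norm_sub_le_add_mul_dist hκ.isCompact V (ε := ε')
    (by rw [hε'_coe]; positivity)
  obtain ⟨B, hB₀, hB⟩ := hκ.exists_couplingBound L hΛ
  set δ := 1 / (4 * B + 1) with hδ
  have hBδ : B * δ ≤ 1 / 4 := by
    rw [hδ, mul_one_div, div_le_div_iff₀ (by positivity) (by positivity)]; linarith
  obtain ⟨m₀, c, hc⟩ := hκ.exists_uniform_irreducible (δ := δ) (by positivity)
  refine ⟨Real.log 4 + L * Λ * δ + c + 2 * (m₀ * (L * ‖V‖)), fun G hGm hG hG₀ k u hu v hv => ?_⟩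
  set M := ⨆ x ∈ A, (skewOp κ V)^[k] (fun _ => G) x 0
  have hM_top : M ≠ ⊤ :=
    ne_top_of_le_ne_top (ENNReal.mul_ne_top (ennexp_ne_top (k * (L * ‖V‖))) hG₀)
      (iSup₂_le fun x _ => by simpa using skewOp_iterate_add_le V hG 0 k x 0)
  obtain ⟨v₀, hv₀, hball⟩ :=
    (hB G hGm hG k).exists_ball_iSup_le hκ.nonempty (by positivity) hB₀ hBδ 0 hM_top
  obtain ⟨m, hm, hirr⟩ := hc v₀ hv₀
  set c' := Real.log 4 + (L * Λ * δ + L * ε' * k) with hc'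
  have near_max : ∀ x ∈ A ∩ Metric.ball v₀ δ,
      ennexp (-c') * M ≤ (skewOp κ V)^[k] (fun _ => G) x 0 := fun x hx => by
    have four : ennexp (Real.log 4) = 4 := by simp [ennexp, Real.exp_log]
    rw [ennexp_mul_le_iff, neg_neg, hc', ennexp_add, mul_assoc, four]
    exact hball x hx
  have M_le := hκ.isAbsorbing.le_ennexp_mul_skewOp_iterate V hG measurableSet_ball hu
    (hirr u hu) near_max
  rw [ennexp_mul_le_iff, neg_neg, ← mul_assoc, ← ennexp_add] at M_le
  refine (le_iSup₂ (f := fun x _ => (skewOp κ V)^[k] (fun _ => G) x 0) v hv).trans <|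
    M_le.trans ?_
  rw [hc']
  have hm' : m * (L * ‖V‖) ≤ m₀ * (L * ‖V‖) := by gcongr
  have hLεk : L * ε' * k ≤ ε * k := by gcongr
  gcongr ennexp ?_ * _
  linarith

end Harnack

section ExponentialRate

/-- The sequence `a` has exponential growth rate `r`. -/
def HasExpRate (a : ℕ → ℝ≥0∞) (r : ℝ) : Prop :=
  ∀ ε > 0, ∀ᶠ k : ℕ in atTop, ennexp (k * (r - ε)) ≤ a k ∧ a k ≤ ennexp (k * (r + ε))

/-- The functions `f k` have exponential growth rate `r`, uniformly on `A`. -/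
def HasUniformExpRate {X : Type*} (f : ℕ → X → ℝ≥0∞) (A : Set X) (r : ℝ) : Prop :=
  ∀ ε > 0, ∀ᶠ k : ℕ in atTop, ∀ u ∈ A,
    ennexp (k * (r - ε)) ≤ f k u ∧ f k u ≤ ennexp (k * (r + ε))

lemma exists_hasExpRate_of_supermultiplicative {a : ℕ → ℝ≥0∞} {b B : ℝ}
    (hb : ∀ k : ℕ, ennexp (k * b) ≤ a k) (hB : ∀ k : ℕ, a k ≤ ennexp (k * B))
    (hmul : ∀ k l : ℕ, 0 < k → 0 < l → a k * a l ≤ a (k + l)) : ∃ r, HasExpRate a r := by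
  set c : ℕ → ℝ := fun k => -Real.log (a k).toReal with hc
  have ha (k : ℕ) : a k = ennexp (-c k) := by
    rw [hc, neg_neg, ennexp_log_toReal ((ennexp_pos _).trans_le (hb k)).ne'
      (ne_top_of_le_ne_top (ennexp_ne_top _) (hB k))]
  simp only [ha, ennexp_le_ennexp, ← ennexp_add] at hb hB hmul
  have hc₀ : c 0 = 0 := by
    have h := hb 0; have h' := hB 0
    simp only [Nat.cast_zero, zero_mul] at h h'
    linarith
  have hsub : Subadditive c := fun k l => by
    rcases k.eq_zero_or_pos with rfl | hk
    · simp [hc₀]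
    rcases l.eq_zero_or_pos with rfl | hl
    · simp [hc₀]
    linarith [hmul k l hk hl]
  have hbdd : BddBelow (Set.range fun k => c k / k) := by
    refine ⟨min 0 (-B), ?_⟩
    rintro _ ⟨k, rfl⟩
    rcases k.eq_zero_or_pos with rfl | hk
    · simp
    · refine (min_le_right _ _).trans ((le_div_iff₀ (by positivity)).2 ?_)
      linarith [hB k]
  have hlim := hsub.tendsto_lim hbdd
  refine ⟨-hsub.lim, fun ε hε => ?_⟩
  filter_upwards [hlim.eventually_lt_const (lt_add_of_pos_right _ hε),
    hlim.eventually_const_lt (sub_lt_self _ hε), eventually_gt_atTop 0] with k hlt hgt hk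
  rw [div_lt_iff₀ (by positivity)] at hlt
  rw [lt_div_iff₀ (by positivity)] at hgt
  rw [ha, ennexp_le_ennexp, ennexp_le_ennexp]
  constructor <;> linarith

lemma HasExpRate.hasUniformExpRate {X : Type*} {A : Set X} {f : ℕ → X → ℝ≥0∞} {r : ℝ}
    (h : HasExpRate (fun k => ⨅ u ∈ A, f k u) r)
    (harnack : ∀ ε > 0, ∃ c : ℝ, ∀ k, ∀ u ∈ A, ∀ v ∈ A, f k v ≤ ennexp (c + ε * k) * f k u) :
    HasUniformExpRate f A r := by
  intro ε hε
  obtain ⟨c, hc⟩ := harnack (ε / 4) (by positivity)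
  have hck : ∀ᶠ k : ℕ in atTop, c ≤ ε / 4 * k :=
    (tendsto_natCast_atTop_atTop.const_mul_atTop (by positivity)).eventually_ge_atTop c
  filter_upwards [h (ε / 2) (half_pos hε), hck] with k hk hck u hu
  constructor
  · calc ennexp (k * (r - ε)) ≤ ennexp (k * (r - ε / 2)) := by gcongr; linarith
      _ ≤ ⨅ v ∈ A, f k v := hk.1
      _ ≤ f k u := iInf₂_le u hu
  · have hle : ennexp (-(c + ε / 4 * k)) * f k u ≤ ⨅ v ∈ A, f k v :=
      le_iInf₂ fun v hv => by rw [ennexp_mul_le_iff, neg_neg]; exact hc k v hv u hu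
    calc f k u ≤ ennexp (c + ε / 4 * k) * ennexp (k * (r + ε / 2)) := by
          rw [← neg_neg (c + ε / 4 * k), ← ennexp_mul_le_iff]; exact hle.trans hk.2
      _ ≤ ennexp (k * (r + ε)) := by rw [← ennexp_add]; gcongr; linarith

end ExponentialRate

section Partition

variable {E : Type*} [NormedAddCommGroup E] [NormedSpace ℝ E] {F : E → ℝ} {L : ℝ≥0}

/-- The weight `exp (k F(s / k))` of the sum `s` of `k` terms. -/
def scaledExp (F : E → ℝ) (k : ℕ) (s : E) : ℝ≥0∞ := ennexp (k * F ((k : ℝ)⁻¹ • s))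

@[simp] lemma scaledExp_apply_zero (F : E → ℝ) (k : ℕ) : scaledExp F k 0 = ennexp (k * F 0) := by
  rw [scaledExp, smul_zero]

lemma measurable_scaledExp [MeasurableSpace E] [BorelSpace E] (hF : Continuous F) (k : ℕ) :
    Measurable (scaledExp F k) :=
  measurable_ennexp.comp (Continuous.measurable (by fun_prop))

lemma logLipschitz_scaledExp (hF : LipschitzWith L F) (k : ℕ) :
    LogLipschitz L (scaledExp F k) := by
  intro s s'
  rcases k.eq_zero_or_pos with rfl | hk
  · simpa [scaledExp] using one_le_ennexp (by positivity)
  rw [scaledExp, scaledExp, ← ennexp_add, ennexp_le_ennexp]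
  have lip := hF.le_add_mul ((k : ℝ)⁻¹ • s) ((k : ℝ)⁻¹ • s')
  rw [dist_smul₀, Real.norm_of_nonneg (by positivity), dist_eq_norm] at lip
  calc k * F ((k : ℝ)⁻¹ • s) ≤ k * (F ((k : ℝ)⁻¹ • s') + L * ((k : ℝ)⁻¹ * ‖s - s'‖)) := by gcongr
    _ = L * ‖s - s'‖ + k * F ((k : ℝ)⁻¹ • s') := by field_simp; ring

lemma scaledExp_mul_scaledExp_le (hF : ConcaveOn ℝ Set.univ F) {k l : ℕ} (hk : 0 < k) (hl : 0 < l)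
    (s s' : E) : scaledExp F k s * scaledExp F l s' ≤ scaledExp F (k + l) (s' + s) := by
  rw [scaledExp, scaledExp, scaledExp, ← ennexp_add, ennexp_le_ennexp]
  have concave := hF.2 (Set.mem_univ ((k : ℝ)⁻¹ • s)) (Set.mem_univ ((l : ℝ)⁻¹ • s'))
    (show (0 : ℝ) ≤ k / (k + l) by positivity) (show (0 : ℝ) ≤ l / (k + l) by positivity)
    (by field_simp)
  have mean : ((k : ℝ) / (k + l)) • ((k : ℝ)⁻¹ • s) + ((l : ℝ) / (k + l)) • ((l : ℝ)⁻¹ • s') =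
      ((k + l : ℕ) : ℝ)⁻¹ • (s' + s) := by
    rw [smul_smul, smul_smul, smul_add, add_comm]
    congr 2 <;> (push_cast; field_simp)
  rw [mean, smul_eq_mul, smul_eq_mul] at concave
  calc k * F ((k : ℝ)⁻¹ • s) + l * F ((l : ℝ)⁻¹ • s')
      = (k + l : ℕ) * ((k : ℝ) / (k + l) * F ((k : ℝ)⁻¹ • s)
        + (l : ℝ) / (k + l) * F ((l : ℝ)⁻¹ • s')) := by push_cast; field_simp
    _ ≤ (k + l : ℕ) * F (((k + l : ℕ) : ℝ)⁻¹ • (s' + s)) := by gcongr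

variable {X : Type*} [MeasurableSpace X]

/-- The partition function `𝔼_u exp (k F(k⁻¹ (V(u_1) + ⋯ + V(u_k))))` of the Markov chain with
kernel `κ` issued from `u`. -/
def partitionFn (κ : Kernel X X) (V : X → E) (F : E → ℝ) (k : ℕ) (u : X) : ℝ≥0∞ :=
  (skewOp κ V)^[k] (fun _ => scaledExp F k) u 0

variable {κ : Kernel X X} {A : Set X}

-- The Markov property at time `k` together with the additivity of the sums.
lemma IsAbsorbing.mul_partitionFn_le {V : X → E} (hA : IsAbsorbing κ A) {F₁ F₂ F₃ : E → ℝ}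
    {k l : ℕ} {a : ℝ} (ha : ∀ u ∈ A, ennexp a ≤ partitionFn κ V F₂ l u)
    (hF : ∀ s s' : E, scaledExp F₁ k s * scaledExp F₂ l s' ≤ scaledExp F₃ (k + l) (s' + s))
    {u : X} (hu : u ∈ A) : ennexp a * partitionFn κ V F₁ k u ≤ partitionFn κ V F₃ (k + l) u := by
  have after_k : ∀ x ∈ A, ∀ s : E, scaledExp F₁ k s ≤
      ennexp (-a) * (skewOp κ V)^[l] (fun _ => scaledExp F₃ (k + l)) x s := by
    intro x hx s
    have shifted := hA.skewOp_iterate_mono (V := V)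
      (ennexp_ne_top (-(k * F₁ ((k : ℝ)⁻¹ • s)))) (g := fun _ => scaledExp F₂ l)
      (g' := fun _ s' => scaledExp F₃ (k + l) (s' + s))
      (fun _ _ s' => ennexp_mul_le_iff.1 (hF s s')) l hx 0
    rw [skewOp_iterate_translate l (fun _ => scaledExp F₃ (k + l)), zero_add,
      ← ennexp_mul_le_iff] at shifted
    rw [← ennexp_mul_le_iff, mul_comm]
    exact le_trans (by rw [scaledExp]; gcongr; exact ha x hx) shifted
  rw [ennexp_mul_le_iff, partitionFn, partitionFn, Function.iterate_add_apply]
  exact hA.skewOp_iterate_mono (ennexp_ne_top _) after_k k hu 0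

section Bounds

variable [TopologicalSpace X] [IsMarkovKernel κ] (V : X →ᵇ E)

lemma partitionFn_le (hF : LipschitzWith L F) (k : ℕ) (u : X) :
    partitionFn κ V F k u ≤ ennexp (k * (F 0 + L * ‖V‖)) := by
  have h := skewOp_iterate_add_le (κ := κ) V (logLipschitz_scaledExp hF k) 0 k u 0
  rw [zero_add, Function.iterate_zero, id, scaledExp_apply_zero, ← ennexp_add] at h
  exact h.trans_eq (by ring_nf)

lemma le_partitionFn (hF : LipschitzWith L F) (k : ℕ) (u : X) :
    ennexp (k * (F 0 - L * ‖V‖)) ≤ partitionFn κ V F k u := by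
  have h := le_skewOp_iterate_add (κ := κ) V (logLipschitz_scaledExp hF k) 0 k u 0
  rw [zero_add, Function.iterate_zero, id, scaledExp_apply_zero,
    ← neg_neg (k * (L * ‖V‖)), ← ennexp_mul_le_iff, ← ennexp_add] at h
  exact le_trans (by ring_nf; rfl) h

end Bounds

theorem IsMixingOn.exists_hasUniformExpRate_partitionFn [PseudoMetricSpace X]
    [OpensMeasurableSpace X] [IsMarkovKernel κ] [MeasurableSpace E] [BorelSpace E]
    [SecondCountableTopology E] (hκ : IsMixingOn κ A) (V : X →ᵇ E)
    (hF : LipschitzWith L F) (hFc : ConcaveOn ℝ Set.univ F) :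
    ∃ r, HasUniformExpRate (partitionFn κ V F) A r := by
  obtain ⟨x₀, hx₀⟩ := hκ.nonempty
  have hinf (k : ℕ) {u : X} (hu : u ∈ A) :
      ⨅ v ∈ A, partitionFn κ V F k v ≤ partitionFn κ V F k u := iInf₂_le u hu
  have hlower (k : ℕ) : ennexp (k * (F 0 - L * ‖V‖)) ≤ ⨅ v ∈ A, partitionFn κ V F k v :=
    le_iInf₂ fun u _ => le_partitionFn V hF k u
  have hupper (k : ℕ) : ⨅ v ∈ A, partitionFn κ V F k v ≤ ennexp (k * (F 0 + L * ‖V‖)) :=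
    (hinf k hx₀).trans (partitionFn_le V hF k x₀)
  obtain ⟨r, hr⟩ := exists_hasExpRate_of_supermultiplicative hlower hupper fun k l hk hl => by
    refine le_iInf₂ fun u hu => ?_
    have hl_eq := ennexp_log_toReal ((ennexp_pos _).trans_le (hlower l)).ne'
      (ne_top_of_le_ne_top (ennexp_ne_top _) (hupper l))
    calc (⨅ v ∈ A, partitionFn κ V F k v) * ⨅ v ∈ A, partitionFn κ V F l v
        ≤ (⨅ v ∈ A, partitionFn κ V F l v) * partitionFn κ V F k u := by
          rw [mul_comm]; gcongr; exact hinf k hu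
      _ ≤ partitionFn κ V F (k + l) u := by
          rw [← hl_eq]
          exact hκ.isAbsorbing.mul_partitionFn_le (fun u hu => hl_eq.trans_le (hinf l hu))
            (scaledExp_mul_scaledExp_le hFc hk hl) hu
  refine ⟨r, hr.hasUniformExpRate fun ε hε => ?_⟩
  obtain ⟨c, hc⟩ := hκ.exists_harnack V L hε
  exact ⟨c, fun k => hc _ (measurable_scaledExp hF.continuous k) (logLipschitz_scaledExp hF k)
    (by rw [scaledExp_apply_zero]; exact ennexp_ne_top _) k⟩

end Partition

section Convexity

lemma convex_of_isClosed_of_midpoint_mem {E : Type*} [AddCommGroup E] [Module ℝ E]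
    [TopologicalSpace E] [IsTopologicalAddGroup E] [ContinuousSMul ℝ E] {C : Set E}
    (hC : IsClosed C) (hmid : ∀ x ∈ C, ∀ y ∈ C, midpoint ℝ x y ∈ C) : Convex ℝ C := by
  refine convex_iff_segment_subset.2 fun x hx y hy => ?_
  rw [segment_eq_image_lineMap]
  rintro _ ⟨t, ht, rfl⟩
  by_contra htC
  set D : Set ℝ := AffineMap.lineMap x y ⁻¹' C with hD
  have hDclosed : IsClosed D := hC.preimage AffineMap.lineMap_continuous
  have hDmid : ∀ a ∈ D, ∀ b ∈ D, midpoint ℝ a b ∈ D := fun a ha b hb => by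
    rw [hD, Set.mem_preimage, AffineMap.map_midpoint]
    exact hmid _ ha _ hb
  obtain ⟨a, ha⟩ := (isCompact_Icc.inter_left hDclosed).exists_isGreatest
    ⟨0, by simpa [hD] using hx, le_rfl, ht.1⟩
  obtain ⟨b, hb⟩ := (isCompact_Icc.inter_left hDclosed).exists_isLeast
    ⟨1, by simpa [hD] using hy, ht.2, le_rfl⟩
  have hat : a < t := ha.1.2.2.lt_of_ne fun h => htC (h ▸ ha.1.1)
  have htb : t < b := hb.1.2.1.lt_of_ne' fun h => htC (h ▸ hb.1.1)
  have hab := hDmid a ha.1.1 b hb.1.1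
  rw [midpoint_eq_smul_add, invOf_eq_inv, smul_eq_mul] at hab
  rcases le_total (2⁻¹ * (a + b)) t with h | h
  · linarith [ha.2 ⟨hab, by linarith [ha.1.2.1], h⟩]
  · linarith [hb.2 ⟨hab, h, by linarith [hb.1.2.2]⟩]

lemma exists_affine_between {E : Type*} [TopologicalSpace E] [AddCommGroup E] [Module ℝ E]
    [IsTopologicalAddGroup E] [ContinuousSMul ℝ E] {C : Set (E × ℝ)} (hC : Convex ℝ C)
    (hCne : C.Nonempty) {g : E → ℝ} (hg : ConvexOn ℝ Set.univ g) (hgc : Continuous g)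
    (hCg : ∀ p ∈ C, p.2 ≤ g p.1) :
    ∃ l : E →L[ℝ] ℝ, ∃ w : ℝ, (∀ p ∈ C, p.2 ≤ l p.1 + w) ∧ ∀ x, l x + w ≤ g x := by
  set D : Set (E × ℝ) := {p | p.1 ∈ Set.univ ∧ g p.1 < p.2} with hD
  have hDopen : IsOpen D := by
    simpa [hD] using isOpen_lt (hgc.comp continuous_fst) continuous_snd
  have hdisj : Disjoint D C := Set.disjoint_left.2 fun p hpD hpC => (hCg p hpC).not_gt hpD.2
  obtain ⟨f, w, hfD, hfC⟩ := geometric_hahn_banach_open hg.convex_strict_epigraph hDopen hC hdisj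
  set l : E →L[ℝ] ℝ := f.comp (ContinuousLinearMap.inl ℝ E ℝ)
  set σ : ℝ := f (0, 1)
  have hf (x : E) (r : ℝ) : f (x, r) = l x + σ * r := by
    have : (x, r) = (x, (0 : ℝ)) + r • ((0 : E), (1 : ℝ)) := by simp
    rw [this, map_add, map_smul, smul_eq_mul, mul_comm]
    rfl
  have hσ : σ < 0 := by
    obtain ⟨⟨x, r⟩, hp⟩ := hCne
    have above := hfD (x, g x + 1) ⟨trivial, lt_add_one _⟩
    have below := hfC _ hp
    rw [hf] at above below
    nlinarith [hCg _ hp]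
  refine ⟨-(σ⁻¹ • l), w / σ, fun p hp => ?_, fun x => ?_⟩
  · have := hfC p hp
    rw [← Prod.mk.eta (p := p), hf] at this
    have : p.2 ≤ (w - l p.1) / σ := by rw [le_div_iff_of_neg hσ]; linarith
    simpa [div_eq_inv_mul, mul_sub, neg_add_eq_sub] using this
  · refine le_of_forall_gt fun r hr => ?_
    have := hfD (x, r) ⟨trivial, hr⟩
    rw [hf] at this
    have : (w - l x) / σ < r := by rw [div_lt_iff_of_neg hσ]; linarith
    simpa [div_eq_inv_mul, mul_sub, neg_add_eq_sub] using this

end Convexity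

section Rates

lemma natCast_le_ennexp (n : ℕ) : (n : ℝ≥0∞) ≤ ennexp n := by
  rw [ennexp, ← ENNReal.ofReal_natCast]
  exact ENNReal.ofReal_le_ofReal (by linarith [Real.add_one_le_exp (n : ℝ)])

lemma HasUniformExpRate.le_of_le_sum {X ι : Type*} {A : Set X} (hA : A.Nonempty)
    {f : ℕ → X → ℝ≥0∞} {q : ℝ} (hf : HasUniformExpRate f A q) {I : Finset ι}
    {g : ι → ℕ → X → ℝ≥0∞} {r d : ι → ℝ} (hg : ∀ i ∈ I, HasUniformExpRate (g i) A (r i))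
    (hfg : ∀ k u, f k u ≤ ∑ i ∈ I, ennexp (k * d i) * g i k u) {m : ℝ}
    (hm : ∀ i ∈ I, r i + d i ≤ m) : q ≤ m := by
  refine le_of_forall_pos_le_add fun ε hε => ?_
  have hgI : ∀ᶠ k : ℕ in atTop, ∀ i ∈ I, ∀ u ∈ A, g i k u ≤ ennexp (k * (r i + ε / 3)) :=
    (Filter.eventually_all_finset I).2 fun i hi =>
      (hg i hi (ε / 3) (by positivity)).mono fun k hk u hu => (hk u hu).2
  have hcard : ∀ᶠ k : ℕ in atTop, (I.card : ℝ) ≤ ε / 3 * k :=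
    (tendsto_natCast_atTop_atTop.const_mul_atTop (by positivity)).eventually_ge_atTop _
  obtain ⟨k, hfk, hgk, hIk, hk⟩ := ((hf (ε / 3) (by positivity)).and
    (hgI.and (hcard.and (eventually_gt_atTop 0)))).exists
  obtain ⟨u, hu⟩ := hA
  have hk' : (0 : ℝ) < k := by positivity
  have : ennexp (k * (q - ε / 3)) ≤ ennexp (I.card + k * (m + ε / 3)) :=
    calc ennexp (k * (q - ε / 3)) ≤ ∑ i ∈ I, ennexp (k * d i) * g i k u :=
          (hfk u hu).1.trans (hfg k u)
      _ ≤ ∑ i ∈ I, ennexp (k * (m + ε / 3)) := by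
          gcongr with i hi
          calc ennexp (k * d i) * g i k u ≤ ennexp (k * d i) * ennexp (k * (r i + ε / 3)) := by
                gcongr; exact hgk i hi u hu
            _ ≤ ennexp (k * (m + ε / 3)) := by
                rw [← ennexp_add, ← mul_add]; gcongr ennexp (k * ?_); linarith [hm i hi]
      _ = I.card * ennexp (k * (m + ε / 3)) := by rw [Finset.sum_const, nsmul_eq_mul]
      _ ≤ ennexp (I.card + k * (m + ε / 3)) := by
          rw [ennexp_add]; gcongr; exact natCast_le_ennexp _
  rw [ennexp_le_ennexp] at this
  exact le_of_mul_le_mul_left (by linarith) hk'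

lemma skewOp_iterate_le_sum {X E : Type*} [MeasurableSpace X] [TopologicalSpace X]
    [OpensMeasurableSpace X] [NormedAddCommGroup E] [MeasurableSpace E] [BorelSpace E]
    [SecondCountableTopology E] {κ : Kernel X X} [IsMarkovKernel κ] (V : X →ᵇ E)
    {ι : Type*} {I : Finset ι} {c : ι → ℝ≥0∞} (hc : ∀ i, c i ≠ ⊤)
    {g : X → E → ℝ≥0∞} {g' : ι → X → E → ℝ≥0∞}
    (hg' : ∀ i, Measurable (Function.uncurry (g' i))) (k : ℕ) {r : ℝ}
    (h : ∀ u s, ‖s‖ ≤ r + k * ‖V‖ → g u s ≤ ∑ i ∈ I, c i * g' i u s) (u : X) {s : E}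
    (hs : ‖s‖ ≤ r) :
    (skewOp κ V)^[k] g u s ≤ ∑ i ∈ I, c i * (skewOp κ V)^[k] (g' i) u s := by
  induction k generalizing r u s with
  | zero => exact h u s (by simpa using hs)
  | succ k ih =>
    have hV : Measurable V := V.continuous.measurable
    have hmeas (i : ι) : Measurable fun x => (skewOp κ V)^[k] (g' i) x (s + V x) :=
      (measurable_skewOp_iterate hV (hg' i) k).comp (measurable_id.prodMk (hV.const_add s))
    simp only [Function.iterate_succ_apply']
    calc skewOp κ V ((skewOp κ V)^[k] g) u s
        ≤ ∫⁻ x, ∑ i ∈ I, c i * (skewOp κ V)^[k] (g' i) x (s + V x) ∂κ u :=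
          lintegral_mono fun x => ih (r := r + ‖V‖)
            (fun u s hs => h u s (hs.trans_eq (by push_cast; ring))) x
            ((norm_add_le _ _).trans (add_le_add hs (V.norm_coe_le_norm x)))
      _ = ∑ i ∈ I, c i * skewOp κ V ((skewOp κ V)^[k] (g' i)) u s := by
          rw [lintegral_finsetSum _ fun i _ => (hmeas i).const_mul _]
          exact Finset.sum_congr rfl fun i _ => lintegral_const_mul' _ _ (hc i)

variable {X : Type*} [MeasurableSpace X] {E : Type*} [NormedAddCommGroup E] [NormedSpace ℝ E]
  {κ : Kernel X X} {A : Set X}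

lemma IsAbsorbing.add_le_two_mul_of_midpoint {V : X → E} (hA : IsAbsorbing κ A)
    (hne : A.Nonempty) {F₁ F₂ F₃ : E → ℝ} {r₁ r₂ r₃ : ℝ}
    (h₁ : HasUniformExpRate (partitionFn κ V F₁) A r₁)
    (h₂ : HasUniformExpRate (partitionFn κ V F₂) A r₂)
    (h₃ : HasUniformExpRate (partitionFn κ V F₃) A r₃)
    (hF : ∀ a b, F₁ a + F₂ b ≤ 2 * F₃ (midpoint ℝ a b)) : r₁ + r₂ ≤ 2 * r₃ := by
  refine le_of_forall_pos_le_add fun ε hε => ?_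
  obtain ⟨u, hu⟩ := hne
  obtain ⟨k₀, hk₀⟩ := eventually_atTop.1 (h₃ (ε / 4) (by positivity))
  obtain ⟨k, hk₁, hk₂, hk, hkk₀⟩ := ((h₁ (ε / 4) (by positivity)).and
    ((h₂ (ε / 4) (by positivity)).and
      ((eventually_gt_atTop 0).and (eventually_ge_atTop k₀)))).exists
  have hk' : (0 : ℝ) < k := by positivity
  have concat (s s' : E) : scaledExp F₁ k s * scaledExp F₂ k s' ≤
      scaledExp F₃ (k + k) (s' + s) := by
    have mid : midpoint ℝ ((k : ℝ)⁻¹ • s) ((k : ℝ)⁻¹ • s') = ((k + k : ℕ) : ℝ)⁻¹ • (s' + s) := by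
      rw [midpoint_eq_smul_add, ← smul_add, smul_smul, add_comm s s', invOf_eq_inv]
      congr 1
      push_cast; field_simp; norm_num
    have := hF ((k : ℝ)⁻¹ • s) ((k : ℝ)⁻¹ • s')
    rw [mid] at this
    rw [scaledExp, scaledExp, scaledExp, ← ennexp_add, ennexp_le_ennexp]
    push_cast at this ⊢
    nlinarith
  have : ennexp (k * (r₂ - ε / 4) + k * (r₁ - ε / 4)) ≤ ennexp ((k + k : ℕ) * (r₃ + ε / 4)) :=
    calc ennexp (k * (r₂ - ε / 4) + k * (r₁ - ε / 4))
        ≤ ennexp (k * (r₂ - ε / 4)) * partitionFn κ V F₁ k u := by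
          rw [ennexp_add]; gcongr; exact (hk₁ u hu).1
      _ ≤ partitionFn κ V F₃ (k + k) u :=
          hA.mul_partitionFn_le (fun v hv => (hk₂ v hv).1) concat hu
      _ ≤ ennexp ((k + k : ℕ) * (r₃ + ε / 4)) := (hk₀ (k + k) (by omega) u hu).2
  rw [ennexp_le_ennexp] at this
  push_cast at this
  exact le_of_mul_le_mul_left (by linarith) hk'

variable [TopologicalSpace X] [OpensMeasurableSpace X] [IsMarkovKernel κ] [MeasurableSpace E]
  [BorelSpace E] [SecondCountableTopology E]

lemma partitionFn_le_sum (V : X →ᵇ E) {ι : Type*} {I : Finset ι} {F : E → ℝ} {F' : ι → E → ℝ}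
    (hF' : ∀ i, Continuous (F' i)) {d : ι → ℝ}
    (hcover : ∀ a ∈ Metric.closedBall (0 : E) ‖V‖, ∃ i ∈ I, F a ≤ F' i a + d i) (k : ℕ) (u : X) :
    partitionFn κ V F k u ≤ ∑ i ∈ I, ennexp (k * d i) * partitionFn κ V (F' i) k u := by
  refine skewOp_iterate_le_sum V (r := 0) (g' := fun i _ => scaledExp (F' i) k)
    (fun i => ennexp_ne_top _)
    (fun i => (measurable_scaledExp (hF' i) k).comp measurable_snd) k (fun _ s hs => ?_) u (by simp)
  obtain ⟨i, hi, hle⟩ := hcover ((k : ℝ)⁻¹ • s) <| by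
    rw [mem_closedBall_zero_iff, norm_smul, norm_inv, Real.norm_natCast]
    exact inv_mul_le_of_le_mul₀ (by positivity) (by positivity) (by linarith)
  calc scaledExp F k s ≤ ennexp (k * d i) * scaledExp (F' i) k s := by
        rw [scaledExp, scaledExp, ← ennexp_add, ← mul_add, add_comm (d i)]; gcongr
    _ ≤ ∑ i ∈ I, ennexp (k * d i) * scaledExp (F' i) k s :=
        Finset.single_le_sum (f := fun i => ennexp (k * d i) * scaledExp (F' i) k s)
          (fun _ _ => zero_le) hi

lemma HasUniformExpRate.le_add_of_le (hne : A.Nonempty) {V : X →ᵇ E} {F F' : E → ℝ}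
    (hF' : Continuous F') {r r' d : ℝ} (h : HasUniformExpRate (partitionFn κ V F) A r)
    (h' : HasUniformExpRate (partitionFn κ V F') A r') (hle : ∀ a, F a ≤ F' a + d) :
    r ≤ r' + d :=
  h.le_of_le_sum hne (I := {()}) (g := fun _ => partitionFn κ V F') (fun _ _ => h')
    (partitionFn_le_sum V (fun _ => hF') fun a _ => ⟨(), by simp, hle a⟩) fun _ _ => le_rfl

end Rates

section Cone

variable {E : Type*} [NormedAddCommGroup E]

/-- The concave function `-t ‖· - x‖`, which as `t → ∞` forces the mean to be close to `x`. -/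
def cone (t : ℝ≥0) (x : E) (a : E) : ℝ := -(t * ‖a - x‖)

lemma lipschitzWith_cone (t : ℝ≥0) (x : E) : LipschitzWith t (cone t x) := by
  refine LipschitzWith.of_le_add_mul t fun a b => ?_
  have : ‖b - x‖ ≤ ‖b - a‖ + ‖a - x‖ := norm_sub_le_norm_sub_add_norm_sub b a x
  rw [cone, cone, dist_eq_norm, norm_sub_rev a b]
  nlinarith [t.coe_nonneg]

lemma cone_le_cone_add (t : ℝ≥0) (x y a : E) : cone t x a ≤ cone t y a + t * ‖x - y‖ := by
  have : ‖a - y‖ ≤ ‖a - x‖ + ‖x - y‖ := norm_sub_le_norm_sub_add_norm_sub a x y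
  rw [cone, cone]
  nlinarith [t.coe_nonneg]

variable [NormedSpace ℝ E]

lemma concaveOn_cone (t : ℝ≥0) (x : E) : ConcaveOn ℝ Set.univ (cone t x) := by
  have := ((convexOn_univ_norm (E := E)).translate_left (-x)).smul t.coe_nonneg
  exact this.neg.congr fun a _ => by simp [cone, sub_eq_add_neg]

lemma cone_add_cone_le (t : ℝ≥0) (x y a b : E) :
    cone t x a + cone t y b ≤ 2 * cone t (midpoint ℝ x y) (midpoint ℝ a b) := by
  have : ‖midpoint ℝ a b - midpoint ℝ x y‖ ≤ (‖a - x‖ + ‖b - y‖) / 2 := by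
    simp only [← dist_eq_norm]
    exact (dist_midpoint_midpoint_le a b x y).trans_eq (by norm_num)
  simp only [cone]
  nlinarith [t.coe_nonneg]

variable {X : Type*} [MeasurableSpace X] {κ : Kernel X X} {A : Set X} [IsMarkovKernel κ]
  [MeasurableSpace E] [BorelSpace E] [SecondCountableTopology E] {Λ : ℝ≥0 → E → ℝ}

section Hypograph

variable [TopologicalSpace X] [OpensMeasurableSpace X] {V : X →ᵇ E}

lemma le_add_mul_of_hasUniformExpRate_cone (hne : A.Nonempty)
    (hΛ : ∀ t x, HasUniformExpRate (partitionFn κ V (cone t x)) A (Λ t x)) (t : ℝ≥0) (x y : E) :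
    Λ t x ≤ Λ t y + t * ‖x - y‖ :=
  (hΛ t x).le_add_of_le hne (lipschitzWith_cone t y).continuous (hΛ t y) (cone_le_cone_add t x y)

lemma IsAbsorbing.convex_hypograph_coneRate (hA : IsAbsorbing κ A) (hne : A.Nonempty)
    (hΛ : ∀ t x, HasUniformExpRate (partitionFn κ V (cone t x)) A (Λ t x)) :
    Convex ℝ {p : E × ℝ | ∀ t, p.2 ≤ Λ t p.1} := by
  have hcont (t : ℝ≥0) : Continuous (Λ t) :=
    (LipschitzWith.of_le_add_mul t fun x y => by
      rw [dist_eq_norm]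
      exact le_add_mul_of_hasUniformExpRate_cone hne hΛ t x y).continuous
  refine convex_of_isClosed_of_midpoint_mem ?_ fun p hp q hq t => ?_
  · rw [Set.ofPred_forall]
    exact isClosed_iInter fun t => isClosed_le continuous_snd ((hcont t).comp continuous_fst)
  · have := hA.add_le_two_mul_of_midpoint hne (hΛ t p.1) (hΛ t q.1)
      (hΛ t (midpoint ℝ p.1 q.1)) (cone_add_cone_le t p.1 q.1)
    have hpt := hp t
    have hqt := hq t
    simp only [midpoint_eq_smul_add, invOf_eq_inv, Prod.smul_snd, Prod.snd_add, smul_eq_mul,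
      Prod.smul_fst, Prod.fst_add] at this ⊢
    linarith

-- The means `k⁻¹ (V(u_1) + ⋯ + V(u_k))` stay in a compact ball, which is covered by finitely many
-- balls so small that `l` is nearly constant on each of them.
lemma HasUniformExpRate.le_of_hypograph_coneRate [FiniteDimensional ℝ E] (hne : A.Nonempty)
    (hΛ : ∀ t x, HasUniformExpRate (partitionFn κ V (cone t x)) A (Λ t x)) {l : E →L[ℝ] ℝ}
    {q m : ℝ} (hq : HasUniformExpRate (partitionFn κ V l) A q)
    (h : ∀ x r, (∀ t, r ≤ Λ t x) → l x + r ≤ m) : q ≤ m := by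
  refine le_of_forall_pos_le_add fun ε hε => ?_
  have (x : E) : ∃ t, Λ t x < m - l x + ε / 3 := by
    by_contra! hx
    linarith [h x _ hx]
  choose t ht using this
  have : ProperSpace E := FiniteDimensional.proper ℝ E
  obtain ⟨I, -, hI⟩ := (isCompact_closedBall (0 : E) ‖V‖).elim_nhds_subcover
    (fun x => {a | l a < l x + ε / 3} ∩ {a | t x * ‖a - x‖ < ε / 3}) fun x _ =>
      ((isOpen_lt (by fun_prop) (by fun_prop)).inter
        (isOpen_lt (by fun_prop) (by fun_prop))).mem_nhds
        ⟨by simpa using hε, by simpa using hε⟩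
  refine hq.le_of_le_sum hne (I := I) (g := fun x => partitionFn κ V (cone (t x) x))
    (fun x _ => hΛ (t x) x) (d := fun x => l x + 2 * (ε / 3))
    (partitionFn_le_sum V (fun x => (lipschitzWith_cone (t x) x).continuous) fun a ha => ?_)
    fun x _ => by linarith [ht x]
  obtain ⟨x, hxI, hla, hta⟩ := Set.mem_iUnion₂.1 (hI ha)
  refine ⟨x, hxI, ?_⟩
  rw [cone]
  rw [Set.mem_ofPred_eq] at hla hta
  linarith

end Hypograph

theorem IsMixingOn.neg_le_coneRate [PseudoMetricSpace X] [OpensMeasurableSpace X]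
    [FiniteDimensional ℝ E] (hκ : IsMixingOn κ A) (V : X →ᵇ E) {x : E} {c : ℝ}
    (hc : ∀ l : E →L[ℝ] ℝ, ∀ q, HasUniformExpRate (partitionFn κ V l) A q → l x - c ≤ q)
    {t : ℝ≥0} {r : ℝ} (hr : HasUniformExpRate (partitionFn κ V (cone t x)) A r) : -c ≤ r := by
  choose Λ hΛ using fun (t : ℝ≥0) (x : E) =>
    hκ.exists_hasUniformExpRate_partitionFn V (lipschitzWith_cone t x) (concaveOn_cone t x)
  have hlin (l : E →L[ℝ] ℝ) : ∃ q, HasUniformExpRate (partitionFn κ V l) A q :=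
    hκ.exists_hasUniformExpRate_partitionFn V l.lipschitz (l.toLinearMap.concaveOn convex_univ)
  have hne : {p : E × ℝ | ∀ t, p.2 ≤ Λ t p.1}.Nonempty := by
    by_contra hempty
    obtain ⟨q, hq⟩ := hlin 0
    have := hq.le_of_hypograph_coneRate hκ.nonempty hΛ (m := q - 1)
      fun x r hxr => (hempty ⟨(x, r), hxr⟩).elim
    linarith
  have hr_eq : Λ t x ≤ r + 0 := (hΛ t x).le_add_of_le hκ.nonempty
    (lipschitzWith_cone t x).continuous hr fun a => (add_zero _).ge
  have hconvex : ConvexOn ℝ Set.univ fun y => Λ t x + t * ‖y - x‖ := by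
    exact ((concaveOn_cone t x).neg.add_const (Λ t x)).congr fun y _ => by simp [cone, add_comm]
  obtain ⟨l, w, hle, hge⟩ := exists_affine_between
    (hκ.isAbsorbing.convex_hypograph_coneRate hκ.nonempty hΛ) hne hconvex (by fun_prop)
    fun p hp => (hp t).trans (le_add_mul_of_hasUniformExpRate_cone hκ.nonempty hΛ t p.1 x)
  obtain ⟨q, hq⟩ := hlin (-l)
  have hqw : q ≤ w := hq.le_of_hypograph_coneRate hκ.nonempty hΛ fun y r hyr => by
    have := hle (y, r) hyr
    simp only [_root_.neg_apply] at this ⊢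
    linarith
  have hcq := hc (-l) q hq
  have hgx := hge x
  simp only [_root_.neg_apply, sub_self, norm_zero, mul_zero] at hcq hgx
  linarith

end Cone

section MarkovChain

/-- The sum `V(u_1) + ⋯ + V(u_k)` along the process `u`. -/
def orbitSum {X Ω E : Type*} [AddCommMonoid E] (u : ℕ → Ω → X) (V : X → E) (k : ℕ) (ω : Ω) : E :=
  ∑ n ∈ Finset.Icc 1 k, V (u n ω)

variable {X : Type*} [MeasurableSpace X] {Ω : Type*} [MeasurableSpace Ω] {P : Measure Ω}
  {κ : Kernel X X} {u : ℕ → Ω → X} {A : Set X}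

/-- The process `u` is a Markov chain with transition kernel `κ`: conditionally on
`(u_0, …, u_k)`, the law of `u_{k+1}` is `κ u_k`. The history up to time `k` is encoded as the
stopped sequence `n ↦ u_{min n k}`. -/
structure IsMarkovChain (P : Measure Ω) (κ : Kernel X X) (u : ℕ → Ω → X) : Prop where
  measurable : ∀ k, Measurable (u k)
  map_history_next : ∀ k, P.map (fun ω => ((fun n => u (min n k) ω : ℕ → X), u (k + 1) ω)) =
    P.map (fun ω n => u (min n k) ω) ⊗ₘ κ.comap (fun x : ℕ → X => x k) (measurable_pi_apply k)

variable [IsProbabilityMeasure P] [IsMarkovKernel κ]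

lemma IsMarkovChain.lintegral_history_next (hu : IsMarkovChain P κ u) (k : ℕ)
    {f : (ℕ → X) → X → ℝ≥0∞} (hf : Measurable (Function.uncurry f)) :
    ∫⁻ ω, f (fun n => u (min n k) ω) (u (k + 1) ω) ∂P =
      ∫⁻ ω, ∫⁻ x, f (fun n => u (min n k) ω) x ∂κ (u k ω) ∂P := by
  have hhist : Measurable fun ω n => u (min n k) ω :=
    measurable_pi_lambda _ fun n => hu.measurable _
  have : IsProbabilityMeasure (P.map fun ω n => u (min n k) ω) :=
    Measure.isProbabilityMeasure_map hhist.aemeasurable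
  calc ∫⁻ ω, f (fun n => u (min n k) ω) (u (k + 1) ω) ∂P
      = ∫⁻ q, Function.uncurry f q
          ∂P.map (fun ω => ((fun n => u (min n k) ω : ℕ → X), u (k + 1) ω)) :=
        (lintegral_map hf (hhist.prodMk (hu.measurable _))).symm
    _ = ∫⁻ ω, ∫⁻ x, f (fun n => u (min n k) ω) x ∂κ (u k ω) ∂P := by
        rw [hu.map_history_next, Measure.lintegral_compProd hf,
          lintegral_map hf.lintegral_kernel_prod_right' hhist]
        simp only [Kernel.comap_apply, min_self, Function.uncurry]

lemma IsMarkovChain.ae_forall_mem (hu : IsMarkovChain P κ u) (hA : IsAbsorbing κ A)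
    (hAm : MeasurableSet A) (h₀ : ∀ᵐ ω ∂P, u 0 ω ∈ A) : ∀ᵐ ω ∂P, ∀ n, u n ω ∈ A := by
  refine ae_all_iff.2 fun n => ?_
  induction n with
  | zero => exact h₀
  | succ n ih =>
    have hind : Measurable (Aᶜ.indicator (1 : X → ℝ≥0∞)) := measurable_one.indicator hAm.compl
    have hzero : ∫⁻ ω, Aᶜ.indicator 1 (u (n + 1) ω) ∂P = 0 := by
      rw [hu.lintegral_history_next n (f := fun _ => Aᶜ.indicator 1) (hind.comp measurable_snd)]
      refine lintegral_eq_zero_of_ae_eq_zero ?_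
      filter_upwards [ih] with ω hω
      rw [lintegral_indicator_one hAm.compl]
      exact hA _ hω
    filter_upwards [(lintegral_eq_zero_iff (hind.comp (hu.measurable _))).1 hzero] with ω hω
    by_contra hmem
    simp [hmem] at hω

lemma measurable_orbitSum {E : Type*} [AddCommMonoid E] [MeasurableSpace E] [MeasurableAdd₂ E]
    {V : X → E} (hV : Measurable V) (hu : ∀ n, Measurable (u n)) (k : ℕ) :
    Measurable (orbitSum u V k) :=
  Finset.measurable_sum _ fun n _ => hV.comp (hu n)

lemma IsMarkovChain.lintegral_orbitSum {E : Type*} [AddCommMonoid E] [MeasurableSpace E]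
    [MeasurableAdd₂ E] (hu : IsMarkovChain P κ u) {V : X → E} (hV : Measurable V)
    {g : X → E → ℝ≥0∞} (hg : Measurable (Function.uncurry g)) (k : ℕ) :
    ∫⁻ ω, g (u k ω) (orbitSum u V k ω) ∂P = ∫⁻ ω, (skewOp κ V)^[k] g (u 0 ω) 0 ∂P := by
  induction k generalizing g with
  | zero => simp [orbitSum]
  | succ k ih =>
    have hsum (ω : Ω) : ∑ n ∈ Finset.Icc 1 k, V (u (min n k) ω) = orbitSum u V k ω :=
      Finset.sum_congr rfl fun n hn => by rw [min_eq_left (Finset.mem_Icc.1 hn).2]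
    have hmeas : Measurable (Function.uncurry fun (x : ℕ → X) y =>
        g y (∑ n ∈ Finset.Icc 1 k, V (x n) + V y)) :=
      hg.comp (measurable_snd.prodMk (by fun_prop))
    calc ∫⁻ ω, g (u (k + 1) ω) (orbitSum u V (k + 1) ω) ∂P
        = ∫⁻ ω, g (u (k + 1) ω)
            (∑ n ∈ Finset.Icc 1 k, V (u (min n k) ω) + V (u (k + 1) ω)) ∂P := by
          simp only [hsum, orbitSum, Finset.sum_Icc_succ_top (Nat.le_add_left 1 k)]
      _ = ∫⁻ ω, skewOp κ V g (u k ω) (orbitSum u V k ω) ∂P := by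
          rw [hu.lintegral_history_next k hmeas]
          simp only [hsum, skewOp]
      _ = ∫⁻ ω, (skewOp κ V)^[k + 1] g (u 0 ω) 0 ∂P := by
          rw [ih (measurable_skewOp hV hg), Function.iterate_succ_apply]

lemma IsMarkovChain.hasExpRate_lintegral_scaledExp {E : Type*} [NormedAddCommGroup E]
    [NormedSpace ℝ E] [MeasurableSpace E] [BorelSpace E] [SecondCountableTopology E]
    (hu : IsMarkovChain P κ u) (h₀ : ∀ᵐ ω ∂P, u 0 ω ∈ A) {V : X → E} (hV : Measurable V)
    {F : E → ℝ} (hF : Continuous F) {r : ℝ} (hr : HasUniformExpRate (partitionFn κ V F) A r) :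
    HasExpRate (fun k => ∫⁻ ω, scaledExp F k (orbitSum u V k ω) ∂P) r := by
  intro ε hε
  filter_upwards [hr ε hε] with k hk
  have hmarkov : ∫⁻ ω, scaledExp F k (orbitSum u V k ω) ∂P = ∫⁻ ω, partitionFn κ V F k (u 0 ω) ∂P :=
    hu.lintegral_orbitSum hV (g := fun _ => scaledExp F k)
      ((measurable_scaledExp hF k).comp measurable_snd) k
  have hconst (c : ℝ≥0∞) : ∫⁻ _, c ∂P = c := by simp
  rw [hmarkov, ← hconst (ennexp (k * (r - ε))), ← hconst (ennexp (k * (r + ε)))]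
  exact ⟨lintegral_mono_ae <| h₀.mono fun ω hω => (hk _ hω).1,
    lintegral_mono_ae <| h₀.mono fun ω hω => (hk _ hω).2⟩

end MarkovChain

section Pressure

lemma hasExpRate_ennexp (c : ℝ) : HasExpRate (fun k => ennexp (k * c)) c := fun ε hε =>
  .of_forall fun k => ⟨ennexp_mono (by gcongr; linarith), ennexp_mono (by gcongr; linarith)⟩

lemma HasExpRate.le_add_of_le {a b : ℕ → ℝ≥0∞} {q r d : ℝ} (ha : HasExpRate a q)
    (hb : HasExpRate b r) (hab : ∀ k : ℕ, a k ≤ ennexp (k * d) * b k) : q ≤ r + d := by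
  refine le_of_forall_pos_le_add fun ε hε => ?_
  obtain ⟨k, hak, hbk, hk⟩ := ((ha (ε / 2) (half_pos hε)).and
    ((hb (ε / 2) (half_pos hε)).and (eventually_gt_atTop 0))).exists
  have : ennexp (k * (q - ε / 2)) ≤ ennexp (k * (d + (r + ε / 2))) :=
    calc ennexp (k * (q - ε / 2)) ≤ ennexp (k * d) * b k := hak.1.trans (hab k)
      _ ≤ ennexp (k * d) * ennexp (k * (r + ε / 2)) := by gcongr; exact hbk.2
      _ = ennexp (k * (d + (r + ε / 2))) := by rw [← ennexp_add, ← mul_add]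
  rw [ennexp_le_ennexp] at this
  have := le_of_mul_le_mul_left this (by positivity)
  linarith

lemma HasExpRate.tendsto_log_toReal {a : ℕ → ℝ≥0∞} {r : ℝ} (ha : HasExpRate a r) :
    Tendsto (fun k : ℕ => (k : ℝ)⁻¹ * Real.log (a k).toReal) atTop (𝓝 r) := by
  refine Metric.tendsto_nhds.2 fun ε hε => ?_
  filter_upwards [ha (ε / 2) (half_pos hε), eventually_gt_atTop 0] with k hk hk₀
  rw [← ennexp_log_toReal ((ennexp_pos _).trans_le hk.1).ne'
    (ne_top_of_le_ne_top (ennexp_ne_top _) hk.2), ennexp_le_ennexp, ennexp_le_ennexp] at hk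
  have hlower := (le_inv_mul_iff₀ (by positivity)).2 hk.1
  have hupper := (inv_mul_le_iff₀ (by positivity)).2 hk.2
  rw [Real.dist_eq, abs_lt]
  constructor <;> linarith

lemma ennexp_rpow (x y : ℝ) : ennexp x ^ y = ennexp (y * x) := by
  rw [ennexp, ENNReal.ofReal_rpow_of_pos (Real.exp_pos _), ← Real.exp_mul, mul_comm, ennexp]

lemma HasExpRate.le_of_le_rpow_mul_rpow {a b c : ℕ → ℝ≥0∞} {p q r x y : ℝ} (ha : HasExpRate a p)
    (hb : HasExpRate b q) (hc : HasExpRate c r) (hx : 0 ≤ x) (hy : 0 ≤ y) (hxy : x + y = 1)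
    (h : ∀ k, c k ≤ a k ^ x * b k ^ y) : r ≤ x * p + y * q := by
  refine le_of_forall_pos_le_add fun ε hε => ?_
  obtain ⟨k, hak, hbk, hck, hk⟩ := ((ha (ε / 2) (half_pos hε)).and
    ((hb (ε / 2) (half_pos hε)).and
      ((hc (ε / 2) (half_pos hε)).and (eventually_gt_atTop 0)))).exists
  have : ennexp (k * (r - ε / 2)) ≤ ennexp (k * (x * p + y * q + (x + y) * (ε / 2))) :=
    calc ennexp (k * (r - ε / 2)) ≤ a k ^ x * b k ^ y := hck.1.trans (h k)
      _ ≤ ennexp (k * (p + ε / 2)) ^ x * ennexp (k * (q + ε / 2)) ^ y := by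
          gcongr
          exacts [hak.2, hbk.2]
      _ = ennexp (k * (x * p + y * q + (x + y) * (ε / 2))) := by
          rw [ennexp_rpow, ennexp_rpow, ← ennexp_add]; ring_nf
  rw [ennexp_le_ennexp, hxy] at this
  have := le_of_mul_le_mul_left this (by positivity)
  linarith

variable {X : Type*} [TopologicalSpace X] {Ω : Type*} [MeasurableSpace Ω]
  {P : Measure Ω} {u : ℕ → Ω → X} {A : Set X} {Q : (X →ᵇ ℝ) → ℝ}

/-- `Q` is the pressure of the process `u`:
`Q(V) = lim k⁻¹ log 𝔼 exp (V(u_1) + ⋯ + V(u_k))` for every potential `V`. -/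
def HasPressure (P : Measure Ω) (u : ℕ → Ω → X) (Q : (X →ᵇ ℝ) → ℝ) : Prop :=
  ∀ V : X →ᵇ ℝ, HasExpRate (fun k => ∫⁻ ω, ennexp (orbitSum u V k ω) ∂P) (Q V)

namespace HasPressure

lemma le_add_of_le (hQ : HasPressure P u Q) (hA : ∀ᵐ ω ∂P, ∀ n, u n ω ∈ A) {V V' : X →ᵇ ℝ} {d : ℝ}
    (h : ∀ x ∈ A, V x ≤ V' x + d) : Q V ≤ Q V' + d := by
  refine (hQ V).le_add_of_le (hQ V') fun k => ?_
  rw [← lintegral_const_mul' _ _ (ennexp_ne_top _)]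
  refine lintegral_mono_ae <| hA.mono fun ω hω => ?_
  rw [← ennexp_add, ennexp_le_ennexp]
  calc orbitSum u V k ω ≤ ∑ n ∈ Finset.Icc 1 k, (V' (u n ω) + d) :=
        Finset.sum_le_sum fun n _ => h _ (hω n)
    _ = k * d + orbitSum u V' k ω := by
        rw [Finset.sum_add_distrib, orbitSum, add_comm]; simp

lemma abs_sub_le (hQ : HasPressure P u Q) (hA : ∀ᵐ ω ∂P, ∀ n, u n ω ∈ A) (V₁ V₂ : X →ᵇ ℝ) :
    |Q V₁ - Q V₂| ≤ ⨆ x : A, |V₁ x - V₂ x| := by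
  have hbdd : BddAbove (Set.range fun x : A => |V₁ x - V₂ x|) :=
    ⟨dist V₁ V₂, Set.forall_mem_range.2 fun x => V₁.dist_coe_le_dist (g := V₂) x⟩
  have hle (x) (hx : x ∈ A) := abs_le.1 (le_ciSup hbdd ⟨x, hx⟩)
  refine abs_sub_le_iff.2 ⟨?_, ?_⟩
  · exact sub_le_iff_le_add'.2 <| hQ.le_add_of_le hA fun x hx => by linarith [(hle x hx).2]
  · exact sub_le_iff_le_add'.2 <| hQ.le_add_of_le hA fun x hx => by linarith [(hle x hx).1]

lemma apply_const [IsProbabilityMeasure P] (hQ : HasPressure P u Q) (c : ℝ) :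
    Q (BoundedContinuousFunction.const X c) = c := by
  have hconst (k : ℕ) :
      ∫⁻ ω, ennexp (orbitSum u (BoundedContinuousFunction.const X c) k ω) ∂P = ennexp (k * c) := by
    simp [orbitSum]
  have h := hQ (BoundedContinuousFunction.const X c)
  simp only [hconst] at h
  apply le_antisymm
  · simpa using h.le_add_of_le (hasExpRate_ennexp c) (d := 0) (by simp)
  · simpa using (hasExpRate_ennexp c).le_add_of_le h (d := 0) (by simp)

variable [MeasurableSpace X] [OpensMeasurableSpace X]

lemma convexOn (hQ : HasPressure P u Q) (hu : ∀ n, Measurable (u n)) :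
    ConvexOn ℝ Set.univ Q := by
  refine ⟨convex_univ, fun V _ V' _ a c ha hc hac => ?_⟩
  refine (hQ V).le_of_le_rpow_mul_rpow (hQ V') (hQ (a • V + c • V')) ha hc hac fun k => ?_
  have hmeas (V : X →ᵇ ℝ) : Measurable fun ω => ennexp (orbitSum u V k ω) :=
    measurable_ennexp.comp (measurable_orbitSum V.continuous.measurable hu k)
  have hsum (ω : Ω) : ennexp (orbitSum u (a • V + c • V') k ω) =
      ennexp (orbitSum u V k ω) ^ a * ennexp (orbitSum u V' k ω) ^ c := by
    simp [ennexp_rpow, ← ennexp_add, orbitSum, Finset.sum_add_distrib, Finset.mul_sum]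
  exact (lintegral_congr hsum).trans_le <|
    ENNReal.lintegral_mul_norm_pow_le (hmeas V).aemeasurable (hmeas V').aemeasurable ha hc hac

lemma tendsto_log_integral (hQ : HasPressure P u Q) (hu : ∀ n, Measurable (u n)) (V : X →ᵇ ℝ) :
    Tendsto (fun k : ℕ => (k : ℝ)⁻¹ *
        Real.log (∫ ω, Real.exp (∑ n ∈ Finset.Icc 1 k, V (u n ω)) ∂P)) atTop (𝓝 (Q V)) := by
  refine (hQ V).tendsto_log_toReal.congr fun k => ?_
  have hmeas : Measurable fun ω => Real.exp (orbitSum u V k ω) :=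
    Real.measurable_exp.comp (measurable_orbitSum V.continuous.measurable hu k)
  have hint : ∫ ω, Real.exp (orbitSum u V k ω) ∂P = (∫⁻ ω, ennexp (orbitSum u V k ω) ∂P).toReal :=
    integral_eq_lintegral_of_nonneg_ae (.of_forall fun ω => (Real.exp_pos _).le)
      hmeas.aestronglyMeasurable
  rw [← hint]
  rfl

end HasPressure

end Pressure

section LogScale

lemma eventually_natCast_mul_ennexp_le (N : ℕ) {x y : ℝ} (hxy : x < y) :
    ∀ᶠ k : ℕ in atTop, N * ennexp (k * x) ≤ ennexp (k * y) := by
  have hN : ∀ᶠ k : ℕ in atTop, (N : ℝ) ≤ (y - x) * k :=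
    (tendsto_natCast_atTop_atTop.const_mul_atTop (sub_pos.2 hxy)).eventually_ge_atTop _
  filter_upwards [hN] with k hk
  calc N * ennexp (k * x) ≤ ennexp N * ennexp (k * x) := by gcongr; exact natCast_le_ennexp N
    _ ≤ ennexp (k * y) := by rw [← ennexp_add, ennexp_le_ennexp]; linarith

lemma inv_mul_log_ennexp {k : ℕ} (hk : 0 < k) (x : ℝ) :
    (((k : ℝ)⁻¹ : ℝ) : EReal) * ENNReal.log (ennexp (k * x)) = x := by
  rw [ennexp, ENNReal.log_ofReal_of_pos (Real.exp_pos _), Real.log_exp, ← EReal.coe_mul,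
    inv_mul_cancel_left₀ (by positivity)]

lemma inv_mul_log_mono (k : ℕ) : Monotone fun a : ℝ≥0∞ =>
    (((k : ℝ)⁻¹ : ℝ) : EReal) * ENNReal.log a := fun _ _ h =>
  mul_le_mul_of_nonneg_left (ENNReal.log_le_log h) (EReal.coe_nonneg.2 (by positivity))

lemma limsup_inv_mul_log_le {a : ℕ → ℝ≥0∞} {x : ℝ}
    (h : ∀ᶠ k : ℕ in atTop, a k ≤ ennexp (k * x)) :
    limsup (fun k : ℕ => (((k : ℝ)⁻¹ : ℝ) : EReal) * ENNReal.log (a k)) atTop ≤ x := by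
  refine limsup_le_of_le (h := ?_)
  filter_upwards [h, eventually_gt_atTop 0] with k hk hk₀
  exact (inv_mul_log_mono k hk).trans_eq (inv_mul_log_ennexp hk₀ x)

lemma le_liminf_inv_mul_log {a : ℕ → ℝ≥0∞} {x : ℝ}
    (h : ∀ᶠ k : ℕ in atTop, ennexp (k * x) ≤ a k) :
    x ≤ liminf (fun k : ℕ => (((k : ℝ)⁻¹ : ℝ) : EReal) * ENNReal.log (a k)) atTop := by
  refine le_liminf_of_le (h := ?_)
  filter_upwards [h, eventually_gt_atTop 0] with k hk hk₀
  exact (inv_mul_log_ennexp hk₀ x).symm.trans_le (inv_mul_log_mono k hk)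

end LogScale

section OccupationMeasure

variable {X : Type*} [MeasurableSpace X]

lemma coe_occ (x : ℕ → X) {k : ℕ} (hk : k ≠ 0) :
    (occ x k : Measure X) = (k : ℝ≥0∞)⁻¹ • ∑ n ∈ Finset.range k, Measure.dirac (x n) := by
  simp [occ, hk]

lemma integral_occ {E : Type*} [NormedAddCommGroup E] [NormedSpace ℝ E] [CompleteSpace E]
    {f : X → E} (hf : StronglyMeasurable f) (x : ℕ → X) {k : ℕ} (hk : k ≠ 0) :
    ∫ y, f y ∂(occ x k : Measure X) = (k : ℝ)⁻¹ • ∑ n ∈ Finset.range k, f (x n) := by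
  rw [coe_occ x hk, integral_smul_measure,
    integral_finsetSum_measure fun n _ => integrable_dirac' hf enorm_lt_top]
  simp only [integral_dirac' f _ hf, ENNReal.toReal_inv, ENNReal.toReal_natCast]

lemma occ_compl_eq_zero {A : Set X} (hA : MeasurableSet A) {x : ℕ → X} (hx : ∀ n, x n ∈ A) {k : ℕ}
    (hk : k ≠ 0) : (occ x k : Measure X) Aᶜ = 0 := by
  simp [coe_occ x hk, Measure.dirac_apply' _ hA.compl, hx]

variable [TopologicalSpace X] [OpensMeasurableSpace X]

lemma norm_integral_occ_sub_orbitSum_le {Ω E : Type*} [NormedAddCommGroup E] [NormedSpace ℝ E]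
    [CompleteSpace E] [SecondCountableTopology E] (W : X →ᵇ E) (u : ℕ → Ω → X) (ω : Ω) {k : ℕ}
    (hk : k ≠ 0) :
    ‖∫ y, W y ∂(occ (fun n => u n ω) k : Measure X) - (k : ℝ)⁻¹ • orbitSum u W k ω‖ ≤
      (k : ℝ)⁻¹ * (2 * ‖W‖) := by
  have hshift : orbitSum u W k ω = ∑ n ∈ Finset.range k, W (u (n + 1) ω) := by
    rw [orbitSum, Finset.range_eq_Ico, Finset.sum_Ico_add' (fun n => W (u n ω)) 0 k 1]
    rfl
  rw [integral_occ W.continuous.stronglyMeasurable _ hk, hshift, ← smul_sub,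
    ← Finset.sum_sub_distrib, Finset.sum_range_sub', norm_smul, norm_inv, RCLike.norm_natCast]
  gcongr
  calc ‖W (u 0 ω) - W (u k ω)‖ ≤ ‖W (u 0 ω)‖ + ‖W (u k ω)‖ := norm_sub_le _ _
    _ ≤ 2 * ‖W‖ := by linarith [W.norm_coe_le_norm (u 0 ω), W.norm_coe_le_norm (u k ω)]

lemma eventually_norm_integral_occ_sub_orbitSum_lt {Ω E : Type*} [NormedAddCommGroup E]
    [NormedSpace ℝ E] [CompleteSpace E] [SecondCountableTopology E] (W : X →ᵇ E) (u : ℕ → Ω → X)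
    {ε : ℝ} (hε : 0 < ε) : ∀ᶠ k : ℕ in atTop, ∀ ω,
      ‖∫ y, W y ∂(occ (fun n => u n ω) k : Measure X) - (k : ℝ)⁻¹ • orbitSum u W k ω‖ < ε := by
  have hlim : Tendsto (fun k : ℕ => (k : ℝ)⁻¹ * (2 * ‖W‖)) atTop (𝓝 0) := by
    simpa using tendsto_inv_atTop_nhds_zero_nat.mul_const (2 * ‖W‖)
  filter_upwards [hlim.eventually_lt_const hε, eventually_ne_atTop 0] with k hkε hk ω
  exact (norm_integral_occ_sub_orbitSum_le W u ω hk).trans_lt hkε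

lemma isCompact_closure_setOf_compl_eq_zero {X : Type*} [TopologicalSpace X] [T2Space X]
    [MeasurableSpace X] [BorelSpace X] {A : Set X} (hA : IsCompact A) :
    IsCompact (closure {σ : ProbabilityMeasure X | (σ : Measure X) Aᶜ = 0}) := by
  refine isCompact_closure_of_isTightMeasureSet <|
    isTightMeasureSet_iff_exists_isCompact_measure_compl_le.2 fun ε _ => ⟨A, hA, ?_⟩
  rintro _ ⟨σ, hσ, rfl⟩
  exact (show (σ : Measure X) Aᶜ = 0 from hσ).trans_le zero_le

lemma exists_integral_mem_nhds_subset {σ : ProbabilityMeasure X} {G : Set (ProbabilityMeasure X)}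
    (hG : G ∈ 𝓝 σ) :
    ∃ (s : Finset (X →ᵇ ℝ)) (W : X →ᵇ (s → ℝ)), ∃ ε > 0, ∀ τ : ProbabilityMeasure X,
      ‖∫ x, W x ∂(τ : Measure X) - ∫ x, W x ∂(σ : Measure X)‖ < ε → τ ∈ G := by
  set Φ : ProbabilityMeasure X → (X →ᵇ ℝ) → ℝ := fun τ V => ∫ x, V x ∂(τ : Measure X)
  have hΦ : comap Φ (𝓝 (Φ σ)) ≤ 𝓝 σ :=
    tendsto_id'.1 <| ProbabilityMeasure.tendsto_iff_forall_integral_tendsto.2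
      (tendsto_pi_nhds.1 tendsto_comap)
  obtain ⟨U, hU, hUG⟩ := mem_comap.1 (hΦ hG)
  rw [nhds_pi, Filter.mem_pi'] at hU
  obtain ⟨s, t, ht, htU⟩ := hU
  have hball : ∀ᶠ ε : ℝ in 𝓝[>] 0, ∀ V ∈ s, Metric.ball (Φ σ V) ε ⊆ t V :=
    (Filter.eventually_all_finset s).2 fun V _ => by
      obtain ⟨ε, hε, h⟩ := Metric.mem_nhds_iff.1 (ht V)
      filter_upwards [Ioo_mem_nhdsGT hε] with δ hδ
      exact (Metric.ball_subset_ball hδ.2.le).trans h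
  obtain ⟨ε, hεs, hε⟩ := (hball.and self_mem_nhdsWithin).exists
  let W : X →ᵇ (s → ℝ) := .ofNormedAddCommGroup (fun x V => V.1 x) (by fun_prop)
    (∑ V ∈ s, ‖V‖) fun x => (pi_norm_le_iff_of_nonneg (by positivity)).2 fun V =>
      (V.1.norm_coe_le_norm x).trans
        (Finset.single_le_sum (f := fun V : X →ᵇ ℝ => ‖V‖) (fun _ _ => norm_nonneg _) V.2)
  have hW (τ : ProbabilityMeasure X) (V : s) : (∫ x, W x ∂(τ : Measure X)) V = Φ τ V :=
    eval_integral (fun V : s => V.1.integrable _) V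
  refine ⟨s, W, ε, hε, fun τ hτ => hUG (htU fun V hV => hεs V hV ?_)⟩
  have := (norm_le_pi_norm _ ⟨V, hV⟩).trans_lt hτ
  rwa [Pi.sub_apply, hW, hW] at this

end OccupationMeasure

section RateFunction

variable {X : Type*} [MeasurableSpace X]

/-- The Legendre transform `I(σ) = sup_V (⟨V, σ⟩ - Q(V))` of `Q`. Potentials with
`⟨V, σ⟩ < Q(V)` contribute `0`, which changes nothing as soon as `Q(0) = 0`. -/
def rateFn [TopologicalSpace X] (Q : (X →ᵇ ℝ) → ℝ) (σ : ProbabilityMeasure X) : ℝ≥0∞ :=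
  ⨆ V : X →ᵇ ℝ, ENNReal.ofReal ((∫ x, V x ∂(σ : Measure X)) - Q V)

lemma lowerSemicontinuous_rateFn [TopologicalSpace X] [OpensMeasurableSpace X]
    (Q : (X →ᵇ ℝ) → ℝ) : LowerSemicontinuous (rateFn Q) :=
  lowerSemicontinuous_iSup fun V => Continuous.lowerSemicontinuous <|
    ENNReal.continuous_ofReal.comp <|
      (ProbabilityMeasure.continuous_integral_boundedContinuousFunction V).sub continuous_const

lemma integral_sub_le_rateFn_toReal [TopologicalSpace X] {Q : (X →ᵇ ℝ) → ℝ}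
    {σ : ProbabilityMeasure X} (h : rateFn Q σ ≠ ⊤) (V : X →ᵇ ℝ) :
    (∫ x, V x ∂(σ : Measure X)) - Q V ≤ (rateFn Q σ).toReal :=
  (ENNReal.ofReal_le_iff_le_toReal h).1 <|
    le_iSup (fun V : X →ᵇ ℝ => ENNReal.ofReal ((∫ x, V x ∂(σ : Measure X)) - Q V)) V

lemma exists_lt_integral_sub [TopologicalSpace X] {Q : (X →ᵇ ℝ) → ℝ} (hQ₀ : Q 0 = 0)
    {σ : ProbabilityMeasure X} {c : ℝ} (h : (c : EReal) < rateFn Q σ) :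
    ∃ V : X →ᵇ ℝ, c < (∫ x, V x ∂(σ : Measure X)) - Q V := by
  rcases lt_or_ge c 0 with hc | hc
  · exact ⟨0, by simpa [hQ₀] using hc⟩
  · have hlt : ENNReal.ofReal c < rateFn Q σ := by
      rwa [← EReal.coe_ennreal_lt_coe_ennreal_iff, EReal.coe_ennreal_ofReal, max_eq_left hc]
    obtain ⟨V, hV⟩ := lt_iSup_iff.1 hlt
    exact ⟨V, (ENNReal.ofReal_lt_ofReal_iff_of_nonneg hc).1 hV⟩

variable [PseudoMetricSpace X] [OpensMeasurableSpace X] {A : Set X} {Q : (X →ᵇ ℝ) → ℝ}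

-- Test the rate function on large multiples of a potential that vanishes exactly on `A`.
lemma compl_eq_zero_of_rateFn_ne_top (hA : IsClosed A) (hne : A.Nonempty)
    (hQ : ∀ V : X →ᵇ ℝ, (∀ x ∈ A, V x = 0) → Q V ≤ 0) {σ : ProbabilityMeasure X}
    (h : rateFn Q σ ≠ ⊤) : (σ : Measure X) Aᶜ = 0 := by
  have hnonneg (x : X) : 0 ≤ min 1 (Metric.infDist x A) := le_min zero_le_one Metric.infDist_nonneg
  let D : X →ᵇ ℝ := .ofNormedAddCommGroup (fun x => min 1 (Metric.infDist x A))
    (continuous_const.min (Metric.continuous_infDist_pt A)) 1 fun x => by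
      rw [Real.norm_of_nonneg (hnonneg x)]; exact min_le_left _ _
  have hle (n : ℕ) : n * ∫ x, D x ∂(σ : Measure X) ≤ (rateFn Q σ).toReal := by
    have hvanish : Q ((n : ℝ) • D) ≤ 0 := hQ _ fun x hx => by
      simp [D, Metric.infDist_zero_of_mem hx]
    have := integral_sub_le_rateFn_toReal h ((n : ℝ) • D)
    simp only [BoundedContinuousFunction.coe_smul, smul_eq_mul, integral_const_mul] at this
    linarith
  have hzero : ∫ x, D x ∂(σ : Measure X) = 0 := by
    refine le_antisymm (le_of_not_gt fun hpos => ?_) (integral_nonneg hnonneg)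
    obtain ⟨n, hn⟩ := exists_nat_gt ((rateFn Q σ).toReal / ∫ x, D x ∂(σ : Measure X))
    exact absurd (hle n) (not_le.2 ((div_lt_iff₀ hpos).1 hn))
  have hmem : ∀ᵐ x ∂(σ : Measure X), x ∈ A := by
    filter_upwards [(integral_eq_zero_iff_of_nonneg hnonneg (D.integrable _)).1 hzero] with x hx
    have hmin : min 1 (Metric.infDist x A) = 0 := hx
    rw [hA.mem_iff_infDist_zero hne]
    rcases min_eq_iff.1 hmin with h | h
    · exact absurd h.1 one_ne_zero
    · exact h.1
  exact hmem

lemma goodRate_rateFn [T2Space X] [BorelSpace X] (hA : IsCompact A) (hne : A.Nonempty)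
    (hQ : ∀ V : X →ᵇ ℝ, (∀ x ∈ A, V x = 0) → Q V ≤ 0) : GoodRate (rateFn Q) := by
  refine ⟨lowerSemicontinuous_rateFn Q, fun c hc => ?_⟩
  refine (isCompact_closure_setOf_compl_eq_zero hA).of_isClosed_subset
    ((lowerSemicontinuous_rateFn Q).isClosed_preimage c) fun σ hσ => subset_closure ?_
  exact compl_eq_zero_of_rateFn_ne_top hA.isClosed hne hQ (ne_top_of_le_ne_top hc hσ)

end RateFunction

section UpperBound

variable {X : Type*} [TopologicalSpace X] [MeasurableSpace X] {Ω : Type*}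
  [MeasurableSpace Ω] {P : Measure Ω} {u : ℕ → Ω → X} {Q : (X →ᵇ ℝ) → ℝ} {A : Set X}

namespace HasPressure

lemma eventually_measure_lt_integral_occ_le [OpensMeasurableSpace X] (hQ : HasPressure P u Q)
    (hu : ∀ n, Measurable (u n)) (V : X →ᵇ ℝ) {c d : ℝ} (hcd : c < d) :
    ∀ᶠ k : ℕ in atTop,
      P {ω | d < (∫ x, V x ∂(occ (fun n => u n ω) k : Measure X)) - Q V} ≤ ennexp (k * (-c)) := by
  have hδ : 0 < (d - c) / 2 := by linarith
  filter_upwards [hQ V _ hδ, eventually_norm_integral_occ_sub_orbitSum_lt V u hδ,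
    eventually_gt_atTop 0] with k hQk hocc hk
  have hk' : (0 : ℝ) < k := by positivity
  have hsub : {ω | d < (∫ x, V x ∂(occ (fun n => u n ω) k : Measure X)) - Q V} ⊆
      {ω | ennexp (k * (Q V + (c + d) / 2)) ≤ ennexp (orbitSum u V k ω)} := fun ω hω => by
    have := (le_abs_self _).trans_lt (hocc ω)
    rw [Set.mem_ofPred_eq, smul_eq_mul] at *
    rw [ennexp_le_ennexp, ← le_inv_mul_iff₀ hk']
    linarith
  have hmeas : Measurable fun ω => ennexp (orbitSum u V k ω) :=
    measurable_ennexp.comp (measurable_orbitSum V.continuous.measurable hu k)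
  have hcheb := (mul_meas_ge_le_lintegral₀ (μ := P) hmeas.aemeasurable
    (ennexp (k * (Q V + (c + d) / 2)))).trans hQk.2
  rw [ennexp_mul_le_iff, ← ennexp_add] at hcheb
  refine (measure_mono hsub).trans (hcheb.trans_eq ?_)
  ring_nf

lemma eventually_measure_occ_mem_le [T2Space X] [BorelSpace X] (hQ : HasPressure P u Q)
    (hu : ∀ n, Measurable (u n)) (hA : IsCompact A) (hmem : ∀ᵐ ω ∂P, ∀ n, u n ω ∈ A)
    {F : Set (ProbabilityMeasure X)} (hF : IsClosed F) {c d : ℝ} (hcd : c < d)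
    (hd : ∀ σ ∈ F, ∃ V : X →ᵇ ℝ, d < (∫ x, V x ∂(σ : Measure X)) - Q V) :
    ∀ᶠ k : ℕ in atTop, P {ω | occ (fun n => u n ω) k ∈ F} ≤ ennexp (k * (-c)) := by
  choose! V hV using hd
  let U (σ : ProbabilityMeasure X) : Set (ProbabilityMeasure X) :=
    {τ | d < (∫ x, V σ x ∂(τ : Measure X)) - Q (V σ)}
  have hcompact := (isCompact_closure_setOf_compl_eq_zero hA).inter_right hF
  obtain ⟨t, -, ht⟩ := hcompact.elim_nhds_subcover U fun σ hσ => (isOpen_lt continuous_const <| .sub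
      (ProbabilityMeasure.continuous_integral_boundedContinuousFunction (V σ))
      continuous_const).mem_nhds (hV σ hσ.2)
  obtain ⟨c', hcc', hc'd⟩ := exists_between hcd
  have hU : ∀ᶠ k : ℕ in atTop, ∀ σ ∈ t, P {ω | occ (fun n => u n ω) k ∈ U σ} ≤ ennexp (k * (-c')) :=
    (Filter.eventually_all_finset t).2 fun σ _ =>
      hQ.eventually_measure_lt_integral_occ_le hu (V σ) hc'd
  filter_upwards [hU, eventually_natCast_mul_ennexp_le t.card (neg_lt_neg hcc'),
    eventually_ne_atTop 0] with k hUk hcard hk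
  calc P {ω | occ (fun n => u n ω) k ∈ F} ≤ P (⋃ σ ∈ t, {ω | occ (fun n => u n ω) k ∈ U σ}) := by
        refine measure_mono_ae ?_
        filter_upwards [hmem] with ω hω hωF
        obtain ⟨σ, hσ, hωσ⟩ := Set.mem_iUnion₂.1 <|
          ht ⟨subset_closure (occ_compl_eq_zero hA.measurableSet hω hk), hωF⟩
        exact Set.mem_iUnion₂.2 ⟨σ, hσ, hωσ⟩
    _ ≤ ∑ σ ∈ t, P {ω | occ (fun n => u n ω) k ∈ U σ} := measure_biUnion_finset_le _ _
    _ ≤ ∑ _σ ∈ t, ennexp (k * (-c')) := Finset.sum_le_sum hUk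
    _ = t.card * ennexp (k * (-c')) := by rw [Finset.sum_const, nsmul_eq_mul]
    _ ≤ ennexp (k * (-c)) := hcard

theorem limsup_measure_occ_mem_le [IsProbabilityMeasure P] [T2Space X] [BorelSpace X]
    (hQ : HasPressure P u Q) (hu : ∀ n, Measurable (u n)) (hA : IsCompact A)
    (hmem : ∀ᵐ ω ∂P, ∀ n, u n ω ∈ A) {F : Set (ProbabilityMeasure X)} (hF : IsClosed F) :
    limsup (fun k : ℕ => (((k : ℝ)⁻¹ : ℝ) : EReal) *
      ENNReal.log (P {ω | occ (fun n => u n ω) k ∈ F})) atTop ≤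
        -(⨅ σ ∈ F, (rateFn Q σ : EReal)) := by
  have hQ₀ : Q 0 = 0 := hQ.apply_const 0
  rw [EReal.le_neg, ← EReal.ge_of_forall_gt_iff_ge]
  intro c hc
  obtain ⟨d, hcd, hd⟩ := EReal.lt_iff_exists_real_btwn.1 hc
  rw [EReal.le_neg, ← EReal.coe_neg]
  exact limsup_inv_mul_log_le <| hQ.eventually_measure_occ_mem_le hu hA hmem hF
    (EReal.coe_lt_coe_iff.1 hcd) fun σ hσ =>
      exists_lt_integral_sub hQ₀ (hd.trans_le (iInf₂_le σ hσ))

end HasPressure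

end UpperBound

section LowerBound

lemma scaledExp_orbitSum {Ω X E : Type*} [NormedAddCommGroup E] [NormedSpace ℝ E]
    (l : E →L[ℝ] ℝ) (u : ℕ → Ω → X) (W : X → E) (k : ℕ) (ω : Ω) :
    scaledExp l k (orbitSum u W k ω) = ennexp (orbitSum u (fun x => l (W x)) k ω) := by
  rcases k.eq_zero_or_pos with rfl | hk
  · simp [scaledExp, orbitSum]
  · rw [scaledExp, map_smul, smul_eq_mul, mul_inv_cancel_left₀ (by positivity), orbitSum, map_sum,
      orbitSum]

variable {Ω : Type*} [MeasurableSpace Ω] {P : Measure Ω} {E : Type*}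
  [NormedAddCommGroup E] [NormedSpace ℝ E]

lemma lintegral_scaledExp_cone_le [IsProbabilityMeasure P] [MeasurableSpace E] [BorelSpace E]
    {Y : Ω → E} (hY : Measurable Y) (t : ℝ≥0) (x : E) (k : ℕ) (ε : ℝ) :
    ∫⁻ ω, scaledExp (cone t x) k (Y ω) ∂P ≤
      P {ω | ‖(k : ℝ)⁻¹ • Y ω - x‖ < ε} + ennexp (k * (-(t * ε))) := by
  set B := {ω | ‖(k : ℝ)⁻¹ • Y ω - x‖ < ε}
  have hBm : MeasurableSet B :=
    hY (isOpen_lt (f := fun s : E => ‖(k : ℝ)⁻¹ • s - x‖) (by fun_prop)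
      continuous_const).measurableSet
  calc ∫⁻ ω, scaledExp (cone t x) k (Y ω) ∂P
      ≤ ∫⁻ ω, (B.indicator 1 ω + ennexp (k * (-(t * ε)))) ∂P := by
        refine lintegral_mono fun ω => ?_
        by_cases hω : ω ∈ B
        · rw [Set.indicator_of_mem hω]
          refine le_add_of_le_left ?_
          rw [Pi.one_apply, ← ennexp_zero, scaledExp, ennexp_le_ennexp, cone]
          exact mul_nonpos_of_nonneg_of_nonpos (by positivity) (neg_nonpos.2 (by positivity))
        · refine le_add_of_le_right (ennexp_mono ?_)
          rw [cone]
          gcongr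
          exact not_lt.1 hω
    _ = P B + ennexp (k * (-(t * ε))) := by
        rw [lintegral_add_right _ measurable_const, lintegral_indicator_one hBm]
        simp

lemma eventually_le_measure_norm_sub_lt [IsProbabilityMeasure P] [MeasurableSpace E]
    [BorelSpace E] {Y : ℕ → Ω → E} (hY : ∀ k, Measurable (Y k)) {x : E} {c : ℝ}
    (hc : ∀ t : ℝ≥0, ∃ r ≥ -c, HasExpRate (fun k => ∫⁻ ω, scaledExp (cone t x) k (Y k ω) ∂P) r)
    {ε δ : ℝ} (hε : 0 < ε) (hδ : 0 < δ) :
    ∀ᶠ k : ℕ in atTop,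
      ennexp (k * (-c - δ)) ≤ P {ω | ‖(k : ℝ)⁻¹ • Y k ω - x‖ < ε} := by
  set t : ℝ≥0 := ((c + δ) / ε).toNNReal
  have ht : c + δ ≤ t * ε := (div_le_iff₀ hε).1 (Real.le_coe_toNNReal _)
  obtain ⟨r, hcr, hr⟩ := hc t
  filter_upwards [hr (δ / 2) (half_pos hδ),
    eventually_natCast_mul_ennexp_le 2 (show -c - δ < -c - δ / 2 by linarith)] with k hk htwo
  have hsum : ennexp (k * (-c - δ)) + ennexp (k * (-c - δ)) ≤
      P {ω | ‖(k : ℝ)⁻¹ • Y k ω - x‖ < ε} + ennexp (k * (-c - δ)) :=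
    calc ennexp (k * (-c - δ)) + ennexp (k * (-c - δ)) ≤ ennexp (k * (-c - δ / 2)) := by
          rwa [Nat.cast_ofNat, two_mul] at htwo
      _ ≤ ennexp (k * (r - δ / 2)) := by gcongr
      _ ≤ P {ω | ‖(k : ℝ)⁻¹ • Y k ω - x‖ < ε} + ennexp (k * (-(t * ε))) :=
          hk.1.trans (lintegral_scaledExp_cone_le (hY k) t x k ε)
      _ ≤ P {ω | ‖(k : ℝ)⁻¹ • Y k ω - x‖ < ε} + ennexp (k * (-c - δ)) := by gcongr; linarith
  exact (ENNReal.add_le_add_iff_right (ennexp_ne_top _)).1 hsum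

variable [IsProbabilityMeasure P] {X : Type*} [MeasurableSpace X] [PseudoMetricSpace X]
  [OpensMeasurableSpace X] {κ : Kernel X X} [IsMarkovKernel κ] {A : Set X} {u : ℕ → Ω → X}
  {Q : (X →ᵇ ℝ) → ℝ} {σ : ProbabilityMeasure X}

lemma IsMixingOn.neg_rateFn_le_coneRate [FiniteDimensional ℝ E] [MeasurableSpace E] [BorelSpace E]
    (hκ : IsMixingOn κ A) (hu : IsMarkovChain P κ u) (h₀ : ∀ᵐ ω ∂P, u 0 ω ∈ A)
    (hQ : HasPressure P u Q) (W : X →ᵇ E) (hσ : rateFn Q σ ≠ ⊤) {t : ℝ≥0} {r : ℝ}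
    (hr : HasUniformExpRate (partitionFn κ W (cone t (∫ x, W x ∂(σ : Measure X)))) A r) :
    -(rateFn Q σ).toReal ≤ r := by
  have := FiniteDimensional.complete ℝ E
  refine hκ.neg_le_coneRate W (fun l q hq => ?_) hr
  let V : X →ᵇ ℝ := ContinuousLinearMap.compLeftContinuousBounded X l W
  have hrate : HasExpRate (fun k => ∫⁻ ω, ennexp (orbitSum u V k ω) ∂P) q := by
    have h := hu.hasExpRate_lintegral_scaledExp h₀ W.continuous.measurable l.continuous hq
    simp only [scaledExp_orbitSum] at h
    exact h
  have hQq : Q V ≤ q + 0 := (hQ V).le_add_of_le hrate (by simp)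
  have hint : ∫ x, V x ∂(σ : Measure X) = l (∫ x, W x ∂(σ : Measure X)) :=
    l.integral_comp_comm (W.integrable _)
  linarith [integral_sub_le_rateFn_toReal hσ V]

lemma IsMixingOn.eventually_le_measure_norm_integral_occ_sub_lt [FiniteDimensional ℝ E]
    (hκ : IsMixingOn κ A) (hu : IsMarkovChain P κ u) (h₀ : ∀ᵐ ω ∂P, u 0 ω ∈ A)
    (hQ : HasPressure P u Q) (W : X →ᵇ E) (hσ : rateFn Q σ ≠ ⊤) {ε δ : ℝ} (hε : 0 < ε)
    (hδ : 0 < δ) : ∀ᶠ k : ℕ in atTop, ennexp (k * (-(rateFn Q σ).toReal - δ)) ≤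
      P {ω | ‖∫ x, W x ∂(occ (fun n => u n ω) k : Measure X) -
        ∫ x, W x ∂(σ : Measure X)‖ < ε} := by
  borelize E
  have := FiniteDimensional.complete ℝ E
  have := FiniteDimensional.proper ℝ E
  have hY (k : ℕ) : Measurable (orbitSum u W k) :=
    measurable_orbitSum W.continuous.measurable hu.measurable k
  have hcone (t : ℝ≥0) : ∃ r ≥ -(rateFn Q σ).toReal, HasExpRate (fun k => ∫⁻ ω,
      scaledExp (cone t (∫ x, W x ∂(σ : Measure X))) k (orbitSum u W k ω) ∂P) r := by
    obtain ⟨r, hr⟩ := hκ.exists_hasUniformExpRate_partitionFn W (lipschitzWith_cone t _)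
      (concaveOn_cone t (∫ x, W x ∂(σ : Measure X)))
    exact ⟨r, hκ.neg_rateFn_le_coneRate hu h₀ hQ W hσ hr, hu.hasExpRate_lintegral_scaledExp h₀
      W.continuous.measurable (lipschitzWith_cone t _).continuous hr⟩
  filter_upwards [eventually_le_measure_norm_sub_lt hY hcone (half_pos hε) hδ,
    eventually_norm_integral_occ_sub_orbitSum_lt W u (half_pos hε)] with k hk hocc
  refine hk.trans (measure_mono fun ω hω => ?_)
  rw [Set.mem_ofPred_eq] at hω ⊢
  linarith [hocc ω, norm_sub_le_norm_sub_add_norm_sub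
    (∫ x, W x ∂(occ (fun n => u n ω) k : Measure X)) ((k : ℝ)⁻¹ • orbitSum u W k ω)
    (∫ x, W x ∂(σ : Measure X))]

theorem IsMixingOn.le_liminf_measure_occ_mem (hκ : IsMixingOn κ A) (hu : IsMarkovChain P κ u)
    (h₀ : ∀ᵐ ω ∂P, u 0 ω ∈ A) (hQ : HasPressure P u Q) {G : Set (ProbabilityMeasure X)}
    (hG : IsOpen G) : -(⨅ σ ∈ G, (rateFn Q σ : EReal)) ≤
      liminf (fun k : ℕ => (((k : ℝ)⁻¹ : ℝ) : EReal) *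
        ENNReal.log (P {ω | occ (fun n => u n ω) k ∈ G})) atTop := by
  rw [EReal.neg_le]
  refine le_iInf₂ fun σ hσG => ?_
  rw [EReal.neg_le]
  rcases eq_or_ne (rateFn Q σ) ⊤ with hσ | hσ
  · simp [hσ]
  rw [← EReal.ge_of_forall_gt_iff_ge]
  intro c hc
  rw [← ENNReal.ofReal_toReal hσ, EReal.coe_ennreal_ofReal, max_eq_left ENNReal.toReal_nonneg,
    ← EReal.coe_neg, EReal.coe_lt_coe_iff] at hc
  obtain ⟨s, W, ε, hε, hW⟩ := exists_integral_mem_nhds_subset (hG.mem_nhds hσG)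
  refine le_liminf_inv_mul_log ?_
  filter_upwards [hκ.eventually_le_measure_norm_integral_occ_sub_lt hu h₀ hQ W hσ hε
    (sub_pos.2 hc)] with k hk
  rw [sub_sub_cancel] at hk
  exact hk.trans (measure_mono fun ω hω => hW _ hω)

end LowerBound

section MixingChain

variable {X : Type*} [MeasurableSpace X] [MetricSpace X] [BorelSpace X] {κ : Kernel X X}
  [IsMarkovKernel κ] {A : Set X}

lemma IsMixingOn.exists_forall_hasPressure (hκ : IsMixingOn κ A) :
    ∃ Q : (X →ᵇ ℝ) → ℝ, ∀ {Ω : Type*} [MeasurableSpace Ω] {P : Measure Ω} [IsProbabilityMeasure P]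
      {u : ℕ → Ω → X}, IsMarkovChain P κ u → (∀ᵐ ω ∂P, u 0 ω ∈ A) → HasPressure P u Q := by
  choose Q hQ using fun V : X →ᵇ ℝ => hκ.exists_hasUniformExpRate_partitionFn V
    (ContinuousLinearMap.id ℝ ℝ).lipschitz
    ((ContinuousLinearMap.id ℝ ℝ).toLinearMap.concaveOn convex_univ)
  refine ⟨Q, fun hu h₀ V => ?_⟩
  have h := hu.hasExpRate_lintegral_scaledExp h₀ V.continuous.measurable
    (ContinuousLinearMap.id ℝ ℝ).continuous (hQ V)
  simp only [scaledExp_orbitSum] at h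
  exact h

variable {Ω : Type*} [MeasurableSpace Ω] {P : Measure Ω} [IsProbabilityMeasure P]
  {u : ℕ → Ω → X} {Q : (X →ᵇ ℝ) → ℝ}

lemma IsMixingOn.ae_forall_mem (hκ : IsMixingOn κ A) (hu : IsMarkovChain P κ u)
    (h₀ : ∀ᵐ ω ∂P, u 0 ω ∈ A) : ∀ᵐ ω ∂P, ∀ n, u n ω ∈ A :=
  hu.ae_forall_mem hκ.isAbsorbing hκ.isCompact.measurableSet h₀

theorem IsMixingOn.goodRate_rateFn (hκ : IsMixingOn κ A) (hu : IsMarkovChain P κ u)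
    (h₀ : ∀ᵐ ω ∂P, u 0 ω ∈ A) (hQ : HasPressure P u Q) : GoodRate (rateFn Q) :=
  _root_.goodRate_rateFn hκ.isCompact hκ.nonempty fun V hV => by
    simpa using (hQ.le_add_of_le (hκ.ae_forall_mem hu h₀) (d := 0) (V' := .const X 0)
      fun x hx => by simp [hV x hx]).trans_eq (by rw [hQ.apply_const, add_zero])

theorem IsMixingOn.ldpOf_occ (hκ : IsMixingOn κ A) (hu : IsMarkovChain P κ u)
    (h₀ : ∀ᵐ ω ∂P, u 0 ω ∈ A) (hQ : HasPressure P u Q) :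
    LDPof (fun k F => P {ω | occ (fun n => u n ω) k ∈ F}) (rateFn Q) :=
  ⟨fun _ hF => hQ.limsup_measure_occ_mem_le hu.measurable hκ.isCompact (hκ.ae_forall_mem hu h₀) hF,
    fun _ hG => hκ.le_liminf_measure_occ_mem hu h₀ hQ hG⟩

end MixingChain

section RandomSeries

variable {Ω ι : Type*} [MeasurableSpace Ω] {P : Measure Ω}

lemma indepFun_restrict_of_disjoint {β : Type*} [MeasurableSpace β] {X : ι → Ω → β}
    (hX : iIndepFun X P) (hXm : ∀ i, Measurable (X i)) {s t : Set ι} (hst : Disjoint s t) :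
    IndepFun (fun ω (i : s) => X i ω) (fun ω (i : t) => X i ω) P := by
  have hcomap (r : Set ι) : MeasurableSpace.comap (fun ω (i : r) => X i ω) MeasurableSpace.pi =
      ⨆ i ∈ r, MeasurableSpace.comap (X i) inferInstance := by
    simp only [MeasurableSpace.pi, MeasurableSpace.comap_iSup, MeasurableSpace.comap_comp,
      Function.comp_def, iSup_subtype]
  rw [IndepFun_iff_Indep, hcomap, hcomap]
  exact indep_iSup_of_disjoint (fun i => (hXm i).comap_le) hX.iIndep hst

lemma iIndepFun_curry {ι' β : Type*} [MeasurableSpace β] {X : ι → ι' → Ω → β}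
    (hX : iIndepFun (fun q : ι × ι' => X q.1 q.2) P) (hXm : ∀ i j, Measurable (X i j)) :
    iIndepFun (fun i ω j => X i j ω) P := by
  have := hX.isProbabilityMeasure
  have hprob (i : ι) (j : ι') : IsProbabilityMeasure (P.map (X i j)) :=
    Measure.isProbabilityMeasure_map (hXm i j).aemeasurable
  have hrow (i : ι) : P.map (fun ω j => X i j ω) = Measure.infinitePi fun j => P.map (X i j) :=
    (hX.precomp (Prod.mk_right_injective i)).map_fun_eq_infinitePi_map (hXm i)
  have hjoint : P.map (fun ω (q : ι × ι') => X q.1 q.2 ω) =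
      Measure.infinitePi fun q => P.map (X q.1 q.2) :=
    hX.map_fun_eq_infinitePi_map fun q => hXm q.1 q.2
  rw [iIndepFun_iff_map_fun_eq_infinitePi_map (fun i => measurable_pi_lambda _ (hXm i))]
  simp only [hrow]
  rw [← Measure.infinitePi_map_curry, ← hjoint, Measure.map_map (MeasurableEquiv.measurable _)
    (measurable_pi_lambda _ fun q : ι × ι' => hXm q.1 q.2)]
  rfl

lemma exists_measure_norm_sub_sum_lt_pos [Countable ι] {F : Type*} [SeminormedAddCommGroup F]
    [NeZero P] {X : ι → Ω → F} {Y : Ω → F} (hY : ∀ ω, HasSum (fun i => X i ω) (Y ω)) {ε : ℝ}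
    (hε : 0 < ε) : ∃ s : Finset ι, 0 < P {ω | ‖Y ω - ∑ i ∈ s, X i ω‖ < ε} := by
  have hcover : ⋃ s : Finset ι, {ω | ‖Y ω - ∑ i ∈ s, X i ω‖ < ε} = Set.univ := by
    refine Set.eq_univ_of_forall fun ω => Set.mem_iUnion.2 ?_
    obtain ⟨s, hs⟩ := ((hY ω).eventually (Metric.ball_mem_nhds (Y ω) hε)).exists
    exact ⟨s, by rwa [dist_comm, dist_eq_norm] at hs⟩
  exact exists_measure_pos_of_not_measure_iUnion_null (by simp [hcover, NeZero.ne])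

variable {F : Type*} [NormedAddCommGroup F] [CompleteSpace F] [SecondCountableTopology F]
  [MeasurableSpace F] [BorelSpace F] [Countable ι]

variable (ι F) in
lemma exists_measurable_forall_hasSum_eq :
    ∃ Φ : (ι → F) → F, Measurable Φ ∧ ∀ x y, HasSum x y → Φ x = y :=
  ⟨fun x => limUnder atTop fun s : Finset ι => ∑ i ∈ s, x i,
    (StronglyMeasurable.limUnder fun s => (Finset.measurable_sum s fun i _ =>
      measurable_pi_apply i).stronglyMeasurable).measurable,
    fun _ _ h => h.limUnder_eq⟩

variable {X : ι → Ω → F} {Y : Ω → F}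

lemma indepFun_restrict_sub_sum (hX : iIndepFun X P) (hXm : ∀ i, Measurable (X i))
    (hY : ∀ ω, HasSum (fun i => X i ω) (Y ω)) (s : Finset ι) :
    IndepFun (fun ω (i : s) => X i ω) (fun ω => Y ω - ∑ i ∈ s, X i ω) P := by
  obtain ⟨Φ, hΦm, hΦ⟩ := exists_measurable_forall_hasSum_eq {i // i ∉ s} F
  have htail : (fun ω => Y ω - ∑ i ∈ s, X i ω) = fun ω => Φ fun i => X i ω := by
    ext ω
    refine (hΦ _ _ ((s.hasSum_compl_iff (f := fun i => X i ω)).2 ?_)).symm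
    rw [sub_add_cancel]
    exact hY ω
  rw [htail]
  exact (indepFun_restrict_of_disjoint hX hXm (disjoint_compl_right (a := (s : Set ι)))).comp
    measurable_id hΦm

lemma indepFun_sub_of_hasSum (hX : iIndepFun X P) (hXm : ∀ i, Measurable (X i))
    (hY : ∀ ω, HasSum (fun i => X i ω) (Y ω)) (i : ι) :
    IndepFun (X i) (fun ω => Y ω - X i ω) P := by
  have h := (indepFun_restrict_sub_sum hX hXm hY {i}).comp
    (measurable_pi_apply ⟨i, Finset.mem_singleton_self i⟩) measurable_id
  simp only [Finset.sum_singleton] at h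
  exact h

lemma map_eq_map_of_hasSum {X' : ι → Ω → F} {Y' : Ω → F} (hX : iIndepFun X P)
    (hX' : iIndepFun X' P) (hXm : ∀ i, Measurable (X i)) (hXm' : ∀ i, Measurable (X' i))
    (hlaw : ∀ i, P.map (X i) = P.map (X' i)) (hY : ∀ ω, HasSum (fun i => X i ω) (Y ω))
    (hY' : ∀ ω, HasSum (fun i => X' i ω) (Y' ω)) : P.map Y = P.map Y' := by
  obtain ⟨Φ, hΦm, hΦ⟩ := exists_measurable_forall_hasSum_eq ι F
  have hYΦ : Y = Φ ∘ fun ω i => X i ω := funext fun ω => (hΦ _ _ (hY ω)).symm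
  have hYΦ' : Y' = Φ ∘ fun ω i => X' i ω := funext fun ω => (hΦ _ _ (hY' ω)).symm
  rw [hYΦ, hYΦ', ← Measure.map_map hΦm (measurable_pi_lambda _ hXm),
    ← Measure.map_map hΦm (measurable_pi_lambda _ hXm'), hX.map_fun_eq_infinitePi_map hXm,
    hX'.map_fun_eq_infinitePi_map hXm', funext hlaw]

/-- The tail of the series is small with positive probability and independent of its head. -/
theorem measure_norm_lt_pos_of_hasSum [NeZero P] (hX : iIndepFun X P) (hXm : ∀ i, Measurable (X i))
    (hY : ∀ ω, HasSum (fun i => X i ω) (Y ω))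
    (hpos : ∀ i, ∀ δ > 0, 0 < P {ω | ‖X i ω‖ < δ}) {ε : ℝ} (hε : 0 < ε) :
    0 < P {ω | ‖Y ω‖ < ε} := by
  obtain ⟨s, htail⟩ := exists_measure_norm_sub_sum_lt_pos (P := P) hY (half_pos hε)
  set δ := ε / 2 / (s.card + 1)
  have hδ : 0 < δ := by positivity
  have hhead : 0 < P ((fun ω (i : s) => X i ω) ⁻¹' Set.univ.pi fun _ => Metric.ball 0 δ) := by
    have hbiInter : (fun ω (i : s) => X i ω) ⁻¹' (Set.univ.pi fun _ => Metric.ball 0 δ) =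
        ⋂ i ∈ s, X i ⁻¹' Metric.ball 0 δ := by
      ext ω; simp
    rw [hbiInter, hX.measure_inter_preimage_eq_mul s fun _ _ => measurableSet_ball]
    refine pos_iff_ne_zero.2 (Finset.prod_ne_zero_iff.2 fun i _ => ?_)
    simpa [Set.preimage] using (hpos i δ hδ).ne'
  have hprod := (indepFun_restrict_sub_sum hX hXm hY s).measure_inter_preimage_eq_mul
    (Set.univ.pi fun _ => Metric.ball 0 δ) {y | ‖y‖ < ε / 2}
    (.univ_pi fun _ => measurableSet_ball) (measurableSet_lt measurable_norm measurable_const)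
  refine (hprod ▸ ENNReal.mul_pos hhead.ne' htail.ne').trans_le (measure_mono ?_)
  rintro ω ⟨hω, hωtail⟩
  have hsum : ‖∑ i ∈ s, X i ω‖ ≤ ε / 2 :=
    calc ‖∑ i ∈ s, X i ω‖ ≤ ∑ _i ∈ s, δ := norm_sum_le_of_le s fun i hi =>
          (mem_ball_zero_iff.1 (hω ⟨i, hi⟩ trivial)).le
      _ = s.card * (ε / 2 / (s.card + 1)) := by rw [Finset.sum_const, nsmul_eq_mul]
      _ ≤ ε / 2 := by
          rw [mul_div_assoc', div_le_iff₀ (by positivity)]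
          linarith
  have htri := norm_add_le (Y ω - ∑ i ∈ s, X i ω) (∑ i ∈ s, X i ω)
  rw [sub_add_cancel] at htri
  exact htri.trans_lt (by linarith [show ‖Y ω - ∑ i ∈ s, X i ω‖ < ε / 2 from hωtail])

end RandomSeries

section TranslationCost

/-- Moving the measure `μ` by the vector `w` costs at most `c` in total variation, tested on
bounded measurable functions: `∫ f ∂μ ≤ ∫ f (· - w) ∂μ + c ‖f‖_∞` for `f ≥ 0`. -/
def TranslationCostLE {G : Type*} [AddGroup G] [MeasurableSpace G] (μ : Measure G) (w : G)
    (c : ℝ≥0∞) : Prop :=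
  ∀ f : G → ℝ≥0∞, Measurable f → ∀ m : ℝ≥0∞, (∀ y, f y ≤ m) →
    ∫⁻ y, f y ∂μ ≤ ∫⁻ y, f (y - w) ∂μ + c * m

namespace TranslationCostLE

variable {G : Type*} [MeasurableSpace G]

section Group

variable [AddGroup G] {μ : Measure G} {w : G} {c : ℝ≥0∞}

lemma zero (μ : Measure G) : TranslationCostLE μ 0 0 := fun f _ m _ => by simp

lemma mono {c' : ℝ≥0∞} (h : TranslationCostLE μ w c) (hc : c ≤ c') : TranslationCostLE μ w c' :=
  fun f hf m hm => (h f hf m hm).trans (by gcongr)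

lemma add [MeasurableSub G] {w' : G} {c' : ℝ≥0∞} (h : TranslationCostLE μ w c)
    (h' : TranslationCostLE μ w' c') : TranslationCostLE μ (w + w') (c + c') := by
  intro f hf m hm
  calc ∫⁻ y, f y ∂μ ≤ ∫⁻ y, f (y - w) ∂μ + c * m := h f hf m hm
    _ ≤ (∫⁻ y, f (y - w' - w) ∂μ + c' * m) + c * m := by
        gcongr
        exact h' (fun y => f (y - w)) (hf.comp (measurable_sub_const w)) m fun y => hm _
    _ = ∫⁻ y, f (y - (w + w')) ∂μ + (c + c') * m := by
        simp only [sub_add_eq_sub_sub_swap]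
        ring

lemma map {G' : Type*} [AddGroup G'] [MeasurableSpace G'] [MeasurableSub G']
    (h : TranslationCostLE μ w c) {Φ : G →+ G'} (hΦ : Measurable Φ) :
    TranslationCostLE (μ.map Φ) (Φ w) c := by
  intro f hf m hm
  rw [lintegral_map hf hΦ,
    lintegral_map (f := fun y => f (y - Φ w)) (hf.comp (measurable_sub_const _)) hΦ]
  simpa only [Function.comp_apply, id_eq, map_sub] using h (f ∘ Φ) (hf.comp hΦ) m fun y => hm _

end Group

lemma conv [AddCommGroup G] [MeasurableAdd₂ G] [MeasurableSub G] {μ : Measure G} {w : G}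
    {c : ℝ≥0∞} (h : TranslationCostLE μ w c) [SFinite μ] (ν : Measure G)
    [IsProbabilityMeasure ν] : TranslationCostLE (μ ∗ ν) w c := by
  intro f hf m hm
  rw [Measure.conv_comm, Measure.lintegral_conv hf,
    Measure.lintegral_conv (f := fun y => f (y - w)) (hf.comp (measurable_sub_const w))]
  calc ∫⁻ x, ∫⁻ y, f (x + y) ∂μ ∂ν
      ≤ ∫⁻ x, (∫⁻ y, f (x + y - w) ∂μ + c * m) ∂ν := lintegral_mono fun x => by
        simpa only [add_sub_assoc] using
          h (fun y => f (x + y)) (hf.comp (measurable_const_add x)) m fun y => hm _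
    _ = ∫⁻ x, ∫⁻ y, f (x + y - w) ∂μ ∂ν + c * m := by
        rw [lintegral_add_right _ measurable_const, lintegral_const, measure_univ, mul_one]

lemma withDensity_of_lipschitzWith [SeminormedAddCommGroup G] [BorelSpace G]
    {ν : Measure G} [ν.IsAddRightInvariant] {q : G → ℝ} {L : ℝ≥0} (hq : LipschitzWith L q)
    {s : Set G} (hs : MeasurableSet s) (hsupp : Function.support q ⊆ s) (τ : G) :
    TranslationCostLE (ν.withDensity fun x => ENNReal.ofReal (q x)) τ
      (ENNReal.ofReal (L * ‖τ‖) * ν s) := by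
  intro f hf m hm
  have hqm : Measurable fun x => ENNReal.ofReal (q x) := hq.continuous.measurable.ennreal_ofReal
  have hpt : ∀ x, ENNReal.ofReal (q x) * f x ≤ ENNReal.ofReal (q (x + τ)) * f x +
      s.indicator (fun _ => ENNReal.ofReal (L * ‖τ‖) * m) x := by
    intro x
    by_cases hx : x ∈ s
    · have hlip : q x ≤ q (x + τ) + L * ‖τ‖ := by
        have := hq.dist_le_mul x (x + τ)
        rw [dist_self_add_right] at this
        linarith [le_abs_self (q x - q (x + τ)), Real.dist_eq (q x) (q (x + τ))]
      rw [Set.indicator_of_mem hx]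
      calc ENNReal.ofReal (q x) * f x
          ≤ (ENNReal.ofReal (q (x + τ)) + ENNReal.ofReal (L * ‖τ‖)) * f x := by
            gcongr
            exact (ENNReal.ofReal_le_ofReal hlip).trans ENNReal.ofReal_add_le
        _ ≤ _ := by rw [add_mul]; gcongr; exact hm x
    · simp [Function.notMem_support.1 fun h => hx (hsupp h)]
  calc ∫⁻ x, f x ∂ν.withDensity (fun x => ENNReal.ofReal (q x))
      = ∫⁻ x, ENNReal.ofReal (q x) * f x ∂ν := lintegral_withDensity_eq_lintegral_mul _ hqm hf
    _ ≤ ∫⁻ x, ENNReal.ofReal (q (x + τ)) * f x ∂ν + ENNReal.ofReal (L * ‖τ‖) * m * ν s := by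
        refine (lintegral_mono hpt).trans_eq ?_
        rw [lintegral_add_right _ (measurable_const.indicator hs), lintegral_indicator_const hs]
    _ = ∫⁻ x, ENNReal.ofReal (q x) * f (x - τ) ∂ν + ENNReal.ofReal (L * ‖τ‖) * ν s * m := by
        rw [← lintegral_add_right_eq_self (fun x => ENNReal.ofReal (q x) * f (x - τ)) τ]
        simp only [add_sub_cancel_right]
        rw [mul_right_comm]
    _ = ∫⁻ x, f (x - τ) ∂ν.withDensity (fun x => ENNReal.ofReal (q x)) +
          ENNReal.ofReal (L * ‖τ‖) * ν s * m := by
        congr 1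
        exact (lintegral_withDensity_eq_lintegral_mul _ hqm (hf.comp (measurable_sub_const τ))).symm

lemma of_hasSum {Ω ι : Type*} [MeasurableSpace Ω] {P : Measure Ω} [Countable ι]
    [NormedAddCommGroup G] [CompleteSpace G] [SecondCountableTopology G] [BorelSpace G]
    {X : ι → Ω → G} {Y : Ω → G} (hX : iIndepFun X P) (hXm : ∀ i, Measurable (X i))
    (hYm : Measurable Y) (hY : ∀ ω, HasSum (fun i => X i ω) (Y ω)) {i : ι} {w : G} {c : ℝ≥0∞}
    (h : TranslationCostLE (P.map (X i)) w c) : TranslationCostLE (P.map Y) w c := by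
  have := hX.isProbabilityMeasure
  have hrest : Measurable fun ω => Y ω - X i ω := hYm.sub (hXm i)
  have := Measure.isProbabilityMeasure_map (μ := P) (hXm i).aemeasurable
  have := Measure.isProbabilityMeasure_map (μ := P) hrest.aemeasurable
  have hlaw : P.map Y = P.map (X i) ∗ P.map (fun ω => Y ω - X i ω) := by
    rw [← (indepFun_sub_of_hasSum hX hXm hY i).map_add_eq_map_conv_map (hXm i) hrest]
    congr 1
    ext ω
    simp
  rw [hlaw]
  exact h.conv _

end TranslationCostLE

end TranslationCost

section Noise

lemma withDensity_ofReal_pos_of_mem_nhds {X : Type*} [TopologicalSpace X] [MeasurableSpace X]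
    [OpensMeasurableSpace X] {ν : Measure X} [ν.IsOpenPosMeasure] {q : X → ℝ} (hq : Continuous q)
    {x : X} (hx : 0 < q x) {U : Set X} (hU : U ∈ 𝓝 x) :
    0 < ν.withDensity (fun y => ENNReal.ofReal (q y)) U := by
  have hpos : {y | 0 < q y} ∩ U ∈ 𝓝 x := inter_mem (hq.continuousAt.eventually (lt_mem_nhds hx)) hU
  rw [pos_iff_ne_zero, Ne, withDensity_apply_eq_zero hq.measurable.ennreal_ofReal]
  simpa using (ν.measure_pos_of_mem_nhds hpos).ne'

lemma abs_repr_le_norm {F : Type*} [NormedAddCommGroup F] [InnerProductSpace ℝ F] {ι : Type*}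
    (e : HilbertBasis ι ℝ F) (w : F) (i : ι) : |e.repr w i| ≤ ‖w‖ := by
  simpa using lp.norm_apply_le_norm (p := 2) (by norm_num) (e.repr w) i

namespace CondD

variable {H : Type} [NormedAddCommGroup H] [InnerProductSpace ℝ H]
  [MeasurableSpace H] {Ω : Type*} [MeasurableSpace Ω]
  {P : Measure Ω} {e : HilbertBasis ℕ ℝ H} {η : ℕ → Ω → H} {b : ℕ → ℝ} {ξ : ℕ → ℕ → Ω → ℝ}
  {p : ℕ → ℝ → ℝ}

lemma hasSum (hD : CondD P e η b ξ p) (k : ℕ) (ω : Ω) :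
    HasSum (fun j => (b j * ξ j k ω) • (e j : H)) (η k ω) :=
  hD.2.2.1 k ω

lemma measurable_mode (hD : CondD P e η b ξ p) (j k : ℕ) : Measurable (ξ j k) :=
  hD.2.2.2.1 j k

lemma iIndepFun_modes (hD : CondD P e η b ξ p) :
    iIndepFun (fun jk : ℕ × ℕ => ξ jk.1 jk.2) P :=
  hD.2.2.2.2.1

lemma map_mode (hD : CondD P e η b ξ p) (j k : ℕ) :
    P.map (ξ j k) = volume.withDensity fun x => ENNReal.ofReal (p j x) :=
  hD.2.2.2.2.2.1 j k

lemma exists_lipschitzWith_density (hD : CondD P e η b ξ p) (j : ℕ) :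
    ∃ L : ℝ≥0, LipschitzWith L (p j) :=
  hD.2.2.2.2.2.2.1 j

lemma density_zero_pos (hD : CondD P e η b ξ p) (j : ℕ) : 0 < p j 0 :=
  hD.2.2.2.2.2.2.2.1 j

lemma support_density_subset (hD : CondD P e η b ξ p) (j : ℕ) :
    Function.support (p j) ⊆ Set.Icc (-1) 1 :=
  hD.2.2.2.2.2.2.2.2 j

variable [BorelSpace H]

lemma measurable_term (hD : CondD P e η b ξ p) (j k : ℕ) :
    Measurable fun ω => (b j * ξ j k ω) • (e j : H) :=
  ((hD.measurable_mode j k).const_mul _).smul_const _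

lemma iIndepFun_terms (hD : CondD P e η b ξ p) (k : ℕ) :
    iIndepFun (fun j ω => (b j * ξ j k ω) • (e j : H)) P :=
  (hD.iIndepFun_modes.precomp (Prod.mk_left_injective k)).comp
    (fun j x => (b j * x) • (e j : H)) fun _ => (measurable_id.const_mul _).smul_const _

lemma map_term_eq (hD : CondD P e η b ξ p) (j k k' : ℕ) :
    P.map (fun ω => (b j * ξ j k ω) • (e j : H)) =
      P.map (fun ω => (b j * ξ j k' ω) • (e j : H)) := by
  have hscale : Measurable fun x : ℝ => (b j * x) • (e j : H) :=
    (measurable_id.const_mul _).smul_const _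
  calc _ = (P.map (ξ j k)).map fun x => (b j * x) • (e j : H) :=
        (Measure.map_map hscale (hD.measurable_mode j k)).symm
    _ = (P.map (ξ j k')).map fun x => (b j * x) • (e j : H) := by rw [hD.map_mode, hD.map_mode]
    _ = _ := Measure.map_map hscale (hD.measurable_mode j k')

variable [SecondCountableTopology H]

lemma measurable_noise (hD : CondD P e η b ξ p) (k : ℕ) : Measurable (η k) :=
  measurable_of_tendsto_metrizable
    (fun n => Finset.measurable_sum (Finset.range n) fun j _ => hD.measurable_term j k)
    (tendsto_pi_nhds.2 fun ω => (hD.hasSum k ω).tendsto_sum_nat)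

variable [CompleteSpace H]

lemma map_eq_map (hD : CondD P e η b ξ p) (k k' : ℕ) : P.map (η k) = P.map (η k') :=
  map_eq_map_of_hasSum (hD.iIndepFun_terms k) (hD.iIndepFun_terms k')
    (fun j => hD.measurable_term j k) (fun j => hD.measurable_term j k')
    (fun j => hD.map_term_eq j k k') (hD.hasSum k) (hD.hasSum k')

lemma iIndepFun_noise (hD : CondD P e η b ξ p) : iIndepFun η P := by
  obtain ⟨Φ, hΦm, hΦ⟩ := exists_measurable_forall_hasSum_eq ℕ H
  have hrows : iIndepFun (fun k ω j => ξ j k ω) P :=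
    iIndepFun_curry (hD.iIndepFun_modes.precomp Prod.swap_injective)
      fun k j => hD.measurable_mode j k
  have hη (k : ℕ) : η k = fun ω => Φ fun j => (b j * ξ j k ω) • (e j : H) := by
    ext ω
    exact (hΦ _ _ (hD.hasSum k ω)).symm
  rw [funext hη]
  exact hrows.comp (fun _ x => Φ fun j => (b j * x j) • (e j : H)) fun _ =>
    hΦm.comp (measurable_pi_lambda _ fun j => ((measurable_pi_apply j).const_mul _).smul_const _)

lemma measure_norm_lt_pos (hD : CondD P e η b ξ p) (k : ℕ) {ε : ℝ} (hε : 0 < ε) :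
    0 < P {ω | ‖η k ω‖ < ε} := by
  have := hD.iIndepFun_modes.isProbabilityMeasure
  refine measure_norm_lt_pos_of_hasSum (hD.iIndepFun_terms k) (fun j => hD.measurable_term j k)
    (hD.hasSum k) (fun j δ hδ => ?_) hε
  obtain ⟨L, hL⟩ := hD.exists_lipschitzWith_density j
  have hU : {x : ℝ | ‖(b j * x) • (e j : H)‖ < δ} ∈ 𝓝 0 :=
    (isOpen_lt (by fun_prop) continuous_const).mem_nhds (by simpa using hδ)
  have hpos := withDensity_ofReal_pos_of_mem_nhds (ν := volume) hL.continuous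
    (hD.density_zero_pos j) hU
  rwa [← hD.map_mode j k, Measure.map_apply (hD.measurable_mode j k)
    (isOpen_lt (by fun_prop) continuous_const).measurableSet] at hpos

lemma zero_mem_msupp (hD : CondD P e η b ξ p) (k : ℕ) :
    0 ∈ msupp (P.map (η k)) := by
  intro U hU
  obtain ⟨ε, hε, hεU⟩ := Metric.mem_nhds_iff.1 hU
  refine lt_of_lt_of_le ?_ (measure_mono hεU)
  rw [Measure.map_apply (hD.measurable_noise k) Metric.isOpen_ball.measurableSet]
  simpa [Set.preimage] using hD.measure_norm_lt_pos k hε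

lemma exists_translationCostLE_smul (hD : CondD P e η b ξ p) {j : ℕ} (hb : b j ≠ 0) (k : ℕ) :
    ∃ C : ℝ, 0 ≤ C ∧
      ∀ s : ℝ, TranslationCostLE (P.map (η k)) (s • (e j : H)) (ENNReal.ofReal (C * |s|)) := by
  obtain ⟨L, hL⟩ := hD.exists_lipschitzWith_density j
  refine ⟨L / |b j| * 2, by positivity, fun s => ?_⟩
  let Φ : ℝ →+ H := (LinearMap.toSpanSingleton ℝ H (b j • e j)).toAddMonoidHom
  have hΦ : Measurable Φ := measurable_id.smul_const _
  have hΦ_eq (x : ℝ) : Φ x = (b j * x) • (e j : H) := by simp [Φ, smul_smul, mul_comm]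
  have hterm := (TranslationCostLE.withDensity_of_lipschitzWith (ν := volume) hL
    measurableSet_Icc (hD.support_density_subset j) (s / b j)).map hΦ
  rw [← hD.map_mode j k, Measure.map_map hΦ (hD.measurable_mode j k), hΦ_eq,
    mul_div_cancel₀ _ hb, Real.volume_Icc, ← ENNReal.ofReal_mul (by positivity)] at hterm
  simp only [Function.comp_def, hΦ_eq] at hterm
  refine (hterm.of_hasSum (hD.iIndepFun_terms k) (fun j => hD.measurable_term j k)
    (hD.measurable_noise k) (hD.hasSum k)).mono (ENNReal.ofReal_le_ofReal (le_of_eq ?_))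
  rw [Real.norm_eq_abs, abs_div]
  ring

lemma exists_translationCostLE_projB (hD : CondD P e η b ξ p) (hb : ∀ j, b j ≠ 0) (k N : ℕ) :
    ∃ C : ℝ, 0 ≤ C ∧
      ∀ w : H, TranslationCostLE (P.map (η k)) (projB e N w) (ENNReal.ofReal (C * ‖w‖)) := by
  induction N with
  | zero => exact ⟨0, le_rfl, fun w => by simpa [projB] using TranslationCostLE.zero _⟩
  | succ N ih =>
    obtain ⟨C, hC, hcost⟩ := ih
    obtain ⟨C', hC', hcost'⟩ := hD.exists_translationCostLE_smul (hb N) k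
    refine ⟨C + C', add_nonneg hC hC', fun w => ?_⟩
    have hproj : projB e (N + 1) w = projB e N w + e.repr w N • e N := Finset.sum_range_succ ..
    rw [hproj, add_mul, ENNReal.ofReal_add (by positivity) (by positivity)]
    refine (hcost w).add ((hcost' _).mono ?_)
    gcongr
    exact abs_repr_le_norm e w N

end CondD

end Noise

section Attainability

lemma attain_mono {G : Type*} [AddCommGroup G] (S : G → G) (K : Set G) {B B' : Set G}
    (h : B ⊆ B') (n : ℕ) : attain S K B n ⊆ attain S K B' n := by
  induction n with
  | zero => exact h
  | succ n ih => exact Set.add_subset_add_right (Set.image_mono ih)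

lemma iterate_mem_attain {G : Type*} [AddCommGroup G] (S : G → G) {K : Set G} (hK : 0 ∈ K)
    (u : G) (n : ℕ) : S^[n] u ∈ attain S K {u} n := by
  induction n with
  | zero => rfl
  | succ n ih =>
    rw [Function.iterate_succ_apply']
    exact ⟨_, ⟨_, ih, rfl⟩, 0, hK, add_zero _⟩

lemma mem_attainDom_of_mem {G : Type*} [AddCommGroup G] [TopologicalSpace G] (S : G → G)
    (K : Set G) {B : Set G} {u : G} (hu : u ∈ B) : u ∈ attainDom S K B :=
  subset_closure (Set.mem_iUnion.2 ⟨0, hu⟩)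

section Topological

variable {G : Type*} [AddCommGroup G] [TopologicalSpace G] [ContinuousAdd G] {S : G → G}
  {K B : Set G}

lemma isCompact_attain (hS : Continuous S) (hK : IsCompact K) (hB : IsCompact B) (n : ℕ) :
    IsCompact (attain S K B n) := by
  induction n with
  | zero => exact hB
  | succ n ih => exact (ih.image hS).add hK

lemma add_mem_attainDom (hS : Continuous S) {u y : G} (hu : u ∈ attainDom S K B) (hy : y ∈ K) :
    S u + y ∈ attainDom S K B := by
  refine map_mem_closure (f := fun v => S v + y) (by fun_prop) hu fun v hv => ?_
  obtain ⟨n, hn⟩ := Set.mem_iUnion.1 hv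
  exact Set.mem_iUnion.2 ⟨n + 1, Set.add_mem_add ⟨v, hn, rfl⟩ hy⟩

end Topological

lemma totallyBounded_of_forall_exists_dist_lt {X : Type*} [PseudoMetricSpace X] {s : Set X}
    (h : ∀ ε > 0, ∃ t, TotallyBounded t ∧ ∀ x ∈ s, ∃ y ∈ t, dist x y < ε) : TotallyBounded s := by
  rw [Metric.totallyBounded_iff]
  intro ε hε
  obtain ⟨t, ht, hst⟩ := h (ε / 2) (half_pos hε)
  obtain ⟨c, hc, htc⟩ := Metric.totallyBounded_iff.1 ht (ε / 2) (half_pos hε)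
  refine ⟨c, hc, fun x hx => ?_⟩
  obtain ⟨y, hy, hxy⟩ := hst x hx
  obtain ⟨z, hz, hyz⟩ := Set.mem_iUnion₂.1 (htc hy)
  refine Set.mem_iUnion₂.2 ⟨z, hz, (dist_triangle x y z).trans_lt ?_⟩
  linarith [Metric.mem_ball.1 hyz]

/-- The part of Condition (A) that needs no differentiability: `S` is Lipschitz on balls and its
iterates contract bounded sets towards the origin. -/
def LipschitzStable {F : Type*} [SeminormedAddCommGroup F] (S : F → F) : Prop :=
  ∀ R r : ℝ, 0 < r → r < R →
    ∃ C : ℝ, 0 < C ∧ ∃ a : ℝ, 0 < a ∧ a < 1 ∧ ∃ n₀ : ℕ, 1 ≤ n₀ ∧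
      (∀ u₁ ∈ Metric.closedBall (0 : F) R, ∀ u₂ ∈ Metric.closedBall (0 : F) R,
          ‖S u₁ - S u₂‖ ≤ C * ‖u₁ - u₂‖) ∧
      ∀ u ∈ Metric.closedBall (0 : F) R, ∀ n : ℕ, n₀ ≤ n →
          ‖S^[n] u‖ ≤ max (a * ‖u‖) r

namespace LipschitzStable

variable {F : Type*} [SeminormedAddCommGroup F] {S : F → F}

lemma exists_forall_norm_sub_le (hS : LipschitzStable S) {R : ℝ} (hR : 0 < R) :
    ∃ C : ℝ, 0 ≤ C ∧ ∀ u ∈ Metric.closedBall (0 : F) R, ∀ v ∈ Metric.closedBall (0 : F) R,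
      ‖S u - S v‖ ≤ C * ‖u - v‖ := by
  obtain ⟨C, hC, -, -, -, -, -, hLip, -⟩ := hS R (R / 2) (half_pos hR) (half_lt_self hR)
  exact ⟨C, hC.le, hLip⟩

lemma continuous (hS : LipschitzStable S) : Continuous S := by
  refine continuous_iff_continuousAt.2 fun u => ?_
  obtain ⟨C, hC, hLip⟩ := hS.exists_forall_norm_sub_le (R := ‖u‖ + 1) (by positivity)
  have hball : Metric.closedBall (0 : F) (‖u‖ + 1) ∈ 𝓝 u :=
    Metric.closedBall_mem_nhds_of_mem (by simp)
  have hLipOn : LipschitzOnWith C.toNNReal S (Metric.closedBall 0 (‖u‖ + 1)) :=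
    LipschitzOnWith.of_dist_le_mul fun x hx y hy => by
      simpa only [dist_eq_norm, Real.coe_toNNReal C hC] using hLip x hx y hy
  exact hLipOn.continuousOn.continuousAt hball

lemma exists_forall_norm_iterate_lt (hS : LipschitzStable S) (R : ℝ) {ε : ℝ} (hε : 0 < ε) :
    ∃ n, ∀ u ∈ Metric.closedBall (0 : F) R, ‖S^[n] u‖ < ε := by
  wlog hεR : ε ≤ R generalizing R
  · obtain ⟨n, hn⟩ := this ε le_rfl
    exact ⟨n, fun u hu => hn u (Metric.closedBall_subset_closedBall (not_le.1 hεR).le hu)⟩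
  obtain ⟨C, -, a, ha0, ha1, n₀, -, -, hcontr⟩ := hS R (ε / 2) (half_pos hε) (by linarith)
  have hiter (i : ℕ) (u : F) (hu : u ∈ Metric.closedBall (0 : F) R) :
      ‖S^[n₀ * i] u‖ ≤ max (a ^ i * R) (ε / 2) := by
    induction i with
    | zero => simpa using Or.inl (mem_closedBall_zero_iff.1 hu)
    | succ i ih =>
      have hle : max (a ^ i * R) (ε / 2) ≤ R :=
        max_le (mul_le_of_le_one_left (by linarith) (pow_le_one₀ ha0.le ha1.le)) (by linarith)
      have hstep := hcontr (S^[n₀ * i] u) (mem_closedBall_zero_iff.2 (ih.trans hle)) n₀ le_rfl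
      rw [← Function.iterate_add_apply, add_comm, ← Nat.mul_succ] at hstep
      calc ‖S^[n₀ * (i + 1)] u‖ ≤ max (a * max (a ^ i * R) (ε / 2)) (ε / 2) :=
            hstep.trans (max_le_max_right _ (by gcongr))
        _ ≤ max (a ^ (i + 1) * R) (ε / 2) := by
            rw [mul_max_of_nonneg _ _ ha0.le, pow_succ', mul_assoc, max_assoc]
            exact max_le_max_left _ (max_le (by nlinarith) le_rfl)
  have hlim : Tendsto (fun i : ℕ => a ^ i * R) atTop (𝓝 0) := by
    simpa using (tendsto_pow_atTop_nhds_zero_of_lt_one ha0.le ha1).mul_const R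
  obtain ⟨i, hi⟩ := (hlim.eventually (gt_mem_nhds hε)).exists
  exact ⟨n₀ * i, fun u hu => (hiter i u hu).trans_lt (max_lt hi (half_lt_self hε))⟩

end LipschitzStable

variable {H : Type} [NormedAddCommGroup H] {S : H → H} {K : Set H}

lemma CondB.exists_attain_subset_closedBall (hB : CondB S K) (hS : Continuous S)
    (hK : IsCompact K) : ∃ R : ℝ, 0 < R ∧ ∀ n, attain S K {0} n ⊆ Metric.closedBall 0 R := by
  obtain ⟨ρ, hρ, k₀, -, habs⟩ := hB
  have htransient : Bornology.IsBounded (⋃ n ∈ Finset.range (k₀ 0), attain S K {0} n) :=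
    (Bornology.isBounded_biUnion_finset _).2 fun n _ =>
      (isCompact_attain hS hK isCompact_singleton n).isBounded
  obtain ⟨R, hR⟩ := htransient.subset_closedBall 0
  refine ⟨max R ρ, lt_max_of_lt_right hρ, fun n => ?_⟩
  rcases lt_or_ge n (k₀ 0) with hn | hn
  · exact (Set.subset_biUnion_of_mem (u := fun n => attain S K {0} n)
      (Finset.mem_coe.2 (Finset.mem_range.2 hn))).trans
      (hR.trans (Metric.closedBall_subset_closedBall (le_max_left _ _)))
  · exact (attain_mono S K (by simp) n).trans
      ((habs 0 le_rfl n hn).trans (Metric.closedBall_subset_closedBall (le_max_right _ _)))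

variable [InnerProductSpace ℝ H] {e : HilbertBasis ℕ ℝ H}

lemma totallyBounded_projB_image (e : HilbertBasis ℕ ℝ H) (N : ℕ) {s : Set H}
    (hs : Bornology.IsBounded s) : TotallyBounded (projB e N '' s) := by
  obtain ⟨R, hR⟩ := hs.subset_closedBall 0
  have hbox : IsCompact ((fun x : Fin N → ℝ => ∑ j, x j • (e j : H)) '' Metric.closedBall 0 R) :=
    (isCompact_closedBall 0 R).image (by fun_prop)
  refine hbox.totallyBounded.subset ?_
  rintro _ ⟨w, hw, rfl⟩
  have hwR : ‖w‖ ≤ R := mem_closedBall_zero_iff.1 (hR hw)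
  refine ⟨fun j => e.repr w j, mem_closedBall_zero_iff.2 ?_, ?_⟩
  · exact (pi_norm_le_iff_of_nonneg ((norm_nonneg w).trans hwR)).2 fun j =>
      (abs_repr_le_norm e w j).trans hwR
  · exact (Finset.sum_range fun j => e.repr w j • (e j : H)).symm

lemma CondC.totallyBounded_image (hC : CondC S e) (hS : LipschitzStable S) {R : ℝ} (hR : 0 < R) :
    TotallyBounded (S '' Metric.closedBall 0 R) := by
  obtain ⟨C, hC0, hLip⟩ := hS.exists_forall_norm_sub_le hR
  obtain ⟨γ, -, -, hγ, hsq⟩ := hC R hR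
  have h0 : (0 : H) ∈ Metric.closedBall (0 : H) R := by simp [hR.le]
  have hnorm {u : H} (hu : u ∈ Metric.closedBall 0 R) : ‖u - 0‖ ≤ R := by simpa using hu
  set D := (fun u => S u - S 0) '' Metric.closedBall 0 R with hD
  have hDbdd : Bornology.IsBounded D := by
    refine Metric.isBounded_closedBall (x := (0 : H)) (r := C * R) |>.subset ?_
    rintro _ ⟨u, hu, rfl⟩
    exact mem_closedBall_zero_iff.2 ((hLip u hu 0 h0).trans (by gcongr; exact hnorm hu))
  have hDtb : TotallyBounded D := totallyBounded_of_forall_exists_dist_lt fun ε hε => by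
    obtain ⟨N, hN⟩ := (hγ.eventually (gt_mem_nhds (div_pos hε (mul_pos two_pos hR)))).exists
    refine ⟨projB e N '' D, totallyBounded_projB_image e N hDbdd, ?_⟩
    rintro _ ⟨u, hu, rfl⟩
    refine ⟨_, ⟨_, ⟨u, hu, rfl⟩, rfl⟩, ?_⟩
    rw [dist_eq_norm]
    calc ‖S u - S 0 - projB e N (S u - S 0)‖ ≤ γ N * ‖u - 0‖ := hsq N u hu 0 h0
      _ ≤ ε / (2 * R) * R := by gcongr; exact hnorm hu
      _ < ε := by field_simp; norm_num
  convert hDtb.image (uniformContinuous_id.add_const (S 0)) using 1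
  simp only [hD, Set.image_image, id_eq, sub_add_cancel]

lemma isCompact_attainDom [CompleteSpace H] (hS : LipschitzStable S) (hB : CondB S K)
    (hC : CondC S e) (hK : IsCompact K) : IsCompact (attainDom S K {0}) := by
  obtain ⟨R, hR, hbdd⟩ := hB.exists_attain_subset_closedBall hS.continuous hK
  have hcompact : IsCompact ({0} ∪ (closure (S '' Metric.closedBall (0 : H) R) + K)) :=
    isCompact_singleton.union <|
      ((hC.totallyBounded_image hS hR).closure.isCompact_of_isClosed isClosed_closure).add hK
  refine hcompact.of_isClosed_subset isClosed_closure
    (closure_minimal (Set.iUnion_subset fun n => ?_) hcompact.isClosed)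
  cases n with
  | zero => exact Set.subset_union_left
  | succ n =>
    exact (Set.add_subset_add_right ((Set.image_mono (hbdd n)).trans subset_closure)).trans
      Set.subset_union_right

end Attainability

section RandomMap

lemma msupp_mem_ae {X : Type*} [TopologicalSpace X] [HereditarilyLindelofSpace X]
    [MeasurableSpace X] (μ : Measure X) : ∀ᵐ x ∂μ, x ∈ msupp μ := by
  filter_upwards [μ.support_mem_ae] with x hx
  exact (Measure.mem_support_iff_forall x).1 hx

/-- The transition kernel `u ↦ law of S u + y` of the recursion `u_{k+1} = S u_k + η_{k+1}`, where
`y` has the law `μ` of the noise. For `S` not measurable it is the zero kernel. -/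
def rdsKernel {G : Type*} [Add G] [MeasurableSpace G] (S : G → G) (μ : Measure G) : Kernel G G :=
  (Kernel.id ×ₖ Kernel.const G μ).map fun q => S q.1 + q.2

section Apply

variable {G : Type*} [Add G] [MeasurableSpace G] [MeasurableAdd₂ G] {S : G → G} {μ : Measure G}

lemma rdsKernel_apply [SFinite μ] (hS : Measurable S) (u : G) :
    rdsKernel S μ u = μ.map fun y => S u + y := by
  have hadd : Measurable fun q : G × G => S q.1 + q.2 :=
    (hS.comp measurable_fst).add measurable_snd
  rw [rdsKernel, Kernel.map_apply _ hadd, Kernel.prod_apply, Kernel.id_apply, Kernel.const_apply,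
    Measure.dirac_prod, Measure.map_map hadd measurable_prodMk_left]
  rfl

lemma lintegral_rdsKernel [SFinite μ] (hS : Measurable S) {f : G → ℝ≥0∞} (hf : Measurable f)
    (u : G) : ∫⁻ x, f x ∂rdsKernel S μ u = ∫⁻ y, f (S u + y) ∂μ := by
  rw [rdsKernel_apply hS, lintegral_map hf (measurable_const_add _)]

lemma isMarkovKernel_rdsKernel [IsProbabilityMeasure μ] (hS : Measurable S) :
    IsMarkovKernel (rdsKernel S μ) :=
  Kernel.IsMarkovKernel.map _ ((hS.comp measurable_fst).add measurable_snd)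

end Apply

lemma mul_pow_apply_le_pow_add_apply {X : Type*} [MeasurableSpace X] (κ : Kernel X X) {D D' : Set X}
    (hD : MeasurableSet D) (hD' : MeasurableSet D') {n : ℕ} {q : ℝ≥0∞}
    (hq : ∀ x ∈ D, q ≤ (κ ^ n) x D') (m : ℕ) (u : X) :
    q * (κ ^ m) u D ≤ (κ ^ (m + n)) u D' := by
  rw [Kernel.pow_add_apply_eq_lintegral κ m n u hD', ← setLIntegral_const]
  exact (setLIntegral_mono' hD hq).trans (setLIntegral_le_lintegral D _)

section Reachability

variable {G : Type*} [AddCommGroup G] [TopologicalSpace G] [ContinuousAdd G] [MeasurableSpace G]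
  [BorelSpace G] [MeasurableAdd₂ G] {S : G → G} {μ : Measure G} [SFinite μ]

lemma exists_eventually_le_rdsKernel_pow (hS : Continuous S) {z v : G} {l : ℕ}
    (hv : v ∈ attain S (msupp μ) {z} l) {U : Set G} (hU : IsOpen U) (hvU : v ∈ U) :
    ∃ q : ℝ≥0∞, 0 < q ∧ ∀ᶠ u in 𝓝 z, q ≤ (rdsKernel S μ ^ l) u U := by
  induction l generalizing v U with
  | zero =>
    obtain rfl : v = z := hv
    refine ⟨1, one_pos, ?_⟩
    filter_upwards [hU.mem_nhds hvU] with u hu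
    rw [pow_zero]
    change 1 ≤ Kernel.id u U
    rw [Kernel.id_apply, Measure.dirac_apply_of_mem hu]
  | succ l ih =>
    obtain ⟨_, ⟨v', hv', rfl⟩, y, hy, rfl⟩ := hv
    have hpre : (fun q : G × G => S q.1 + q.2) ⁻¹' U ∈ 𝓝 (v', y) :=
      (hU.preimage (by fun_prop)).mem_nhds hvU
    obtain ⟨D, W, hD, hv'D, hW, hyW, hDW⟩ := mem_nhds_prod_iff'.1 hpre
    obtain ⟨q, hq, hlow⟩ := ih hv' hD hv'D
    have hμW : 0 < μ W := hy W (hW.mem_nhds hyW)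
    refine ⟨μ W * q, ENNReal.mul_pos hμW.ne' hq.ne', ?_⟩
    filter_upwards [hlow] with u hu
    refine (mul_le_mul_right hu _).trans
      (mul_pow_apply_le_pow_add_apply _ hD.measurableSet hU.measurableSet (fun x hx => ?_) l u)
    rw [pow_one, rdsKernel_apply hS.measurable, Measure.map_apply (measurable_const_add _)
      hU.measurableSet]
    exact measure_mono fun y' hy' => hDW (Set.mk_mem_prod hx hy')

lemma exists_forall_le_rdsKernel_pow_of_isCompact (hS : Continuous S) {A : Set G}
    (hA : IsCompact A) (h0 : 0 ∈ msupp μ) {n : ℕ} {U : Set G} (hU : IsOpen U)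
    (hAU : ∀ u ∈ A, S^[n] u ∈ U) :
    ∃ q : ℝ≥0∞, 0 < q ∧ ∀ u ∈ A, q ≤ (rdsKernel S μ ^ n) u U := by
  refine hA.induction_on (p := fun s => ∃ q : ℝ≥0∞, 0 < q ∧ ∀ u ∈ s, q ≤ (rdsKernel S μ ^ n) u U)
    ⟨1, one_pos, by simp⟩ (fun s t hst ⟨q, hq, h⟩ => ⟨q, hq, fun u hu => h u (hst hu)⟩) ?_ ?_
  · rintro s t ⟨q, hq, hs⟩ ⟨q', hq', ht⟩
    refine ⟨min q q', lt_min hq hq', ?_⟩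
    rintro u (hu | hu)
    exacts [(min_le_left _ _).trans (hs u hu), (min_le_right _ _).trans (ht u hu)]
  · intro u hu
    obtain ⟨q, hq, hlow⟩ :=
      exists_eventually_le_rdsKernel_pow hS (iterate_mem_attain S h0 u n) hU (hAU u hu)
    exact ⟨_, mem_nhdsWithin_of_mem_nhds hlow, q, hq, fun _ h => h⟩

end Reachability

section Normed

variable {F : Type*} [NormedAddCommGroup F] [SecondCountableTopology F] [MeasurableSpace F]
  [BorelSpace F] {S : F → F} {μ : Measure F}

/-- Steering: from any point of `A` the unperturbed iterates enter a neighbourhood of `0`, from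
which the noise leads to `v`. -/
lemma LipschitzStable.exists_le_rdsKernel_pow [SFinite μ] (hS : LipschitzStable S)
    (h0 : 0 ∈ msupp μ) {A : Set F} (hA : IsCompact A) {v : F}
    (hv : v ∈ attainDom S (msupp μ) {0}) {δ : ℝ} (hδ : 0 < δ) :
    ∃ m : ℕ, ∃ q : ℝ≥0∞, 0 < q ∧ ∀ u ∈ A, q ≤ (rdsKernel S μ ^ m) u (Metric.ball v δ) := by
  obtain ⟨v', hv'ball, hv'⟩ := mem_closure_iff.1 hv _ Metric.isOpen_ball (Metric.mem_ball_self hδ)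
  obtain ⟨l, hl⟩ := Set.mem_iUnion.1 hv'
  obtain ⟨q, hq, hfrom0⟩ :=
    exists_eventually_le_rdsKernel_pow hS.continuous hl Metric.isOpen_ball hv'ball
  obtain ⟨ε, hε, hfrom0⟩ := Metric.eventually_nhds_iff_ball.1 hfrom0
  obtain ⟨R, hR⟩ := hA.isBounded.subset_closedBall 0
  obtain ⟨n, hn⟩ := hS.exists_forall_norm_iterate_lt R hε
  obtain ⟨q', hq', hto0⟩ := exists_forall_le_rdsKernel_pow_of_isCompact hS.continuous
    hA h0 Metric.isOpen_ball fun u hu => mem_ball_zero_iff.2 (hn u (hR hu))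
  refine ⟨n + l, q * q', ENNReal.mul_pos hq.ne' hq'.ne', fun u hu => ?_⟩
  exact (mul_le_mul_right (hto0 u hu) q).trans (mul_pow_apply_le_pow_add_apply _
    measurableSet_ball measurableSet_ball hfrom0 n u)

lemma TranslationCostLE.lintegral_rdsKernel_le [SFinite μ] (hS : Measurable S) {w : F}
    {c : ℝ≥0∞} (h : TranslationCostLE μ w c) {K A : Set F} (hK : MeasurableSet K)
    (hμK : ∀ᵐ y ∂μ, y ∈ K) {u v : F} (hu : ∀ y ∈ K, S u + y ∈ A) (hv : ∀ y ∈ K, S v + y ∈ A)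
    {d : ℝ} (hd : ‖S u - S v - w‖ ≤ d) {f g : F → ℝ≥0∞} (hf : Measurable f) (hg : Measurable g)
    {m : ℝ≥0∞} (hfm : ∀ x ∈ A, f x ≤ m) (hfg : ∀ x ∈ A, ∀ y ∈ A, dist x y ≤ d → f x ≤ g y) :
    ∫⁻ x, f x ∂rdsKernel S μ u ≤ ∫⁻ y, g y ∂rdsKernel S μ v + c * m := by
  rw [lintegral_rdsKernel hS hf, lintegral_rdsKernel hS hg]
  set f' : F → ℝ≥0∞ := K.indicator fun y => f (S u + y) with hf'
  calc ∫⁻ y, f (S u + y) ∂μ = ∫⁻ y, f' y ∂μ := by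
        refine lintegral_congr_ae ?_
        filter_upwards [hμK] with y hy
        rw [hf', Set.indicator_of_mem hy]
    _ ≤ ∫⁻ y, f' (y - w) ∂μ + c * m :=
        h f' ((hf.comp (measurable_const_add _)).indicator hK) m fun y =>
          Set.indicator_le' (fun y hy => hfm _ (hu y hy)) (fun _ _ => zero_le) y
    _ ≤ ∫⁻ y, g (S v + y) ∂μ + c * m := by
        gcongr ?_ + _
        refine lintegral_mono_ae ?_
        filter_upwards [hμK] with y hy
        refine Set.indicator_apply_le' (fun hyw => ?_) fun _ => zero_le
        refine hfg _ (hu _ hyw) _ (hv y hy) (le_of_eq_of_le ?_ hd)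
        rw [dist_eq_norm]
        congr 1
        abel

end Normed

/-- Shifting the noise by the first `N` modes of `S u - S v` leaves a discrepancy of at most
`γ N * ‖u - v‖`, at a total variation cost proportional to `‖u - v‖`. -/
theorem isMixingOn_rdsKernel {H : Type} [NormedAddCommGroup H] [InnerProductSpace ℝ H]
    [CompleteSpace H] [SecondCountableTopology H] [MeasurableSpace H] [BorelSpace H] {S : H → H}
    {e : HilbertBasis ℕ ℝ H} {μ : Measure H} [SFinite μ] (hS : LipschitzStable S)
    (hB : CondB S (msupp μ)) (hC : CondC S e) (hcompact : IsCompact (msupp μ))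
    (h0 : 0 ∈ msupp μ) (hcost : ∀ N, ∃ C : ℝ, 0 ≤ C ∧
      ∀ w : H, TranslationCostLE μ (projB e N w) (ENNReal.ofReal (C * ‖w‖))) :
    IsMixingOn (rdsKernel S μ) (attainDom S (msupp μ) {0}) where
  isCompact := isCompact_attainDom hS hB hC hcompact
  nonempty := ⟨0, mem_attainDom_of_mem S _ rfl⟩
  isAbsorbing u hu := by
    rw [rdsKernel_apply hS.continuous.measurable]
    refine (ae_map_iff (measurable_const_add _).aemeasurable isClosed_closure.measurableSet).2 ?_
    filter_upwards [msupp_mem_ae μ] with y hy using add_mem_attainDom hS.continuous hu hy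
  coupling γ hγ := by
    obtain ⟨R, hR, hbdd⟩ :=
      (isCompact_attainDom hS hB hC hcompact).isBounded.subset_closedBall_lt 0 0
    obtain ⟨C, hC0, hLip⟩ := hS.exists_forall_norm_sub_le hR
    obtain ⟨g, -, -, hg, hsq⟩ := hC R hR
    obtain ⟨N, hN⟩ := (hg.eventually (gt_mem_nhds hγ)).exists
    obtain ⟨C', hC0', hcostN⟩ := hcost N
    refine ⟨C' * C, by positivity, fun u hu v hv f g' hf hg' m hfm hfg => ?_⟩
    refine (((hcostN (S u - S v)).mono ?_).lintegral_rdsKernel_le hS.continuous.measurable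
      hcompact.measurableSet (msupp_mem_ae μ) (fun y => add_mem_attainDom hS.continuous hu)
      (fun y => add_mem_attainDom hS.continuous hv) ?_ hf hg' hfm hfg)
    · rw [mul_assoc, dist_eq_norm]
      gcongr
      exact hLip u (hbdd hu) v (hbdd hv)
    · rw [dist_eq_norm]
      exact (hsq N u (hbdd hu) v (hbdd hv)).trans (by gcongr)
  irreducible δ hδ v hv :=
    hS.exists_le_rdsKernel_pow h0 (isCompact_attainDom hS hB hC hcompact) hv hδ

end RandomMap

section RecursionIsMarkov

lemma indepFun_prodMk_left {Ω α β γ : Type*} [MeasurableSpace Ω] [MeasurableSpace α]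
    [MeasurableSpace β] [MeasurableSpace γ] {P : Measure Ω} [IsFiniteMeasure P] {X : Ω → α}
    {Y : Ω → β} {Z : Ω → γ} (hX : Measurable X) (hY : Measurable Y) (hZ : Measurable Z)
    (hXYZ : IndepFun X (fun ω => (Y ω, Z ω)) P) (hYZ : IndepFun Y Z P) :
    IndepFun (fun ω => (X ω, Y ω)) Z P := by
  have hXY : IndepFun X Y P := hXYZ.comp measurable_id measurable_fst
  rw [indepFun_iff_map_prod_eq_prod_map_map (by fun_prop) (by fun_prop)] at hXYZ hYZ hXY ⊢
  have hassoc : (fun ω => ((X ω, Y ω), Z ω)) =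
      MeasurableEquiv.prodAssoc.symm ∘ fun ω => (X ω, (Y ω, Z ω)) := rfl
  rw [hassoc, ← Measure.map_map (MeasurableEquiv.measurable _) (by fun_prop), hXYZ, hYZ, hXY,
    ← Measure.prodAssoc_prod, MeasurableEquiv.map_symm_map]

variable {H : Type} [NormedAddCommGroup H] {Ω : Type*} {S : H → H}

lemma traj_comp {Ω' : Type*} (η : ℕ → Ω' → H) (u₀ : Ω' → H) (f : Ω → Ω') (n : ℕ) :
    traj S (fun k => η k ∘ f) (u₀ ∘ f) n = traj S η u₀ n ∘ f := by
  induction n with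
  | zero => rfl
  | succ n ih => funext ω; simp only [traj, ih, Function.comp_apply]

lemma traj_congr {η η' : ℕ → Ω → H} {u₀ : Ω → H} {n : ℕ} (h : ∀ i ≤ n, η i = η' i) :
    traj S η u₀ n = traj S η' u₀ n := by
  induction n with
  | zero => rfl
  | succ n ih => simp only [traj, ih fun i hi => h i (hi.trans n.le_succ), h (n + 1) le_rfl]

variable [SecondCountableTopology H] [MeasurableSpace H] [BorelSpace H] [MeasurableSpace Ω]
  {P : Measure Ω} {η : ℕ → Ω → H} {u₀ : Ω → H}

lemma measurable_traj (hS : Measurable S) (hη : ∀ k, Measurable (η k)) (hu₀ : Measurable u₀)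
    (n : ℕ) : Measurable (traj S η u₀ n) := by
  induction n with
  | zero => exact hu₀
  | succ n ih => exact (hS.comp ih).add (hη _)

variable [IsFiniteMeasure P]

lemma indepFun_history_noise (hS : Measurable S) (hη : ∀ k, Measurable (η k))
    (hηi : iIndepFun η P) (hu₀ : Measurable u₀) (hindep : IndepFun u₀ (fun ω k => η k ω) P)
    (k : ℕ) : IndepFun (fun ω n => traj S η u₀ (min n k) ω) (η (k + 1)) P := by
  set past : Ω → Set.Iic k → H := fun ω i => η i ω
  have hpast : IndepFun past (η (k + 1)) P :=
    (indepFun_restrict_of_disjoint hηi hη (s := Set.Iic k) (t := {k + 1}) (by simp)).comp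
      measurable_id (measurable_pi_apply (⟨k + 1, rfl⟩ : ({k + 1} : Set ℕ)))
  have hinit : IndepFun u₀ (fun ω => (past ω, η (k + 1) ω)) P :=
    hindep.comp (ψ := fun y : ℕ → H => ((fun i : Set.Iic k => y i), y (k + 1)))
      measurable_id (by fun_prop)
  have hjoint := indepFun_prodMk_left hu₀ (by fun_prop) (hη _) hinit hpast
  set noise : ℕ → H × (Set.Iic k → H) → H := fun i q => q.2 ⟨min i k, min_le_right i k⟩
  have hhistory : (fun ω n => traj S η u₀ (min n k) ω) =
      (fun q n => traj S noise Prod.fst (min n k) q) ∘ fun ω => (u₀ ω, past ω) := by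
    funext ω n
    refine congrFun ((traj_congr fun i hi => ?_).trans
      (traj_comp noise Prod.fst (fun ω => (u₀ ω, past ω)) (min n k))) ω
    funext ω
    simp [noise, past, min_eq_left (hi.trans (min_le_right n k))]
  rw [hhistory]
  exact hjoint.comp (measurable_pi_lambda _ fun n =>
    measurable_traj hS (fun i => by fun_prop) measurable_fst _) measurable_id

theorem isMarkovChain_traj {μ : Measure H} [SFinite μ] (hS : Measurable S)
    (hη : ∀ k, Measurable (η k)) (hμ : ∀ k, P.map (η k) = μ) (hηi : iIndepFun η P)
    (hu₀ : Measurable u₀) (hindep : IndepFun u₀ (fun ω k => η k ω) P) :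
    IsMarkovChain P (rdsKernel S μ) (traj S η u₀) where
  measurable := measurable_traj hS hη hu₀
  map_history_next k := by
    have hhist : Measurable fun ω n => traj S η u₀ (min n k) ω :=
      measurable_pi_lambda _ fun n => measurable_traj hS hη hu₀ _
    have hstep : Measurable fun q : (ℕ → H) × H => (q.1, S (q.1 k) + q.2) := by fun_prop
    have hprod := (indepFun_iff_map_prod_eq_prod_map_map hhist.aemeasurable
      (hη _).aemeasurable).1 (indepFun_history_noise hS hη hηi hu₀ hindep k)
    rw [hμ] at hprod
    have hnext : (fun ω => ((fun n => traj S η u₀ (min n k) ω : ℕ → H), traj S η u₀ (k + 1) ω)) =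
        (fun q : (ℕ → H) × H => (q.1, S (q.1 k) + q.2)) ∘
          fun ω => ((fun n => traj S η u₀ (min n k) ω), η (k + 1) ω) := by
      funext ω
      simp [traj]
    have hκ : IsSFiniteKernel (rdsKernel S μ) := by
      unfold rdsKernel
      infer_instance
    rw [hnext, ← Measure.map_map hstep (hhist.prodMk (hη _)), hprod]
    ext s hs
    rw [Measure.map_apply hstep hs, Measure.prod_apply (hstep hs), Measure.compProd_apply hs]
    refine lintegral_congr fun x => ?_
    rw [Kernel.comap_apply, rdsKernel_apply hS, Measure.map_apply (measurable_const_add _)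
      (measurable_prodMk_left hs)]
    rfl

end RecursionIsMarkov

theorem statement0_general
    {H : Type} [NormedAddCommGroup H] [InnerProductSpace ℝ H] [CompleteSpace H]
    [SecondCountableTopology H] [MeasurableSpace H] [BorelSpace H]
    {Ω : Type*} [MeasurableSpace Ω] (P : Measure Ω) [IsProbabilityMeasure P]
    (S : H → H) (e : HilbertBasis ℕ ℝ H) (η : ℕ → Ω → H)
    (b : ℕ → ℝ) (ξ : ℕ → ℕ → Ω → ℝ) (p : ℕ → ℝ → ℝ)
    (K : Set H) (hK : K = msupp (Measure.map (η 1) P)) (hKcomp : IsCompact K)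
    (hS : LipschitzStable S) (hB : CondB S K) (hC : CondC S e) (hD : CondD P e η b ξ p)
    (hb : ∀ j, b j ≠ 0)
    (u₀ : Ω → H) (hu₀ : Measurable u₀)
    (hindep : IndepFun u₀ (fun ω (k : ℕ) => η k ω) P)
    (hsupp : Measure.map u₀ P (attainDom S K {0}) = 1) :
    ∃ Q : (H →ᵇ ℝ) → ℝ,
      (∀ V : H →ᵇ ℝ,
        Tendsto (fun k : ℕ => (k : ℝ)⁻¹ *
            Real.log (∫ ω, Real.exp (∑ n ∈ Finset.Icc 1 k, V (traj S η u₀ n ω)) ∂P))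
          atTop (𝓝 (Q V))) ∧
      (∀ V : H →ᵇ ℝ, ∀ u ∈ attainDom S K ({0} : Set H),
        Tendsto (fun k : ℕ => (k : ℝ)⁻¹ *
            Real.log (∫ ω,
              Real.exp (∑ n ∈ Finset.Icc 1 k, V (traj S η (fun _ => u) n ω)) ∂P))
          atTop (𝓝 (Q V))) ∧
      ConvexOn ℝ Set.univ Q ∧
      (∀ V₁ V₂ : H →ᵇ ℝ,
        |Q V₁ - Q V₂| ≤ ⨆ x : attainDom S K ({0} : Set H), |V₁ (x : H) - V₂ (x : H)|) ∧
      (∀ c : ℝ, Q (BoundedContinuousFunction.const H c) = c) ∧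
      GoodRate (rateFn Q) ∧
      LDPof (fun k F => P {ω | occ (fun n => traj S η u₀ n ω) k ∈ F}) (rateFn Q) := by
  subst hK
  have : IsProbabilityMeasure (P.map (η 1)) :=
    Measure.isProbabilityMeasure_map (hD.measurable_noise 1).aemeasurable
  have hmeas := hS.continuous.measurable
  have : IsMarkovKernel (rdsKernel S (P.map (η 1))) := isMarkovKernel_rdsKernel hmeas
  have hκ := isMixingOn_rdsKernel hS hB hC hKcomp (hD.zero_mem_msupp 1)
    (hD.exists_translationCostLE_projB hb 1)
  have hchain {v : Ω → H} (hv : Measurable v) (hvη : IndepFun v (fun ω k => η k ω) P) :=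
    isMarkovChain_traj hmeas hD.measurable_noise (hD.map_eq_map · 1) hD.iIndepFun_noise hv hvη
  have hu := hchain hu₀ hindep
  have h₀ : ∀ᵐ ω ∂P, u₀ ω ∈ attainDom S (msupp (P.map (η 1))) {0} := by
    have := Measure.isProbabilityMeasure_map (μ := P) hu₀.aemeasurable
    exact ae_of_ae_map hu₀.aemeasurable ((mem_ae_iff_prob_eq_one isClosed_closure.measurableSet).2
      hsupp)
  obtain ⟨Q, hpressure⟩ := hκ.exists_forall_hasPressure
  have hQ := hpressure hu h₀
  refine ⟨Q, hQ.tendsto_log_integral hu.measurable, fun V u hu => ?_, hQ.convexOn hu.measurable,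
    hQ.abs_sub_le (hκ.ae_forall_mem hu h₀), hQ.apply_const, hκ.goodRate_rateFn hu h₀ hQ,
    hκ.ldpOf_occ hu h₀ hQ⟩
  have hconst := hchain (v := fun _ => u) measurable_const (indepFun_const_left _ _)
  exact (hpressure hconst (.of_forall fun _ => hu)).tendsto_log_integral hconst.measurable V

/-- **Theorem 1.2 / Theorem A**: under Conditions (A)–(D) with `b_j ≠ 0` for all `j`, for any
initial state `u₀` independent of the noise whose law is supported by the domain of
attainability `𝒜 = 𝒜({0})`, the occupation measures `ζ_k = k⁻¹ ∑_{n=0}^{k-1} δ_{u_n}` satisfy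
the LDP with the good rate function `I(σ) = sup_V (⟨V,σ⟩ - Q(V))`, where
`Q(V) = lim_k k⁻¹ log 𝔼 exp(∑_{n=1}^k V(u_n))` exists, does not depend on `u₀`
(the limit is the same for every deterministic initial point of `𝒜`), and is a `1`-Lipschitz
convex function with `Q(C) = C` on constants. -/
theorem statement0
    {H : Type} [NormedAddCommGroup H] [InnerProductSpace ℝ H] [CompleteSpace H]
    [SecondCountableTopology H] [MeasurableSpace H] [BorelSpace H]
    {Ω : Type} [MeasurableSpace Ω] (P : Measure Ω) [IsProbabilityMeasure P]
    (S : H → H) (e : HilbertBasis ℕ ℝ H)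
    (η : ℕ → Ω → H) (hηmeas : ∀ k, Measurable (η k))
    (b : ℕ → ℝ) (ξ : ℕ → ℕ → Ω → ℝ) (p : ℕ → ℝ → ℝ)
    (K : Set H) (hK : K = msupp (Measure.map (η 1) P)) (hKcomp : IsCompact K)
    (hA : CondA S) (hB : CondB S K) (hC : CondC S e) (hD : CondD P e η b ξ p)
    (hb : ∀ j, b j ≠ 0)
    (u₀ : Ω → H) (hu₀ : Measurable u₀)
    (hindep : IndepFun u₀ (fun ω (k : ℕ) => η k ω) P)
    (hsupp : Measure.map u₀ P (attainDom S K {0}) = 1) :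
    ∃ Q : (H →ᵇ ℝ) → ℝ,
      -- existence of the limit `Q(V)` for the given chain
      (∀ V : H →ᵇ ℝ,
        Tendsto (fun k : ℕ => (k : ℝ)⁻¹ *
            Real.log (∫ ω, Real.exp (∑ n ∈ Finset.Icc 1 k, V (traj S η u₀ n ω)) ∂P))
          atTop (𝓝 (Q V))) ∧
      -- the limit does not depend on the initial condition
      (∀ V : H →ᵇ ℝ, ∀ u ∈ attainDom S K ({0} : Set H),
        Tendsto (fun k : ℕ => (k : ℝ)⁻¹ *
            Real.log (∫ ω,
              Real.exp (∑ n ∈ Finset.Icc 1 k, V (traj S η (fun _ => u) n ω)) ∂P))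
          atTop (𝓝 (Q V))) ∧
      -- `Q` is convex and `1`-Lipschitz for the sup-norm over `𝒜`
      ConvexOn ℝ Set.univ Q ∧
      (∀ V₁ V₂ : H →ᵇ ℝ,
        |Q V₁ - Q V₂| ≤ ⨆ x : attainDom S K ({0} : Set H), |V₁ (x : H) - V₂ (x : H)|) ∧
      (∀ c : ℝ, Q (BoundedContinuousFunction.const H c) = c) ∧
      -- the LDP holds with the good rate function `I(σ) = sup_V (⟨V,σ⟩ - Q(V))`
      GoodRate (fun σ : ProbabilityMeasure H =>
        ⨆ V : H →ᵇ ℝ, ENNReal.ofReal ((∫ x, V x ∂(σ : Measure H)) - Q V)) ∧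
      LDPof (fun k F => P {ω | occ (fun n => traj S η u₀ n ω) k ∈ F})
        (fun σ : ProbabilityMeasure H =>
          ⨆ V : H →ᵇ ℝ, ENNReal.ofReal ((∫ x, V x ∂(σ : Measure H)) - Q V)) := by
  exact statement0_general P S e η b ξ p K hK hKcomp hA.2 hB hC hD hb u₀ hu₀ hindep hsupp
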